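/- Let W be a finitely generated group admitting a twist-rigid Coxeter generating set. Then the outer automorphism group Out(W) = Aut(W)/Inn(W) is finite. -/

import Mathlib

/-- A finite subset `S` of a group `W` is a *Coxeter generating set* if there is a Coxeter
matrix indexed by `S` and a Coxeter system for that matrix on `W` whose simple reflections
are exactly the elements of `S` (via the inclusion `S ⊆ W`). -/
def IsCoxeterGeneratingSet {W : Type*} [Group W] (S : Set W) : Prop :=
  S.Finite ∧ ∃ (M : CoxeterMatrix ↥S) (cs : CoxeterSystem M W), ∀ s : S, cs.simple s = (s : W)

/-- Two elements are *adjacent* if they generate a finite subgroup. -/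
def AdjacentElems {W : Type*} [Group W] (s s' : W) : Prop :=
  (Subgroup.closure {s, s'} : Set W).Finite

/-- Coxeter generating sets `S` and `R` are *angle-compatible* if every pair of elements
of `S` (allowing equal elements) generating a finite subgroup is conjugate to a pair of
elements of `R`. -/
def AngleCompatible {W : Type*} [Group W] (S R : Set W) : Prop :=
  ∀ s ∈ S, ∀ s' ∈ S, (Subgroup.closure {s, s'} : Set W).Finite →
    ∃ w : W, ∃ r ∈ R, ∃ r' ∈ R, ({w * s * w⁻¹, w * s' * w⁻¹} : Set W) = {r, r'}

/-- `perpIn S J` is the set `J⊥` of elements of `S ∖ J` commuting with every element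
of `J`. -/
def perpIn {W : Type*} [Group W] (S J : Set W) : Set W :=
  {t ∈ S \ J | ∀ j ∈ J, Commute t j}

/-- A set is *irreducible* if it cannot be partitioned into two nonempty subsets that
commute elementwise. -/
def IrreducibleSubset {W : Type*} [Group W] (J : Set W) : Prop :=
  ¬ ∃ K L : Set W, K.Nonempty ∧ L.Nonempty ∧ Disjoint K L ∧ K ∪ L = J ∧
      ∀ k ∈ K, ∀ l ∈ L, Commute k l

/-- A subset `T` is *connected* in the adjacency graph if any two of its elements are
joined by a path inside `T` whose edges are adjacent pairs. -/
def ConnectedIn {W : Type*} [Group W] (T : Set W) : Prop :=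
  ∀ a ∈ T, ∀ b ∈ T,
    Relation.ReflTransGen (fun x y => x ∈ T ∧ y ∈ T ∧ AdjacentElems x y) a b

/-- A Coxeter generating set `S` is *twist-rigid* if for every irreducible spherical subset
`J ⊆ S` the set `S ∖ (J ∪ J⊥)` is connected in the adjacency graph. -/
def IsTwistRigid {W : Type*} [Group W] (S : Set W) : Prop :=
  ∀ J ⊆ S, IrreducibleSubset J → (Subgroup.closure J : Set W).Finite →
    ConnectedIn (S \ (J ∪ perpIn S J))

/-!
The group `W` acts on its geometric representation, whose Gram matrix, doubled, has its entries in a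
finitely generated subring of `ℝ`. Reducing modulo maximal ideals of that ring yields homomorphisms
of `W` to finite groups. The reductions of the images of the generators under an automorphism,
together with their conjugacy classes, form an invariant with finitely many values, because the
elements of finite order of `W` fall into finitely many conjugacy classes.

If two automorphisms share this invariant, their quotient `γ` preserves the conjugacy class of each
generator and maps each `s` to the reflection in a root congruent to the simple root `α s`. The form
takes only finitely many values on pairs of roots whose reflections generate a finite group, so
when the residue field separates these values, the linear map sending each `α s` to that root
preserves the angle of every spherical pair. The signs of the images of the roots propagate along
the paths which twist-rigidity provides. Hence, after a change of signs, the map sends almost all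
positive roots to positive roots, and `γ` followed by an inner automorphism permutes the generators.
-/

namespace TwistRigid

open Polynomial (Chebyshev.S)
open CoxeterSystem

/-- The height of a vector: the sum of its coordinates with respect to the simple roots. -/
noncomputable def height {ι : Type*} [Fintype ι] : (ι → ℝ) →ₗ[ℝ] ℝ := ∑ s, LinearMap.proj s

theorem height_apply {ι : Type*} [Fintype ι] (v : ι → ℝ) : height v = ∑ s, v s := by simp [height]

/-- The simple root `α s`, encoded as a standard basis vector of the real vector space `ι → ℝ` on
which every geometric representation acts. -/
def simpleRoot {ι : Type*} [DecidableEq ι] (s : ι) : ι → ℝ := Pi.single s 1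

local notation "α" => simpleRoot

section SimpleRoot

variable {ι : Type*} [DecidableEq ι]

@[simp] theorem simpleRoot_self (s : ι) : α s s = 1 := by simp [simpleRoot]

theorem simpleRoot_of_ne {s t : ι} (h : t ≠ s) : α s t = 0 := by simp [simpleRoot, h]

theorem simpleRoot_apply (s t : ι) : α s t = if t = s then 1 else 0 := by
  simp [simpleRoot, Pi.single_apply]

theorem eq_sum_smul_simpleRoot [Fintype ι] (v : ι → ℝ) : v = ∑ s, v s • α s := by
  ext t
  simp [simpleRoot_apply, Finset.sum_apply]

@[simp] theorem height_simpleRoot [Fintype ι] (s : ι) : height (α s) = 1 := by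
  simp [height_apply, simpleRoot_apply]

end SimpleRoot

/-- The coefficients of the roots in a rank-two root system: `chebyshevCoeff c n = S_{n-1}(c)`
where `S` is the rescaled Chebyshev polynomial of the second kind, so that
`chebyshevCoeff (2 cos θ) n = sin (n θ) / sin θ`. -/
noncomputable def chebyshevCoeff (c : ℝ) (n : ℕ) : ℝ := (Chebyshev.S ℝ (n - 1)).eval c

section ChebyshevCoeff

@[simp] theorem chebyshevCoeff_zero (c : ℝ) : chebyshevCoeff c 0 = 0 := by simp [chebyshevCoeff]

@[simp] theorem chebyshevCoeff_one (c : ℝ) : chebyshevCoeff c 1 = 1 := by simp [chebyshevCoeff]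

theorem chebyshevCoeff_add_two (c : ℝ) (n : ℕ) :
    chebyshevCoeff c (n + 2) = c * chebyshevCoeff c (n + 1) - chebyshevCoeff c n := by
  have h := Polynomial.Chebyshev.S_add_two ℝ (n - 1)
  simp only [chebyshevCoeff, Nat.cast_add, Nat.cast_ofNat, Nat.cast_one, add_sub_cancel_right]
  rw [sub_add_cancel, sub_add_eq_add_sub] at h
  simp [h]

theorem chebyshevCoeff_two_mul_cos (θ : ℝ) (n : ℕ) :
    chebyshevCoeff (2 * Real.cos θ) n * Real.sin θ = Real.sin (n * θ) := by
  simp [chebyshevCoeff, Polynomial.Chebyshev.S_two_mul_real_cos]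

theorem chebyshevCoeff_nonneg_and_add_one_le {c : ℝ} (hc : 2 ≤ c) (n : ℕ) :
    0 ≤ chebyshevCoeff c n ∧ chebyshevCoeff c n + 1 ≤ chebyshevCoeff c (n + 1) := by
  induction n with
  | zero => simp
  | succ n ih =>
    rw [chebyshevCoeff_add_two]
    constructor <;> nlinarith [ih.1, ih.2]

theorem one_le_chebyshevCoeff_succ {c : ℝ} (hc : 2 ≤ c) (n : ℕ) : 1 ≤ chebyshevCoeff c (n + 1) := by
  linarith [chebyshevCoeff_nonneg_and_add_one_le hc n]

theorem strictMono_chebyshevCoeff {c : ℝ} (hc : 2 ≤ c) : StrictMono (chebyshevCoeff c) :=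
  strictMono_nat_of_lt_succ fun n => by linarith [chebyshevCoeff_nonneg_and_add_one_le hc n]

theorem pi_div_le_pi_div_two {m : ℕ} (hm : 2 ≤ m) : Real.pi / m ≤ Real.pi / 2 :=
  div_le_div_of_nonneg_left Real.pi_pos.le (by norm_num) (by exact_mod_cast hm)

theorem sin_pi_div_pos {m : ℕ} (hm : 2 ≤ m) : 0 < Real.sin (Real.pi / m) := by
  have hm' : (1 : ℝ) < m := by exact_mod_cast hm
  exact Real.sin_pos_of_pos_of_lt_pi (by positivity) (div_lt_self Real.pi_pos hm')

theorem sin_pi_div_le_sin_mul_pi_div {m n : ℕ} (hn : 1 ≤ n) (hnm : n < m) :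
    Real.sin (Real.pi / m) ≤ Real.sin (n * (Real.pi / m)) := by
  have hm : (0 : ℝ) < m := by exact_mod_cast (by omega : 0 < m)
  have hpos : 0 < Real.pi / m := by positivity
  have hn' : (1 : ℝ) ≤ n := by exact_mod_cast hn
  have hnm' : (n : ℝ) + 1 ≤ m := by exact_mod_cast hnm
  have hmul : (m : ℝ) * (Real.pi / m) = Real.pi := by field_simp
  have lower : Real.pi / m ≤ n * (Real.pi / m) := by nlinarith
  have upper : n * (Real.pi / m) ≤ Real.pi - Real.pi / m := by nlinarith
  rcases le_total (n * (Real.pi / m)) (Real.pi / 2) with h | h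
  · exact Real.sin_le_sin_of_le_of_le_pi_div_two (by linarith) h lower
  · rw [← Real.sin_pi_sub (n * (Real.pi / m))]
    exact Real.sin_le_sin_of_le_of_le_pi_div_two (by linarith) (by linarith) (by linarith)

theorem chebyshevCoeff_eq_zero_or_one_le {m n : ℕ} (hm : 2 ≤ m) (hn : n ≤ m) :
    chebyshevCoeff (2 * Real.cos (Real.pi / m)) n = 0 ∨
      1 ≤ chebyshevCoeff (2 * Real.cos (Real.pi / m)) n := by
  have hsin := sin_pi_div_pos hm
  have key := chebyshevCoeff_two_mul_cos (Real.pi / m) n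
  rcases Nat.eq_zero_or_pos n with rfl | hn0
  · simp
  rcases hn.eq_or_lt with rfl | hlt
  · rw [mul_div_cancel₀ Real.pi (by positivity), Real.sin_pi] at key
    exact .inl ((mul_eq_zero.mp key).resolve_right hsin.ne')
  · have hle := sin_pi_div_le_sin_mul_pi_div hn0 hlt
    exact .inr (le_of_mul_le_mul_right (by linarith) hsin)

theorem chebyshevCoeff_two_mul_period {m : ℕ} (hm : 2 ≤ m) :
    chebyshevCoeff (2 * Real.cos (Real.pi / m)) (2 * m) = 0 ∧
      chebyshevCoeff (2 * Real.cos (Real.pi / m)) (2 * m + 1) = 1 := by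
  have hsin := sin_pi_div_pos hm
  have hm0 : (m : ℝ) ≠ 0 := by exact_mod_cast (by omega : m ≠ 0)
  have period : ((2 * m : ℕ) : ℝ) * (Real.pi / m) = 2 * Real.pi := by
    push_cast; field_simp
  have period_succ : ((2 * m + 1 : ℕ) : ℝ) * (Real.pi / m) = Real.pi / m + 2 * Real.pi := by
    push_cast; field_simp; ring
  have h₀ := chebyshevCoeff_two_mul_cos (Real.pi / m) (2 * m)
  have h₁ := chebyshevCoeff_two_mul_cos (Real.pi / m) (2 * m + 1)
  rw [period, Real.sin_two_pi] at h₀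
  rw [period_succ, Real.sin_add_two_pi] at h₁
  exact ⟨(mul_eq_zero.mp h₀).resolve_right hsin.ne', mul_right_cancel₀ hsin.ne' (by simpa using h₁)⟩

end ChebyshevCoeff

/-! ### Geometric representations -/

/-- A geometric representation of a Coxeter system, given by the Gram matrix of the simple roots.
It generalises the standard one in that the entry at a pair `s`, `t` with `M s t = ∞` (encoded by
Mathlib as `M s t = 0`) may be any number at most `-1`. -/
structure GeomRep {ι W : Type*} [Group W] {M : CoxeterMatrix ι} (cs : CoxeterSystem M W) where
  gram : ι → ι → ℝ
  gram_comm : ∀ s t, gram s t = gram t s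
  gram_eq_neg_cos : ∀ s t, M s t ≠ 0 → gram s t = -Real.cos (Real.pi / M s t)
  gram_le_neg_one : ∀ s t, M s t = 0 → gram s t ≤ -1

theorem two_le_of_ne {ι : Type*} (M : CoxeterMatrix ι) {s t : ι} (h : s ≠ t) (hM : M s t ≠ 0) :
    2 ≤ M s t := by
  have := M.off_diagonal s t h
  omega

namespace GeomRep

section Gram

variable {ι W : Type*} [Group W] {M : CoxeterMatrix ι} {cs : CoxeterSystem M W} (G : GeomRep cs)

theorem gram_self (s : ι) : G.gram s s = 1 := by
  rw [G.gram_eq_neg_cos s s (by simp)]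
  simp

theorem gram_nonpos {s t : ι} (h : s ≠ t) : G.gram s t ≤ 0 := by
  by_cases hM : M s t = 0
  · linarith [G.gram_le_neg_one s t hM]
  · rw [G.gram_eq_neg_cos s t hM, neg_nonpos]
    have hnonneg : 0 ≤ Real.pi / M s t := by positivity
    exact Real.cos_nonneg_of_neg_pi_div_two_le_of_le (by linarith [Real.pi_pos])
      (pi_div_le_pi_div_two (two_le_of_ne M h hM))

theorem neg_one_lt_gram {s t : ι} (h : s ≠ t) (hM : M s t ≠ 0) : -1 < G.gram s t := by
  rw [G.gram_eq_neg_cos s t hM, neg_lt_neg_iff, ← Real.cos_zero]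
  exact Real.cos_lt_cos_of_nonneg_of_le_pi_div_two le_rfl
    (pi_div_le_pi_div_two (two_le_of_ne M h hM)) (by positivity)

theorem gram_neg {s t : ι} (h : s ≠ t) (h2 : M s t ≠ 2) : G.gram s t < 0 := by
  by_cases hM : M s t = 0
  · linarith [G.gram_le_neg_one s t hM]
  rw [G.gram_eq_neg_cos s t hM, neg_lt_zero]
  have h3 : (3 : ℝ) ≤ M s t := by
    exact_mod_cast (by have := two_le_of_ne M h hM; omega : 3 ≤ M s t)
  have hle : Real.pi / M s t ≤ Real.pi / 3 :=
    div_le_div_of_nonneg_left Real.pi_pos.le (by norm_num) h3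
  have hnonneg : 0 ≤ Real.pi / M s t := by positivity
  exact Real.cos_pos_of_mem_Ioo ⟨by linarith [Real.pi_pos], by linarith [Real.pi_pos]⟩

theorem gram_eq_zero_iff {s t : ι} (h : s ≠ t) : G.gram s t = 0 ↔ M s t = 2 := by
  refine ⟨fun h0 => of_not_not fun h2 => (G.gram_neg h h2).ne h0, fun h2 => ?_⟩
  rw [G.gram_eq_neg_cos s t (by omega), h2]
  simp

theorem chebyshevCoeff_gram_eq_zero_or_one_le {s t : ι} (h : s ≠ t) {n : ℕ}
    (hn : M s t = 0 ∨ n ≤ M s t) :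
    chebyshevCoeff (-2 * G.gram s t) n = 0 ∨ 1 ≤ chebyshevCoeff (-2 * G.gram s t) n := by
  by_cases hM : M s t = 0
  · have hk := G.gram_le_neg_one s t hM
    rcases n with _ | n
    · simp
    · exact .inr (one_le_chebyshevCoeff_succ (by linarith) n)
  · have hc : -2 * G.gram s t = 2 * Real.cos (Real.pi / M s t) := by
      rw [G.gram_eq_neg_cos s t hM]; ring
    rw [hc]
    exact chebyshevCoeff_eq_zero_or_one_le (two_le_of_ne M h hM) (hn.resolve_left hM)

end Gram

variable {ι W : Type*} [Fintype ι] [DecidableEq ι] [Group W] {M : CoxeterMatrix ι}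
  {cs : CoxeterSystem M W} (G : GeomRep cs)

/-- The symmetric bilinear form of a geometric representation. -/
noncomputable def form : LinearMap.BilinForm ℝ (ι → ℝ) := Matrix.toBilin' (Matrix.of G.gram)

@[simp] theorem form_simpleRoot (s t : ι) : G.form (α s) (α t) = G.gram s t := by
  simp [form, simpleRoot]

theorem form_apply (u v : ι → ℝ) : G.form u v = ∑ s, ∑ t, u s * G.gram s t * v t := by
  simp [form, Matrix.toBilin'_apply]

theorem form_comm (u v : ι → ℝ) : G.form u v = G.form v u := by
  rw [form_apply, form_apply, Finset.sum_comm]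
  refine Finset.sum_congr rfl fun s _ => Finset.sum_congr rfl fun t _ => ?_
  rw [G.gram_comm]
  ring

theorem form_simpleRoot_right (u : ι → ℝ) (t : ι) :
    G.form u (α t) = ∑ s, u s * G.gram s t := by
  conv_lhs => rw [eq_sum_smul_simpleRoot u]
  simp

theorem form_eq_sum_right (u v : ι → ℝ) : G.form u v = ∑ t, v t * G.form u (α t) := by
  conv_lhs => rw [eq_sum_smul_simpleRoot v]
  simp

/-- The reflection `v ↦ v - 2 ⟨v, g⟩ g` in a vector `g`; it is an involution only when
`⟨g, g⟩ = 1`. -/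
noncomputable def refl (g : ι → ℝ) : Module.End ℝ (ι → ℝ) :=
  Module.preReflection g ((2 : ℝ) • G.form g)

theorem refl_apply (g v : ι → ℝ) : G.refl g v = v - (2 * G.form v g) • g := by
  simp [refl, Module.preReflection_apply, G.form_comm v g]

theorem refl_apply_of_form_eq_zero {g v : ι → ℝ} (h : G.form v g = 0) : G.refl g v = v := by
  simp [refl_apply, h]

theorem refl_self {g : ι → ℝ} (h : G.form g g = 1) : G.refl g g = -g :=
  Module.preReflection_apply_self (by simp [h])

theorem refl_refl {g : ι → ℝ} (h : G.form g g = 1) (v : ι → ℝ) : G.refl g (G.refl g v) = v :=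
  Module.involutive_preReflection (by simp [h]) v

theorem refl_mul_self {g : ι → ℝ} (h : G.form g g = 1) : G.refl g * G.refl g = 1 :=
  LinearMap.ext (G.refl_refl h)

theorem form_refl {g : ι → ℝ} (h : G.form g g = 1) (u v : ι → ℝ) :
    G.form (G.refl g u) (G.refl g v) = G.form u v := by
  simp only [refl_apply, map_sub, map_smul, LinearMap.sub_apply, LinearMap.smul_apply, h,
    smul_eq_mul, G.form_comm g v]
  ring

theorem form_simpleRoot_self (s : ι) : G.form (α s) (α s) = 1 := by
  rw [form_simpleRoot, gram_self]

theorem prod_refl_alternatingWord_apply (s t : ι) (n : ℕ) :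
    ((alternatingWord s t n).map fun i => G.refl (α i)).prod (α s) =
      if Even n then
        chebyshevCoeff (-2 * G.gram s t) (n + 1) • α s + chebyshevCoeff (-2 * G.gram s t) n • α t
      else
        chebyshevCoeff (-2 * G.gram s t) n • α s +
          chebyshevCoeff (-2 * G.gram s t) (n + 1) • α t := by
  induction n with
  | zero => simp [alternatingWord]
  | succ n ih =>
    rw [alternatingWord_succ', List.map_cons, List.prod_cons, Module.End.mul_apply, ih]
    by_cases hn : Even n <;>
    · simp only [hn, Nat.even_add_one, not_true, not_false_eq_true, if_true, if_false, refl_apply,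
        chebyshevCoeff_add_two, map_add, map_smul, form_simpleRoot, gram_self, G.gram_comm t s]
      module

theorem prod_refl_alternatingWord_two_mul (s t : ι) (n : ℕ) :
    ((alternatingWord s t (2 * n)).map fun i => G.refl (α i)).prod =
      (G.refl (α s) * G.refl (α t)) ^ n := by
  induction n with
  | zero => simp [alternatingWord]
  | succ n ih =>
    rw [mul_add_one, alternatingWord_succ', alternatingWord_succ']
    simp [ih, pow_succ', mul_assoc]

theorem refl_mul_refl_pow_apply_left {s t : ι} (h : s ≠ t) (hM : M s t ≠ 0) :
    ((G.refl (α s) * G.refl (α t)) ^ M s t) (α s) = α s := by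
  have hc : -2 * G.gram s t = 2 * Real.cos (Real.pi / M s t) := by
    rw [G.gram_eq_neg_cos s t hM]; ring
  obtain ⟨h₀, h₁⟩ := chebyshevCoeff_two_mul_period (two_le_of_ne M h hM)
  rw [← prod_refl_alternatingWord_two_mul, prod_refl_alternatingWord_apply]
  simp [hc, h₀, h₁]

theorem refl_mul_refl_pow_apply_right {s t : ι} (h : s ≠ t) (hM : M s t ≠ 0) :
    ((G.refl (α s) * G.refl (α t)) ^ M s t) (α t) = α t := by
  have cancel : ∀ i j : ι, G.refl (α i) * G.refl (α j) * (G.refl (α j) * G.refl (α i)) = 1 := by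
    intro i j
    rw [mul_assoc, ← mul_assoc (G.refl (α j)), refl_mul_self G (G.form_simpleRoot_self j), one_mul,
      refl_mul_self G (G.form_simpleRoot_self i)]
  have hcomm : Commute (G.refl (α s) * G.refl (α t)) (G.refl (α t) * G.refl (α s)) :=
    (cancel s t).trans (cancel t s).symm
  have hinv :
      (G.refl (α s) * G.refl (α t)) ^ M s t * (G.refl (α t) * G.refl (α s)) ^ M s t = 1 := by
    rw [← hcomm.mul_pow, cancel, one_pow]
  have hfix := G.refl_mul_refl_pow_apply_left h.symm (by rwa [M.symmetric])
  rw [M.symmetric t s] at hfix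
  simpa [hfix] using LinearMap.congr_fun hinv (α t)

theorem exists_eq_add_smul_simpleRoot {s t : ι} (h : s ≠ t) (hM : M s t ≠ 0) (v : ι → ℝ) :
    ∃ (p : ι → ℝ) (a b : ℝ), G.form p (α s) = 0 ∧ G.form p (α t) = 0 ∧
      v = p + a • α s + b • α t := by
  have hlt := G.neg_one_lt_gram h hM
  have hle := G.gram_nonpos h
  have hdet : 1 - G.gram s t ^ 2 ≠ 0 := by nlinarith
  let a := (G.form v (α s) - G.gram s t * G.form v (α t)) / (1 - G.gram s t ^ 2)
  let b := (G.form v (α t) - G.gram s t * G.form v (α s)) / (1 - G.gram s t ^ 2)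
  refine ⟨v - a • α s - b • α t, a, b, ?_, ?_, by module⟩ <;>
  · simp only [map_sub, map_smul, LinearMap.sub_apply, LinearMap.smul_apply, form_simpleRoot,
      gram_self, smul_eq_mul, G.gram_comm t s, a, b]
    field_simp
    ring

theorem refl_mul_refl_pow (s t : ι) : (G.refl (α s) * G.refl (α t)) ^ M s t = 1 := by
  by_cases hM : M s t = 0
  · simp [hM]
  by_cases h : s = t
  · simp [h, refl_mul_self G (G.form_simpleRoot_self t)]
  refine LinearMap.ext fun v => ?_
  obtain ⟨p, a, b, hs, ht, rfl⟩ := G.exists_eq_add_smul_simpleRoot h hM v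
  have hp : ∀ n : ℕ, ((G.refl (α s) * G.refl (α t)) ^ n) p = p := by
    intro n
    induction n with
    | zero => simp
    | succ n ih =>
      rw [pow_succ, Module.End.mul_apply, Module.End.mul_apply, G.refl_apply_of_form_eq_zero ht,
        G.refl_apply_of_form_eq_zero hs, ih]
  simp [hp, G.refl_mul_refl_pow_apply_left h hM, G.refl_mul_refl_pow_apply_right h hM]

/-- The action of the Coxeter group on `ι → ℝ`, in which simple reflections act as the reflections
in the simple roots. -/
noncomputable def ρ : W →* Module.End ℝ (ι → ℝ) :=
  cs.lift ⟨fun i => G.refl (α i), G.refl_mul_refl_pow⟩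

theorem ρ_simple (s : ι) : G.ρ (cs.simple s) = G.refl (α s) := cs.lift_apply_simple _ s

end GeomRep

/-! ### Minimal coset representatives and positive roots -/

/-- A vector each of whose coordinates is `0` or at least `1`. The coordinates of positive roots
have this property, which makes the positive roots of bounded height a discrete set. -/
def StrongNonneg {ι : Type*} (v : ι → ℝ) : Prop := ∀ s, v s = 0 ∨ 1 ≤ v s

section StrongNonneg

variable {ι : Type*}

theorem StrongNonneg.nonneg {v : ι → ℝ} (h : StrongNonneg v) (s : ι) : 0 ≤ v s := by
  rcases h s with h | h <;> linarith

theorem strongNonneg_simpleRoot [DecidableEq ι] (s : ι) : StrongNonneg (α s) := by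
  intro t
  by_cases h : t = s <;> simp [simpleRoot_apply, h]

theorem StrongNonneg.add {u v : ι → ℝ} (hu : StrongNonneg u) (hv : StrongNonneg v) :
    StrongNonneg (u + v) := by
  intro s
  rcases hu s with h | h
  · simpa [h] using hv s
  · exact .inr (by simpa using add_le_add h (hv.nonneg s))

theorem StrongNonneg.smul {v : ι → ℝ} (hv : StrongNonneg v) {a : ℝ} (ha : a = 0 ∨ 1 ≤ a) :
    StrongNonneg (a • v) := by
  intro s
  rcases ha with rfl | ha
  · simp
  · refine (hv s).imp (fun h => by simp [h]) fun h => ?_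
    simpa using one_le_mul_of_one_le_of_one_le ha h

end StrongNonneg

section Coset

variable {ι W : Type*} [Group W] {M : CoxeterMatrix ι} (cs : CoxeterSystem M W)

theorem exists_eq_mul_alternatingWord (w : W) (s t : ι) :
    ∃ (n : ℕ) (v : W), w = v * cs.wordProd (alternatingWord s t n) ∧
      cs.length w = cs.length v + n ∧ ¬ cs.IsRightDescent v (if Even n then t else s) := by
  induction hN : cs.length w generalizing w s t with
  | zero =>
    refine ⟨0, w, by simp [alternatingWord], by simp [hN], ?_⟩
    simp [IsRightDescent, hN]
  | succ N ih =>
    by_cases hd : cs.IsRightDescent w t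
    · have hlen := cs.isRightDescent_iff.mp hd
      obtain ⟨n, v, hv, hl, hnd⟩ := ih (w * cs.simple t) t s (by omega)
      refine ⟨n + 1, v, ?_, by omega, ?_⟩
      · rw [alternatingWord_succ, wordProd_concat, ← mul_assoc, ← hv]
        simp [mul_assoc]
      · by_cases hn : Even n <;> simpa [hn, Nat.even_add_one] using hnd
    · exact ⟨0, w, by simp [alternatingWord], by simp [hN], by simpa using hd⟩

theorem exists_alternatingWord_add_eq_append (s t : ι) (m d : ℕ) :
    ∃ u : List ι, u.length = d ∧ alternatingWord s t (m + d) = u ++ alternatingWord s t m := by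
  induction d with
  | zero => exact ⟨[], rfl, rfl⟩
  | succ d ih =>
    obtain ⟨u, hu, he⟩ := ih
    refine ⟨(if Even (m + d) then t else s) :: u, by simp [hu], ?_⟩
    rw [← add_assoc, alternatingWord_succ', he]
    rfl

theorem not_isRightDescent_of_length_eq_add {w v : W} {s t : ι} {n : ℕ}
    (hw : w = v * cs.wordProd (alternatingWord s t (n + 1)))
    (hlen : cs.length w = cs.length v + (n + 1)) :
    ¬ cs.IsRightDescent v (if Even n then t else s) := by
  intro hd
  rw [alternatingWord_succ', wordProd_cons, ← mul_assoc] at hw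
  have hdesc := cs.isRightDescent_iff.mp hd
  have hmul := cs.length_mul_le (v * cs.simple (if Even n then t else s))
    (cs.wordProd (alternatingWord s t n))
  have hword := cs.length_wordProd_le (alternatingWord s t n)
  rw [length_alternatingWord] at hword
  rw [← hw] at hmul
  omega

theorem lt_of_length_eq_add_of_not_isRightDescent {w v : W} {s t : ι} {n : ℕ}
    (hw : w = v * cs.wordProd (alternatingWord s t n)) (hlen : cs.length w = cs.length v + n)
    (hs : ¬ cs.IsRightDescent w s) (hM : M s t ≠ 0) : n < M s t := by
  by_contra hle
  obtain ⟨d, rfl⟩ := Nat.exists_eq_add_of_le (not_lt.mp hle)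
  obtain ⟨u, hu, happ⟩ := exists_alternatingWord_add_eq_append s t (M s t) d
  have hbraid := cs.prod_alternatingWord_eq_prod_alternatingWord_sub s t (M s t) (by omega)
  rw [show M s t * 2 - M s t = M s t by omega] at hbraid
  obtain ⟨m, hm⟩ := Nat.exists_eq_succ_of_ne_zero hM
  have hws : w * cs.simple s = v * (cs.wordProd u * cs.wordProd (alternatingWord s t m)) := by
    rw [hw, happ, wordProd_append, hbraid, hm, Nat.succ_eq_add_one, alternatingWord_succ,
      wordProd_concat]
    simp [mul_assoc]
  apply hs
  rw [IsRightDescent, hws]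
  have h₁ := cs.length_mul_le v (cs.wordProd u * cs.wordProd (alternatingWord s t m))
  have h₂ := cs.length_mul_le (cs.wordProd u) (cs.wordProd (alternatingWord s t m))
  have h₃ := cs.length_wordProd_le (alternatingWord s t m)
  have h₄ := cs.length_wordProd_le u
  rw [length_alternatingWord] at h₃
  omega

/-- The coset decomposition with respect to a dihedral parabolic subgroup, with the alternating
word kept short enough for its Chebyshev coefficients to be nonnegative. -/
theorem exists_dihedral_decomposition {w : W} {s t : ι} (hs : ¬ cs.IsRightDescent w s)
    (ht : cs.IsRightDescent w t) :
    ∃ (n : ℕ) (v : W), w = v * cs.wordProd (alternatingWord s t n) ∧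
      cs.length v < cs.length w ∧ ¬ cs.IsRightDescent v s ∧ ¬ cs.IsRightDescent v t ∧
      (M s t = 0 ∨ n < M s t) := by
  obtain ⟨n, v, hw, hlen, hnd⟩ := exists_eq_mul_alternatingWord cs w s t
  rcases n with _ | n
  · simp only [alternatingWord, wordProd_nil, mul_one] at hw
    subst hw
    simp [ht] at hnd
  have hnd' := not_isRightDescent_of_length_eq_add cs hw hlen
  refine ⟨n + 1, v, hw, by omega, ?_, ?_, or_iff_not_imp_left.mpr
    (lt_of_length_eq_add_of_not_isRightDescent cs hw hlen hs)⟩ <;>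
  by_cases hn : Even n <;> simp_all [Nat.even_add_one]

end Coset

namespace GeomRep

variable {ι W : Type*} [Fintype ι] [DecidableEq ι] [Group W] {M : CoxeterMatrix ι}
  {cs : CoxeterSystem M W} (G : GeomRep cs)

theorem ρ_wordProd (l : List ι) :
    G.ρ (cs.wordProd l) = (l.map fun i => G.refl (α i)).prod := by
  induction l with
  | nil => simp
  | cons a l ih => simp [wordProd_cons, ih, ρ_simple]

theorem strongNonneg_ρ_of_not_isRightDescent {w : W} {s : ι} (hs : ¬ cs.IsRightDescent w s) :
    StrongNonneg (G.ρ w (α s)) := by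
  induction hN : cs.length w using Nat.strong_induction_on generalizing w s with
  | _ N ih =>
    subst hN
    by_cases hw : w = 1
    · simpa [hw] using strongNonneg_simpleRoot s
    obtain ⟨t, ht⟩ := cs.exists_rightDescent_of_ne_one hw
    have hst : s ≠ t := by
      rintro rfl
      exact hs ht
    obtain ⟨n, v, hwv, hlen, hvs, hvt, hn⟩ := exists_dihedral_decomposition cs hs ht
    have ihs := ih _ hlen hvs rfl
    have iht := ih _ hlen hvt rfl
    have hn₀ := G.chebyshevCoeff_gram_eq_zero_or_one_le hst (hn.imp_right le_of_lt)
    have hn₁ := G.chebyshevCoeff_gram_eq_zero_or_one_le hst (hn.imp_right Nat.succ_le_of_lt)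
    rw [hwv, map_mul, Module.End.mul_apply, ρ_wordProd, prod_refl_alternatingWord_apply]
    split_ifs <;> rw [map_add, map_smul, map_smul]
    · exact (ihs.smul hn₁).add (iht.smul hn₀)
    · exact (ihs.smul hn₀).add (iht.smul hn₁)

end GeomRep

theorem finite_setOf_length_le {ι W : Type*} [Finite ι] [Group W] {M : CoxeterMatrix ι}
    (cs : CoxeterSystem M W) (n : ℕ) : {w : W | cs.length w ≤ n}.Finite := by
  refine ((List.finite_length_le ι n).image cs.wordProd).subset fun w hw => ?_
  obtain ⟨l, hl, rfl⟩ := cs.exists_isReduced w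
  exact ⟨l, by simpa [hl.eq] using hw, rfl⟩

theorem not_isRightDescent_mul_simple {ι W : Type*} [Group W] {M : CoxeterMatrix ι}
    {cs : CoxeterSystem M W} {w : W} {s : ι} (h : cs.IsRightDescent w s) :
    ¬ cs.IsRightDescent (w * cs.simple s) s := by
  rw [IsRightDescent] at *
  rw [mul_assoc, cs.simple_mul_simple_self, mul_one]
  omega

namespace GeomRep

variable {ι W : Type*} [Fintype ι] [DecidableEq ι] [Group W] {M : CoxeterMatrix ι}
  {cs : CoxeterSystem M W} (G : GeomRep cs)

/-- `v` is a root if it is the image of a simple root under an element of `W`. -/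
def IsRoot (v : ι → ℝ) : Prop := ∃ (w : W) (s : ι), v = G.ρ w (α s)

theorem isRoot_simpleRoot (s : ι) : G.IsRoot (α s) := ⟨1, s, by simp⟩

theorem form_ρ (w : W) (u v : ι → ℝ) : G.form (G.ρ w u) (G.ρ w v) = G.form u v := by
  induction w using cs.simple_induction_left with
  | one => simp
  | mul_simple_left w s ih =>
    rw [map_mul, Module.End.mul_apply, Module.End.mul_apply, ρ_simple,
      form_refl _ (G.form_simpleRoot_self s), ih]

theorem ρ_inv_apply_ρ (w : W) (v : ι → ℝ) : G.ρ w⁻¹ (G.ρ w v) = v := by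
  rw [← Module.End.mul_apply, ← map_mul]
  simp

theorem ρ_apply_ρ_inv (w : W) (v : ι → ℝ) : G.ρ w (G.ρ w⁻¹ v) = v := by
  rw [← Module.End.mul_apply, ← map_mul]
  simp

theorem ρ_simple_simpleRoot (s : ι) : G.ρ (cs.simple s) (α s) = -α s := by
  rw [ρ_simple, refl_self _ (G.form_simpleRoot_self s)]

theorem refl_simpleRoot_refl_simpleRoot (s : ι) (v : ι → ℝ) :
    G.refl (α s) (G.refl (α s) v) = v :=
  G.refl_refl (G.form_simpleRoot_self s) v

theorem refl_simpleRoot_apply_of_ne (v : ι → ℝ) {s t : ι} (h : t ≠ s) :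
    G.refl (α s) v t = v t := by
  simp [refl_apply, simpleRoot_of_ne h]

theorem strongNonneg_neg_ρ_of_isRightDescent {w : W} {s : ι} (h : cs.IsRightDescent w s) :
    StrongNonneg (-(G.ρ w (α s))) := by
  have := G.strongNonneg_ρ_of_not_isRightDescent (not_isRightDescent_mul_simple h)
  rwa [map_mul, Module.End.mul_apply, ρ_simple_simpleRoot, map_neg] at this

/-- `v` is a positive root: a root with nonnegative coordinates, which are then automatically
`0` or at least `1`. -/
def IsPosRoot (v : ι → ℝ) : Prop := G.IsRoot v ∧ StrongNonneg v

theorem isPosRoot_simpleRoot (s : ι) : G.IsPosRoot (α s) :=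
  ⟨G.isRoot_simpleRoot s, strongNonneg_simpleRoot s⟩

/-- The inversion set of `w`: the positive roots that `w` sends to negative roots. -/
def inversionSet (w : W) : Set (ι → ℝ) := {v | G.IsPosRoot v ∧ G.IsPosRoot (-(G.ρ w v))}

variable {G}

theorem IsRoot.ρ_apply {v : ι → ℝ} (h : G.IsRoot v) (w : W) : G.IsRoot (G.ρ w v) := by
  obtain ⟨w', s, rfl⟩ := h
  exact ⟨w * w', s, by rw [map_mul, Module.End.mul_apply]⟩

theorem IsRoot.form_self {v : ι → ℝ} (h : G.IsRoot v) : G.form v v = 1 := by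
  obtain ⟨w, s, rfl⟩ := h
  rw [form_ρ, form_simpleRoot_self]

theorem IsRoot.neg {v : ι → ℝ} (h : G.IsRoot v) : G.IsRoot (-v) := by
  obtain ⟨w, s, rfl⟩ := h
  exact ⟨w * cs.simple s, s, by rw [map_mul, Module.End.mul_apply, ρ_simple_simpleRoot, map_neg]⟩

theorem IsRoot.ne_zero {v : ι → ℝ} (h : G.IsRoot v) : v ≠ 0 := by
  rintro rfl
  simpa using h.form_self

theorem IsRoot.exists_ρ_eq_refl {v : ι → ℝ} (h : G.IsRoot v) :
    ∃ g : W, G.ρ g = G.refl v ∧ g * g = 1 := by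
  obtain ⟨w, s, rfl⟩ := h
  refine ⟨w * cs.simple s * w⁻¹, LinearMap.ext fun v => ?_, by simp [mul_assoc]⟩
  rw [map_mul, map_mul, Module.End.mul_apply, Module.End.mul_apply, ρ_simple, refl_apply,
    refl_apply, map_sub, map_smul, ρ_apply_ρ_inv]
  congr 3
  rw [← G.form_ρ w, ρ_apply_ρ_inv]

theorem IsRoot.refl {u v : ι → ℝ} (hu : G.IsRoot u) (hv : G.IsRoot v) : G.IsRoot (G.refl u v) := by
  obtain ⟨g, hg, -⟩ := hu.exists_ρ_eq_refl
  exact hg ▸ hv.ρ_apply g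

theorem IsRoot.pos_or_neg {v : ι → ℝ} (h : G.IsRoot v) : G.IsPosRoot v ∨ G.IsPosRoot (-v) := by
  obtain ⟨w, s, rfl⟩ := id h
  by_cases hd : cs.IsRightDescent w s
  · exact .inr ⟨h.neg, G.strongNonneg_neg_ρ_of_isRightDescent hd⟩
  · exact .inl ⟨h, G.strongNonneg_ρ_of_not_isRightDescent hd⟩

theorem IsPosRoot.isRoot {v : ι → ℝ} (h : G.IsPosRoot v) : G.IsRoot v := h.1

theorem IsPosRoot.nonneg {v : ι → ℝ} (h : G.IsPosRoot v) (s : ι) : 0 ≤ v s := h.2.nonneg s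

theorem IsPosRoot.exists_one_le {v : ι → ℝ} (h : G.IsPosRoot v) : ∃ s, 1 ≤ v s := by
  by_contra! hlt
  exact h.isRoot.ne_zero (funext fun s => (h.2 s).resolve_right (hlt s).not_ge)

theorem IsPosRoot.one_le_height {v : ι → ℝ} (h : G.IsPosRoot v) : 1 ≤ height v := by
  obtain ⟨s, hs⟩ := h.exists_one_le
  rw [height_apply]
  exact hs.trans (Finset.single_le_sum (f := v) (fun i _ => h.nonneg i) (Finset.mem_univ s))

theorem IsPosRoot.not_neg {v : ι → ℝ} (h : G.IsPosRoot v) : ¬ G.IsPosRoot (-v) := by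
  intro hneg
  have h₁ := h.one_le_height
  have h₂ := hneg.one_le_height
  rw [map_neg] at h₂
  linarith

theorem IsRoot.isPosRoot_of_pos {v : ι → ℝ} (h : G.IsRoot v) {s : ι} (hs : 0 < v s) :
    G.IsPosRoot v := by
  refine h.pos_or_neg.resolve_right fun hneg => ?_
  have := hneg.nonneg s
  rw [Pi.neg_apply] at this
  linarith

theorem IsPosRoot.eq_simpleRoot {v : ι → ℝ} (h : G.IsPosRoot v) {s : ι}
    (hs : ∀ t, t ≠ s → v t = 0) : v = α s := by
  have hv : v = v s • α s := by
    ext t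
    by_cases ht : t = s
    · simp [ht]
    · simp [hs t ht, simpleRoot_of_ne ht]
  have hnorm := h.isRoot.form_self
  rw [hv] at hnorm
  simp only [map_smul, LinearMap.smul_apply, form_simpleRoot_self, smul_eq_mul, mul_one] at hnorm
  have hone : v s = 1 := by nlinarith [h.nonneg s]
  rw [hv, hone, one_smul]

theorem IsPosRoot.refl_simpleRoot {v : ι → ℝ} (h : G.IsPosRoot v) {s : ι} (hs : v ≠ α s) :
    G.IsPosRoot (G.refl (α s) v) := by
  obtain ⟨t, hts, hv⟩ : ∃ t, t ≠ s ∧ v t ≠ 0 := by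
    by_contra! hcon
    exact hs (h.eq_simpleRoot hcon)
  refine ((G.isRoot_simpleRoot s).refl h.isRoot).isPosRoot_of_pos (s := t) ?_
  rw [refl_simpleRoot_apply_of_ne _ _ hts]
  exact lt_of_le_of_ne (h.nonneg t) (Ne.symm hv)

theorem inversionSet_eq_empty {w : W} (h : G.ρ w = 1) : G.inversionSet w = ∅ :=
  Set.eq_empty_of_forall_notMem fun v hv => hv.1.not_neg (by simpa [h] using hv.2)

theorem inversionSet_mul_simple_subset (w : W) (s : ι) :
    G.inversionSet (w * cs.simple s) ⊆ insert (α s) (G.refl (α s) '' G.inversionSet w) := by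
  rintro v ⟨hv, hneg⟩
  refine or_iff_not_imp_left.mpr fun h => ?_
  refine ⟨G.refl (α s) v, ⟨hv.refl_simpleRoot h, ?_⟩, G.refl_simpleRoot_refl_simpleRoot s v⟩
  rwa [map_mul, Module.End.mul_apply, ρ_simple] at hneg

theorem finite_inversionSet (w : W) : (G.inversionSet w).Finite := by
  induction w using cs.simple_induction_right with
  | one => simp [inversionSet_eq_empty (map_one G.ρ)]
  | mul_simple_right w s ih =>
    exact ((ih.image _).insert _).subset (inversionSet_mul_simple_subset w s)

theorem insert_image_inversionSet_subset {w : W} {s : ι} (hs : ¬ cs.IsRightDescent w s) :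
    insert (α s) (G.refl (α s) '' G.inversionSet w) ⊆ G.inversionSet (w * cs.simple s) := by
  have hpos : G.IsPosRoot (G.ρ w (α s)) :=
    ⟨(G.isRoot_simpleRoot s).ρ_apply w, G.strongNonneg_ρ_of_not_isRightDescent hs⟩
  rintro v (rfl | ⟨u, ⟨hu, hneg⟩, rfl⟩)
  · refine ⟨G.isPosRoot_simpleRoot s, ?_⟩
    rwa [map_mul, Module.End.mul_apply, ρ_simple_simpleRoot, map_neg, neg_neg]
  · have hne : u ≠ α s := by
      rintro rfl
      exact hpos.not_neg hneg
    refine ⟨hu.refl_simpleRoot hne, ?_⟩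
    rwa [map_mul, Module.End.mul_apply, ρ_simple, refl_simpleRoot_refl_simpleRoot]

theorem simpleRoot_notMem_image_inversionSet (w : W) (s : ι) :
    α s ∉ G.refl (α s) '' G.inversionSet w := by
  rintro ⟨u, ⟨hu, -⟩, hus⟩
  have : u = -α s := by
    rw [← G.refl_simpleRoot_refl_simpleRoot s u, hus, refl_self _ (G.form_simpleRoot_self s)]
  exact (G.isPosRoot_simpleRoot s).not_neg (this ▸ hu)

theorem length_le_ncard_inversionSet (w : W) : cs.length w ≤ (G.inversionSet w).ncard := by
  induction hN : cs.length w generalizing w with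
  | zero => omega
  | succ N ih =>
    have hne : w ≠ 1 := by
      rintro rfl
      simp at hN
    obtain ⟨s, hs⟩ := cs.exists_rightDescent_of_ne_one hne
    have hlen := cs.isRightDescent_iff.mp hs
    obtain ⟨v, rfl⟩ : ∃ v, w = v * cs.simple s := ⟨w * cs.simple s, by simp [mul_assoc]⟩
    have hv : ¬ cs.IsRightDescent v s := by
      simpa [mul_assoc] using not_isRightDescent_mul_simple hs
    rw [mul_assoc, cs.simple_mul_simple_self, mul_one] at hlen
    have hcard := Set.ncard_le_ncard (insert_image_inversionSet_subset (G := G) hv)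
      (finite_inversionSet _)
    rw [Set.ncard_insert_of_notMem (simpleRoot_notMem_image_inversionSet v s)
      ((finite_inversionSet v).image _), Set.ncard_image_of_injective _
      (Function.LeftInverse.injective (G.refl_simpleRoot_refl_simpleRoot s))] at hcard
    have := ih v (by omega)
    omega

theorem ρ_injective : Function.Injective G.ρ := by
  refine (injective_iff_map_eq_one _).mpr fun w hw => ?_
  have := length_le_ncard_inversionSet (G := G) w
  rw [inversionSet_eq_empty hw, Set.ncard_empty] at this
  exact cs.length_eq_zero_iff.mp (by omega)

theorem eq_or_eq_neg_of_refl_eq {u v : ι → ℝ} (hu : G.IsRoot u) (hv : G.IsRoot v)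
    (h : G.refl u = G.refl v) : u = v ∨ u = -v := by
  have hneg := LinearMap.congr_fun h u
  rw [refl_self _ hu.form_self, refl_apply] at hneg
  have huv : u = G.form u v • v := by
    apply smul_right_injective _ (two_ne_zero' ℝ)
    have : (2 * G.form u v) • v = u - -u := by rw [hneg]; module
    simp only [smul_smul, this]
    module
  have hsq := hu.form_self
  rw [huv] at hsq
  simp only [map_smul, LinearMap.smul_apply, hv.form_self, smul_eq_mul, mul_one] at hsq
  rcases mul_self_eq_one_iff.mp hsq with h₁ | h₁ <;> rw [h₁] at huv
  · exact .inl (by simpa using huv)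
  · exact .inr (by simpa using huv)

end GeomRep

/-! ### Interior points of the Tits cone -/

section SupportedOn

variable {ι : Type*}

/-- The subspace of vectors all of whose coordinates outside `K` vanish. -/
def supportedOn (K : Set ι) : Submodule ℝ (ι → ℝ) where
  carrier := {v | ∀ s, s ∉ K → v s = 0}
  add_mem' hu hv s hs := by simp [hu s hs, hv s hs]
  zero_mem' _ _ := rfl
  smul_mem' c _ hu s hs := by simp [hu s hs]

theorem simpleRoot_mem_supportedOn [DecidableEq ι] {K : Set ι} {s : ι} (h : s ∈ K) :
    α s ∈ supportedOn K :=
  fun _ ht => simpleRoot_of_ne (ne_of_mem_of_not_mem h ht).symm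

theorem supportedOn_mono {K L : Set ι} (h : K ⊆ L) : supportedOn K ≤ supportedOn L :=
  fun _ hu s hs => hu s fun hK => hs (h hK)

theorem mem_supportedOn_univ (u : ι → ℝ) : u ∈ supportedOn (Set.univ : Set ι) :=
  fun s hs => absurd (Set.mem_univ s) hs

theorem mem_of_mem_supportedOn {K : Set ι} {v : ι → ℝ} (hv : v ∈ supportedOn K) {s : ι}
    (hs : v s ≠ 0) : s ∈ K :=
  of_not_not fun h => hs (hv s h)

theorem nonneg_of_nonneg_simpleRoot [Finite ι] [DecidableEq ι] {x : (ι → ℝ) →ₗ[ℝ] ℝ} {K : Set ι}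
    (h : ∀ q ∈ K, 0 ≤ x (α q)) {v : ι → ℝ} (hv : 0 ≤ v) (hK : v ∈ supportedOn K) : 0 ≤ x v := by
  cases nonempty_fintype ι
  rw [eq_sum_smul_simpleRoot v, map_sum]
  refine Finset.sum_nonneg fun s _ => ?_
  rw [map_smul, smul_eq_mul]
  by_cases hs : s ∈ K
  · exact mul_nonneg (hv s) (h s hs)
  · simp [hK s hs]

theorem mem_supportedOn_of_apply_eq_zero [Finite ι] [DecidableEq ι] {x : (ι → ℝ) →ₗ[ℝ] ℝ}
    (hx : ∀ v, 0 ≤ v → 0 ≤ x v) {v : ι → ℝ} (hv : 0 ≤ v) (h : x v = 0) :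
    v ∈ supportedOn {s | x (α s) = 0} := by
  cases nonempty_fintype ι
  intro s hs
  rw [eq_sum_smul_simpleRoot v, map_sum] at h
  have hnonneg : ∀ s ∈ Finset.univ, 0 ≤ x (v s • α s) := fun s _ => by
    rw [map_smul]
    exact mul_nonneg (hv s) (hx _ (strongNonneg_simpleRoot s).nonneg)
  have hzero := (Finset.sum_eq_zero_iff_of_nonneg hnonneg).mp h s (Finset.mem_univ s)
  rw [map_smul, smul_eq_mul] at hzero
  exact (mul_eq_zero.mp hzero).resolve_right hs

end SupportedOn

section Parabolic

variable {ι W : Type*} [Group W] {M : CoxeterMatrix ι} (cs : CoxeterSystem M W)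

/-- The standard parabolic subgroup generated by the simple reflections indexed by `K`. -/
def parabolic (K : Set ι) : Subgroup W := Subgroup.closure (cs.simple '' K)

theorem simple_mem_parabolic {K : Set ι} {s : ι} (h : s ∈ K) : cs.simple s ∈ parabolic cs K :=
  Subgroup.subset_closure ⟨s, h, rfl⟩

theorem parabolic_mono {K L : Set ι} (h : K ⊆ L) : parabolic cs K ≤ parabolic cs L :=
  Subgroup.closure_mono (Set.image_mono h)

end Parabolic

namespace GeomRep

variable {ι W : Type*} [Fintype ι] [DecidableEq ι] [Group W] {M : CoxeterMatrix ι}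
  {cs : CoxeterSystem M W} {G : GeomRep cs}

theorem refl_simpleRoot_mem_supportedOn {K : Set ι} {s : ι} (h : s ∈ K) {v : ι → ℝ}
    (hv : v ∈ supportedOn K) : G.refl (α s) v ∈ supportedOn K := by
  rw [refl_apply]
  exact sub_mem hv (Submodule.smul_mem _ _ (simpleRoot_mem_supportedOn h))

theorem ρ_apply_of_notMem {K : Set ι} {w : W} (hw : w ∈ parabolic cs K) (v : ι → ℝ) {t : ι}
    (ht : t ∉ K) : G.ρ w v t = v t := by
  induction hw using Subgroup.closure_induction generalizing v with
  | mem x hx =>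
    obtain ⟨s, hs, rfl⟩ := hx
    rw [ρ_simple, refl_simpleRoot_apply_of_ne _ _ (ne_of_mem_of_not_mem hs ht).symm]
  | one => simp
  | mul x y _ _ hx hy => rw [map_mul, Module.End.mul_apply, hx, hy]
  | inv x _ hx => rw [← hx (G.ρ x⁻¹ v), ρ_apply_ρ_inv]

theorem ρ_mem_supportedOn {K : Set ι} {w : W} (hw : w ∈ parabolic cs K) {v : ι → ℝ}
    (hv : v ∈ supportedOn K) : G.ρ w v ∈ supportedOn K :=
  fun t ht => by rw [ρ_apply_of_notMem hw v ht, hv t ht]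

theorem mem_supportedOn_of_mem_inversionSet {K : Set ι} {w : W} (hw : w ∈ parabolic cs K)
    {v : ι → ℝ} (hv : v ∈ G.inversionSet w) : v ∈ supportedOn K := by
  intro t ht
  have h₁ := ρ_apply_of_notMem (G := G) hw v ht
  have h₂ := hv.1.nonneg t
  have h₃ := hv.2.nonneg t
  rw [Pi.neg_apply] at h₃
  linarith

theorem parabolic_induction (G : GeomRep cs) {K : Set ι} {P : W → Prop} (one : P 1)
    (step : ∀ w ∈ parabolic cs K, ∀ s ∈ K, G.IsPosRoot (G.ρ w (α s)) →
      G.ρ w (α s) ∈ supportedOn K → P w → P (w * cs.simple s)) {w : W}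
    (hw : w ∈ parabolic cs K) : P w := by
  induction hN : cs.length w generalizing w with
  | zero => rwa [cs.length_eq_zero_iff.mp hN]
  | succ N ih =>
    have hne : w ≠ 1 := by
      rintro rfl
      simp at hN
    obtain ⟨s, hs⟩ := cs.exists_rightDescent_of_ne_one hne
    have hinv : α s ∈ G.inversionSet w :=
      ⟨G.isPosRoot_simpleRoot s, ((G.isRoot_simpleRoot s).ρ_apply w).neg,
        G.strongNonneg_neg_ρ_of_isRightDescent hs⟩
    have hsK : s ∈ K :=
      mem_of_mem_supportedOn (mem_supportedOn_of_mem_inversionSet hw hinv) (by simp)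
    have hlen := cs.isRightDescent_iff.mp hs
    have hw' : w * cs.simple s ∈ parabolic cs K := mul_mem hw (simple_mem_parabolic cs hsK)
    have := step (w * cs.simple s) hw' s hsK
      ⟨(G.isRoot_simpleRoot s).ρ_apply _,
        G.strongNonneg_ρ_of_not_isRightDescent (not_isRightDescent_mul_simple hs)⟩
      (ρ_mem_supportedOn hw' (simpleRoot_mem_supportedOn hsK)) (ih hw' (by omega))
    simpa [mul_assoc] using this

/-- The positive roots supported on `K`; they form the positive system of the parabolic subgroup
of `K`. -/
def posRootsOn (G : GeomRep cs) (K : Set ι) : Set (ι → ℝ) := {v | G.IsPosRoot v ∧ v ∈ supportedOn K}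

theorem finite_parabolic_of_finite_posRootsOn {K : Set ι} (h : (G.posRootsOn K).Finite) :
    (parabolic cs K : Set W).Finite := by
  refine (finite_setOf_length_le cs (G.posRootsOn K).ncard).subset fun w hw => ?_
  refine (length_le_ncard_inversionSet (G := G) w).trans (Set.ncard_le_ncard ?_ h)
  exact fun v hv => ⟨hv.1, mem_supportedOn_of_mem_inversionSet hw hv⟩

/-- The interior of the Tits cone: the linear functionals that are nonpositive on only finitely
many positive roots. -/
def titsInterior (G : GeomRep cs) : Set ((ι → ℝ) →ₗ[ℝ] ℝ) :=
  {x | {v | G.IsPosRoot v ∧ x v ≤ 0}.Finite}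

section TitsInterior

variable {x y : (ι → ℝ) →ₗ[ℝ] ℝ}

theorem add_mem_titsInterior (hx : x ∈ G.titsInterior) (hy : y ∈ G.titsInterior) :
    x + y ∈ G.titsInterior := by
  refine (Set.Finite.union hx hy).subset ?_
  rintro v ⟨hv, hle⟩
  rw [LinearMap.add_apply] at hle
  by_cases h : x v ≤ 0
  · exact .inl ⟨hv, h⟩
  · exact .inr ⟨hv, by linarith⟩

theorem smul_mem_titsInterior (hx : x ∈ G.titsInterior) {c : ℝ} (hc : 0 < c) :
    c • x ∈ G.titsInterior := by
  refine hx.subset ?_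
  rintro v ⟨hv, hle⟩
  rw [LinearMap.smul_apply, smul_eq_mul] at hle
  exact ⟨hv, nonpos_of_mul_nonpos_right hle hc⟩

theorem add_smul_mem_titsInterior (hx : x ∈ G.titsInterior) (hy : y ∈ G.titsInterior) {c : ℝ}
    (hc : 0 ≤ c) : x + c • y ∈ G.titsInterior := by
  rcases hc.eq_or_lt with rfl | h
  · simpa using hx
  · exact add_mem_titsInterior hx (smul_mem_titsInterior hy h)

theorem comp_ρ_mem_titsInterior (hx : x ∈ G.titsInterior) (w : W) :
    x ∘ₗ G.ρ w ∈ G.titsInterior := by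
  refine (Set.Finite.union (finite_inversionSet (G := G) w) (hx.image (G.ρ w⁻¹))).subset ?_
  rintro v ⟨hv, hle⟩
  rcases (hv.isRoot.ρ_apply w).pos_or_neg with h | h
  · exact .inr ⟨G.ρ w v, ⟨h, hle⟩, G.ρ_inv_apply_ρ w v⟩
  · exact .inl ⟨hv, h⟩

theorem comp_refl_mem_titsInterior (hx : x ∈ G.titsInterior) {g : ι → ℝ} (hg : G.IsRoot g) :
    x ∘ₗ G.refl g ∈ G.titsInterior := by
  obtain ⟨w, hw, -⟩ := hg.exists_ρ_eq_refl
  exact hw ▸ comp_ρ_mem_titsInterior hx w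

theorem mem_titsInterior_of_pos (h : ∀ v, G.IsPosRoot v → 0 < x v) : x ∈ G.titsInterior :=
  Set.finite_empty.subset fun v hv => (h v hv.1).not_ge hv.2

theorem height_mem_titsInterior : height ∈ G.titsInterior :=
  mem_titsInterior_of_pos fun _ hv => one_pos.trans_le hv.one_le_height

theorem height_add_smul_proj_mem_titsInterior (s : ι) {n : ℝ} (hn : 0 ≤ n) :
    height + n • (LinearMap.proj s : (ι → ℝ) →ₗ[ℝ] ℝ) ∈ G.titsInterior :=
  mem_titsInterior_of_pos fun _ hv =>
    add_pos_of_pos_of_nonneg (one_pos.trans_le hv.one_le_height) (mul_nonneg hn (hv.nonneg s))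

/-- Twice the projection of a functional to the wall of `g` along the reflection in `g`; for a
root `g` it preserves the interior of the Tits cone, by convexity. -/
noncomputable def wallProj (G : GeomRep cs) (g : ι → ℝ) (x : (ι → ℝ) →ₗ[ℝ] ℝ) :
    (ι → ℝ) →ₗ[ℝ] ℝ :=
  x + x ∘ₗ G.refl g

theorem wallProj_mem_titsInterior (hx : x ∈ G.titsInterior) {g : ι → ℝ} (hg : G.IsRoot g) :
    G.wallProj g x ∈ G.titsInterior :=
  add_mem_titsInterior hx (comp_refl_mem_titsInterior hx hg)

theorem wallProj_apply (g : ι → ℝ) (x : (ι → ℝ) →ₗ[ℝ] ℝ) (v : ι → ℝ) :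
    G.wallProj g x v = 2 * x v - 2 * G.form v g * x g := by
  simp only [wallProj, LinearMap.add_apply, LinearMap.comp_apply, refl_apply, map_sub, map_smul,
    smul_eq_mul]
  ring

theorem wallProj_apply_self {g : ι → ℝ} (hg : G.IsRoot g) (x : (ι → ℝ) →ₗ[ℝ] ℝ) :
    G.wallProj g x g = 0 := by
  rw [wallProj_apply, hg.form_self]
  ring

theorem finite_setOf_isRoot_eq_zero (hx : x ∈ G.titsInterior) :
    {v | G.IsRoot v ∧ x v = 0}.Finite := by
  refine (Set.Finite.union hx (hx.image Neg.neg)).subset ?_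
  rintro v ⟨hv, h0⟩
  rcases hv.pos_or_neg with h | h
  · exact .inl ⟨h, h0.le⟩
  · exact .inr ⟨-v, ⟨h, by simp [h0]⟩, by simp⟩

theorem finite_stabilizer (hx : x ∈ G.titsInterior) : {w : W | x ∘ₗ G.ρ w = x}.Finite := by
  set Z := {v | G.IsPosRoot v ∧ x v ≤ 0}
  refine (finite_setOf_length_le cs (Z.ncard + Z.ncard)).subset fun w hw => ?_
  have hwx : ∀ v, x (G.ρ w v) = x v := LinearMap.congr_fun hw
  have hfin : ((fun v => G.ρ w⁻¹ (-v)) '' Z).Finite := Set.Finite.image _ hx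
  have hsub : G.inversionSet w ⊆ Z ∪ (fun v => G.ρ w⁻¹ (-v)) '' Z := by
    rintro v ⟨hv, hneg⟩
    by_cases h : x v ≤ 0
    · exact .inl ⟨hv, h⟩
    · refine .inr ⟨-(G.ρ w v), ⟨hneg, ?_⟩, by simp⟩
      rw [map_neg, hwx]
      linarith
  calc cs.length w ≤ (G.inversionSet w).ncard := length_le_ncard_inversionSet w
    _ ≤ _ := Set.ncard_le_ncard hsub (Set.Finite.union hx hfin)
    _ ≤ _ := Set.ncard_union_le _ _
    _ ≤ _ := Nat.add_le_add_left (Set.ncard_image_le hx) _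

end TitsInterior

theorem setOf_comp_refl_neg_subset {y : (ι → ℝ) →ₗ[ℝ] ℝ} {K : Set ι} {s : ι} (hs : s ∈ K)
    (hneg : y (α s) < 0) :
    {v ∈ G.posRootsOn K | (y ∘ₗ G.refl (α s)) v < 0} ⊆
      G.refl (α s) '' ({v ∈ G.posRootsOn K | y v < 0} \ {α s}) := by
  rintro v ⟨⟨hv, hK⟩, hlt⟩
  rw [LinearMap.comp_apply] at hlt
  have hne : v ≠ α s := by
    rintro rfl
    rw [refl_self _ (G.form_simpleRoot_self s), map_neg] at hlt
    linarith
  refine ⟨G.refl (α s) v, ⟨⟨⟨hv.refl_simpleRoot hne, refl_simpleRoot_mem_supportedOn hs hK⟩, hlt⟩,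
    fun he => ?_⟩, G.refl_simpleRoot_refl_simpleRoot s v⟩
  have : v = -α s := by
    rw [← G.refl_simpleRoot_refl_simpleRoot s v, Set.mem_singleton_iff.mp he,
      refl_self _ (G.form_simpleRoot_self s)]
  exact (G.isPosRoot_simpleRoot s).not_neg (this ▸ hv)

theorem exists_parabolic_forall_nonneg (y : (ι → ℝ) →ₗ[ℝ] ℝ) (K : Set ι)
    (h : {v ∈ G.posRootsOn K | y v < 0}.Finite) :
    ∃ w ∈ parabolic cs K, ∀ q ∈ K, 0 ≤ y (G.ρ w (α q)) := by
  induction hN : {v ∈ G.posRootsOn K | y v < 0}.ncard using Nat.strong_induction_on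
    generalizing y with
  | _ N ih =>
    by_cases hd : ∀ q ∈ K, 0 ≤ y (α q)
    · exact ⟨1, one_mem _, by simpa using hd⟩
    push Not at hd
    obtain ⟨s, hs, hneg⟩ := hd
    have hmem : α s ∈ {v ∈ G.posRootsOn K | y v < 0} :=
      ⟨⟨G.isPosRoot_simpleRoot s, simpleRoot_mem_supportedOn hs⟩, hneg⟩
    have hsub := setOf_comp_refl_neg_subset (G := G) hs hneg
    have hfin : (G.refl (α s) '' ({v ∈ G.posRootsOn K | y v < 0} \ {α s})).Finite :=
      (h.subset Set.sdiff_subset).image _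
    have hcard : {v ∈ G.posRootsOn K | (y ∘ₗ G.refl (α s)) v < 0}.ncard < N :=
      calc _ ≤ _ := Set.ncard_le_ncard hsub hfin
        _ ≤ _ := Set.ncard_image_le (h.subset Set.sdiff_subset)
        _ < _ := Set.ncard_sdiff_singleton_lt_of_mem hmem h
        _ = N := hN
    obtain ⟨w, hw, hq⟩ := ih _ hcard _ (hfin.subset hsub) rfl
    refine ⟨cs.simple s * w, mul_mem (simple_mem_parabolic cs hs) hw, fun q hqK => ?_⟩
    rw [map_mul, ρ_simple]
    exact hq q hqK

theorem exists_forall_nonneg_comp_ρ {x : (ι → ℝ) →ₗ[ℝ] ℝ} (hx : x ∈ G.titsInterior) :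
    ∃ w : W, ∀ v, 0 ≤ v → 0 ≤ x (G.ρ w v) := by
  obtain ⟨w, -, hw⟩ := exists_parabolic_forall_nonneg (G := G) x Set.univ
    (hx.subset fun v hv => ⟨hv.1.1, hv.2.le⟩)
  exact ⟨w, fun v hv => nonneg_of_nonneg_simpleRoot (x := x ∘ₗ G.ρ w) hw hv
    (mem_supportedOn_univ v)⟩

end GeomRep

namespace GeomRep

variable {ι W : Type*} [Fintype ι] [DecidableEq ι] [Group W] {M : CoxeterMatrix ι}
  {cs : CoxeterSystem M W} {G : GeomRep cs}

section RootPairs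

variable {g d : ι → ℝ}

theorem isRoot_chebyshevCoeff_even (hg : G.IsRoot g) (hd : G.IsRoot d) (n : ℕ) :
    G.IsRoot (chebyshevCoeff (-2 * G.form g d) (2 * n + 1) • g +
      chebyshevCoeff (-2 * G.form g d) (2 * n) • d) := by
  set c := chebyshevCoeff (-2 * G.form g d) with hc
  have hrec : ∀ n, c (n + 2) = -2 * G.form g d * c (n + 1) - c n := fun n => by
    rw [hc, chebyshevCoeff_add_two]
  induction n with
  | zero => simpa [c] using hg
  | succ n ih =>
    have hodd : G.IsRoot (c (2 * n + 1) • g + c (2 * n + 2) • d) := by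
      convert hd.refl ih using 1
      rw [refl_apply, hrec]
      simp only [map_add, map_smul, LinearMap.add_apply, LinearMap.smul_apply, hd.form_self,
        smul_eq_mul]
      module
    convert hg.refl hodd using 1
    rw [refl_apply, show 2 * (n + 1) + 1 = (2 * n + 1) + 2 by ring, hrec]
    simp only [map_add, map_smul, LinearMap.add_apply, LinearMap.smul_apply, hg.form_self,
      smul_eq_mul, G.form_comm d g]
    rw [show 2 * n + 1 + 1 = 2 * n + 2 by ring, show 2 * (n + 1) = 2 * n + 2 by ring]
    module

theorem eq_zero_of_smul_add_smul_eq_zero (hg : G.IsRoot g) (hd : G.IsRoot d)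
    (hB : G.form g d ≤ -1) (hne : g + d ≠ 0) {a b : ℝ} (hab : a • g + b • d = 0) : a = 0 := by
  by_contra ha
  have hgd : g = (-b / a) • d := by
    have : a • g = (-b) • d := by rw [eq_neg_of_add_eq_zero_left hab, neg_smul]
    rw [div_eq_inv_mul, mul_smul, ← this, inv_smul_smul₀ ha]
  have hsq := hg.form_self
  have hB' := hB
  rw [hgd] at hsq hB'
  simp only [map_smul, LinearMap.smul_apply, smul_eq_mul, hd.form_self] at hsq hB'
  have hneg : -b / a = -1 := by nlinarith
  exact hne (by rw [hgd, hneg, neg_one_smul, neg_add_cancel])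

theorem false_of_apply_eq_zero (hg : G.IsRoot g) (hd : G.IsRoot d) (hB : G.form g d ≤ -1)
    (hne : g + d ≠ 0) {x : (ι → ℝ) →ₗ[ℝ] ℝ} (hx : x ∈ G.titsInterior) (hxg : x g = 0)
    (hxd : x d = 0) : False := by
  set c := chebyshevCoeff (-2 * G.form g d)
  have hinj : Function.Injective fun n : ℕ => c (2 * n + 1) • g + c (2 * n) • d := by
    intro n m hnm
    have hsub : (c (2 * n + 1) - c (2 * m + 1)) • g + (c (2 * n) - c (2 * m)) • d = 0 := by
      rw [← sub_eq_zero.mpr hnm]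
      module
    have h := sub_eq_zero.mp (eq_zero_of_smul_add_smul_eq_zero hg hd hB hne hsub)
    have := (strictMono_chebyshevCoeff (by linarith)).injective h
    omega
  exact Set.infinite_of_injective_forall_mem hinj (s := {v | G.IsRoot v ∧ x v = 0})
    (fun n => ⟨isRoot_chebyshevCoeff_even hg hd n, by simp [hxg, hxd]⟩)
    (finite_setOf_isRoot_eq_zero hx)

end RootPairs

theorem ρ_mul_self_add_inv {w : W} {τ : ℝ} {v : ι → ℝ} (h : G.ρ w v + G.ρ w⁻¹ v = τ • v) :
    G.ρ (w * w) v + G.ρ (w * w)⁻¹ v = (τ ^ 2 - 2) • v := by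
  have h₁ := congrArg (G.ρ w) h
  have h₂ := congrArg (G.ρ w⁻¹) h
  rw [map_add, map_smul, ρ_apply_ρ_inv] at h₁
  rw [map_add, map_smul, ρ_inv_apply_ρ] at h₂
  rw [mul_inv_rev, map_mul, map_mul, Module.End.mul_apply, Module.End.mul_apply,
    eq_sub_of_add_eq h₁, eq_sub_of_add_eq' h₂]
  have : τ • G.ρ w v - v + (τ • G.ρ w⁻¹ v - v) = τ • (G.ρ w v + G.ρ w⁻¹ v) - (2 : ℝ) • v := by
    module
  rw [this, h]
  module

/- A rotation `w` with trace `τ ≤ 0` on the plane of `g` and `d` gives the functional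
`height ∘ (w + w⁻¹ - τ)`, which vanishes on that plane. If `0 < τ < 2` the square of `w` has
trace `τ ^ 2 - 2`, and repeated squaring at least doubles `2 - τ` until the trace is nonpositive. -/
theorem exists_titsInterior_of_add_inv_eq_smul {g d : ι → ℝ} {k : ℕ} {w : W} {τ : ℝ} (hτ : τ ≤ 2)
    (hg : G.ρ w g + G.ρ w⁻¹ g = τ • g) (hd : G.ρ w d + G.ρ w⁻¹ d = τ • d)
    (hk : 2 ≤ (2 - τ) * 2 ^ k) : ∃ x ∈ G.titsInterior, x g = 0 ∧ x d = 0 := by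
  induction k generalizing w τ with
  | zero =>
    have hzero : ∀ v, G.ρ w v + G.ρ w⁻¹ v = τ • v →
        ((height ∘ₗ G.ρ w + height ∘ₗ G.ρ w⁻¹) + (-τ) • height : (ι → ℝ) →ₗ[ℝ] ℝ) v = 0 := by
      intro v hv
      simp only [LinearMap.add_apply, LinearMap.comp_apply, LinearMap.smul_apply]
      rw [← map_add, hv, map_smul, neg_smul, add_neg_cancel]
    refine ⟨(height ∘ₗ G.ρ w + height ∘ₗ G.ρ w⁻¹) + (-τ) • height, ?_, hzero g hg, hzero d hd⟩
    exact add_smul_mem_titsInterior (add_mem_titsInterior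
      (comp_ρ_mem_titsInterior height_mem_titsInterior w)
      (comp_ρ_mem_titsInterior height_mem_titsInterior w⁻¹)) height_mem_titsInterior
      (by rw [pow_zero] at hk; linarith)
  | succ k ih =>
    by_cases h0 : τ ≤ 0
    · refine ih hτ hg hd ?_
      nlinarith [one_le_pow₀ (one_le_two : (1 : ℝ) ≤ 2) (n := k)]
    push Not at h0
    refine ih (by nlinarith) (ρ_mul_self_add_inv hg) (ρ_mul_self_add_inv hd) ?_
    calc (2 : ℝ) ≤ (2 - τ) * 2 ^ (k + 1) := hk
      _ = ((2 - τ) * 2) * 2 ^ k := by ring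
      _ ≤ (2 - (τ ^ 2 - 2)) * 2 ^ k := by
        gcongr
        nlinarith

theorem exists_titsInterior_of_abs_form_lt_one {g d : ι → ℝ} (hg : G.IsRoot g) (hd : G.IsRoot d)
    (hB : |G.form g d| < 1) : ∃ x ∈ G.titsInterior, x g = 0 ∧ x d = 0 := by
  obtain ⟨a, ha, ha2⟩ := hg.exists_ρ_eq_refl
  obtain ⟨b, hb, hb2⟩ := hd.exists_ρ_eq_refl
  have hsq : G.form g d ^ 2 < 1 := (sq_lt_one_iff_abs_lt_one _).mpr hB
  set τ := 4 * G.form g d ^ 2 - 2 with hτ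
  have hpos : 0 < 2 - τ := by linarith
  obtain ⟨k, hk⟩ := pow_unbounded_of_one_lt (2 / (2 - τ)) (one_lt_two : (1 : ℝ) < 2)
  rw [div_lt_iff₀' hpos] at hk
  have hrot : ∀ v, G.ρ (a * b) v = G.refl g (G.refl d v) := fun v => by
    rw [map_mul, Module.End.mul_apply, ha, hb]
  have hrot' : ∀ v, G.ρ (a * b)⁻¹ v = G.refl d (G.refl g v) := fun v => by
    rw [mul_inv_rev, inv_eq_of_mul_eq_one_left ha2, inv_eq_of_mul_eq_one_left hb2, map_mul,
      Module.End.mul_apply, ha, hb]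
  refine exists_titsInterior_of_add_inv_eq_smul (w := a * b) (by linarith) ?_ ?_ hk.le
  · rw [hrot, hrot', refl_self _ hg.form_self]
    simp only [refl_apply, map_sub, map_smul, map_neg, hg.form_self, G.form_comm d g, hτ]
    module
  · rw [hrot, hrot', refl_self _ hd.form_self]
    simp only [refl_apply, map_sub, map_smul, map_neg, hd.form_self, G.form_comm d g, hτ]
    module

theorem finite_posRootsOn_setOf_eq_zero {x : (ι → ℝ) →ₗ[ℝ] ℝ} (hx : x ∈ G.titsInterior) :
    (G.posRootsOn {s | x (α s) = 0}).Finite := by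
  refine (finite_setOf_isRoot_eq_zero hx).subset ?_
  rintro v ⟨hv, hsupp⟩
  refine ⟨hv.isRoot, ?_⟩
  rw [eq_sum_smul_simpleRoot v, map_sum]
  refine Finset.sum_eq_zero fun s _ => ?_
  rw [map_smul, smul_eq_mul]
  by_cases hs : x (α s) = 0
  · simp [hs]
  · simp [hsupp s hs]

theorem finite_roots_on {J : Set ι} (h : (G.posRootsOn J).Finite) :
    {u | G.IsRoot u ∧ u ∈ supportedOn J}.Finite := by
  refine (h.union (h.image Neg.neg)).subset ?_
  rintro u ⟨hu, hJ⟩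
  rcases hu.pos_or_neg with hpos | hpos
  · exact .inl ⟨hpos, hJ⟩
  · exact .inr ⟨-u, ⟨hpos, neg_mem hJ⟩, neg_neg u⟩

/-- The values of the form on pairs of roots supported on a common spherical set. There are
finitely many, and they include the values on all pairs of roots spanning an elliptic plane. -/
def sphericalValues (G : GeomRep cs) : Set ℝ :=
  ⋃ J ∈ {J : Set ι | (G.posRootsOn J).Finite},
    Set.image2 (fun u v => G.form u v) {u | G.IsRoot u ∧ u ∈ supportedOn J}
      {v | G.IsRoot v ∧ v ∈ supportedOn J}

theorem finite_sphericalValues : G.sphericalValues.Finite :=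
  (Set.toFinite _).biUnion fun _ hJ => (finite_roots_on hJ).image2 _ (finite_roots_on hJ)

theorem IsRoot.mem_supportedOn_of_apply_eq_zero {u : ι → ℝ} (hu : G.IsRoot u)
    {x : (ι → ℝ) →ₗ[ℝ] ℝ} (hx : ∀ v, 0 ≤ v → 0 ≤ x v) (h : x u = 0) :
    u ∈ supportedOn {s | x (α s) = 0} := by
  rcases hu.pos_or_neg with hpos | hpos
  · exact TwistRigid.mem_supportedOn_of_apply_eq_zero hx hpos.nonneg h
  · refine (Submodule.neg_mem_iff _).mp
      (TwistRigid.mem_supportedOn_of_apply_eq_zero hx hpos.nonneg ?_)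
    rw [map_neg, h, neg_zero]

theorem form_mem_sphericalValues {x : (ι → ℝ) →ₗ[ℝ] ℝ} (hx : x ∈ G.titsInterior) {u v : ι → ℝ}
    (hu : G.IsRoot u) (hv : G.IsRoot v) (hxu : x u = 0) (hxv : x v = 0) :
    G.form u v ∈ G.sphericalValues := by
  obtain ⟨w, hw⟩ := exists_forall_nonneg_comp_ρ hx
  have hsupp : ∀ v, G.IsRoot v → x v = 0 →
      G.ρ w⁻¹ v ∈ supportedOn {s | (x ∘ₗ G.ρ w) (α s) = 0} := fun v hv hxv =>
    (hv.ρ_apply w⁻¹).mem_supportedOn_of_apply_eq_zero (x := x ∘ₗ G.ρ w) hw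
      (by rw [LinearMap.comp_apply, ρ_apply_ρ_inv, hxv])
  exact Set.mem_biUnion (finite_posRootsOn_setOf_eq_zero (comp_ρ_mem_titsInterior hx w))
    ⟨_, ⟨hu.ρ_apply w⁻¹, hsupp u hu hxu⟩, _, ⟨hv.ρ_apply w⁻¹, hsupp v hv hxv⟩, G.form_ρ _ _ _⟩

theorem form_mem_sphericalValues_of_abs_lt_one {u v : ι → ℝ} (hu : G.IsRoot u) (hv : G.IsRoot v)
    (h : |G.form u v| < 1) : G.form u v ∈ G.sphericalValues := by
  obtain ⟨x, hx, hxu, hxv⟩ := exists_titsInterior_of_abs_form_lt_one hu hv h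
  exact form_mem_sphericalValues hx hu hv hxu hxv

theorem exists_pos_le_form (G : GeomRep cs) :
    ∃ ε : ℝ, 0 < ε ∧ ∀ u v, G.IsRoot u → G.IsRoot v → 0 < G.form u v → ε ≤ G.form u v := by
  have hfin : (insert 1 (G.sphericalValues ∩ Set.Ioi 0)).Finite :=
    (finite_sphericalValues.subset Set.inter_subset_left).insert 1
  obtain ⟨ε, hε, hmin⟩ := Set.exists_min_image _ id hfin ⟨1, .inl rfl⟩
  refine ⟨ε, ?_, fun u v hu hv hpos => ?_⟩
  · rcases hε with rfl | h
    · exact one_pos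
    · exact h.2
  · by_cases hlt : G.form u v < 1
    · exact hmin _ (.inr ⟨form_mem_sphericalValues_of_abs_lt_one hu hv (by rwa [abs_of_pos hpos]),
        hpos⟩)
    · exact (hmin 1 (.inl rfl)).trans (not_lt.mp hlt)

theorem IsPosRoot.exists_pos_form_simpleRoot {v : ι → ℝ} (h : G.IsPosRoot v) :
    ∃ s, 0 < v s ∧ 0 < G.form v (α s) := by
  by_contra! hcon
  have hnorm := h.isRoot.form_self
  rw [form_eq_sum_right] at hnorm
  have : ∑ t, v t * G.form v (α t) ≤ 0 := Finset.sum_nonpos fun t _ => by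
    rcases (h.nonneg t).eq_or_lt with h0 | hpos
    · simp [← h0]
    · exact mul_nonpos_of_nonneg_of_nonpos hpos.le (hcon t hpos)
  linarith

theorem height_refl_simpleRoot (v : ι → ℝ) (s : ι) :
    height (G.refl (α s) v) = height v - 2 * G.form v (α s) := by
  rw [refl_apply, map_sub, map_smul, height_simpleRoot, smul_eq_mul, mul_one]

theorem finite_setOf_height_le_one_add {ε : ℝ}
    (hε : ∀ u v, G.IsRoot u → G.IsRoot v → 0 < G.form u v → ε ≤ G.form u v) (n : ℕ) :
    {v | G.IsPosRoot v ∧ height v ≤ 1 + 2 * ε * n}.Finite := by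
  induction n with
  | zero =>
    refine (Set.finite_range (simpleRoot : ι → ι → ℝ)).subset ?_
    rintro v ⟨hv, hle⟩
    obtain ⟨s, -, hpos⟩ := hv.exists_pos_form_simpleRoot
    by_contra hne
    have hge := (hv.refl_simpleRoot fun he => hne ⟨s, he.symm⟩).one_le_height
    rw [height_refl_simpleRoot] at hge
    rw [Nat.cast_zero, mul_zero] at hle
    linarith
  | succ n ih =>
    refine ((Set.finite_range (simpleRoot : ι → ι → ℝ)).union
      (Set.finite_iUnion fun s => ih.image (G.refl (α s)))).subset ?_
    rintro v ⟨hv, hle⟩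
    obtain ⟨s, -, hpos⟩ := hv.exists_pos_form_simpleRoot
    by_cases he : v = α s
    · exact .inl ⟨s, he.symm⟩
    · refine .inr (Set.mem_iUnion.mpr ⟨s, G.refl (α s) v, ⟨hv.refl_simpleRoot he, ?_⟩,
        G.refl_simpleRoot_refl_simpleRoot s v⟩)
      rw [height_refl_simpleRoot]
      have := hε v (α s) hv.isRoot (G.isRoot_simpleRoot s) hpos
      push_cast at hle
      linarith

theorem finite_setOf_height_le (G : GeomRep cs) (h : ℝ) :
    {v | G.IsPosRoot v ∧ height v ≤ h}.Finite := by
  obtain ⟨ε, hε, hmin⟩ := G.exists_pos_le_form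
  obtain ⟨n, hn⟩ := exists_nat_gt (h / (2 * ε))
  refine (finite_setOf_height_le_one_add hmin n).subset fun v hv => ⟨hv.1, hv.2.trans ?_⟩
  rw [div_lt_iff₀' (by linarith)] at hn
  linarith

theorem IsPosRoot.induction {P : (ι → ℝ) → Prop} (base : ∀ s, P (α s))
    (step : ∀ v s, G.IsPosRoot v → v ≠ α s → 0 < v s → 0 < G.form v (α s) →
      G.IsPosRoot (G.refl (α s) v) → P (G.refl (α s) v) → P v) {v : ι → ℝ} (hv : G.IsPosRoot v) :
    P v := by
  induction hN : {u | G.IsPosRoot u ∧ height u ≤ height v}.ncard using Nat.strong_induction_on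
    generalizing v with
  | _ N ih =>
    obtain ⟨s, hs, hpos⟩ := hv.exists_pos_form_simpleRoot
    by_cases he : v = α s
    · exact he ▸ base s
    have hv' := hv.refl_simpleRoot he
    have hlt : height (G.refl (α s) v) < height v := by
      rw [height_refl_simpleRoot]
      linarith
    refine step v s hv he hs hpos hv' (ih _ ?_ hv' rfl)
    rw [← hN]
    refine Set.ncard_lt_ncard ⟨fun u hu => ⟨hu.1, hu.2.trans hlt.le⟩, fun hsub => ?_⟩
      (G.finite_setOf_height_le _)
    exact hlt.not_ge (hsub ⟨hv, le_rfl⟩).2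

theorem exists_ρ_simpleRoot_of_mem_posRootsOn {K : Set ι} {v : ι → ℝ} (hv : v ∈ G.posRootsOn K) :
    ∃ w ∈ parabolic cs K, ∃ s ∈ K, v = G.ρ w (α s) := by
  refine IsPosRoot.induction (G := G) (P := fun v => v ∈ supportedOn K →
    ∃ w ∈ parabolic cs K, ∃ s ∈ K, v = G.ρ w (α s)) ?_ ?_ hv.1 hv.2
  · exact fun s hs => ⟨1, one_mem _, s, mem_of_mem_supportedOn hs (by simp), by simp⟩
  · intro v s _ _ hs _ _ ih hK
    have hsK : s ∈ K := mem_of_mem_supportedOn hK hs.ne'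
    obtain ⟨w, hw, t, ht, he⟩ := ih (refl_simpleRoot_mem_supportedOn hsK hK)
    refine ⟨cs.simple s * w, mul_mem (simple_mem_parabolic cs hsK) hw, t, ht, ?_⟩
    rw [map_mul, Module.End.mul_apply, ← he, ρ_simple, refl_simpleRoot_refl_simpleRoot]

theorem finite_posRootsOn_of_finite_parabolic {K : Set ι} (h : (parabolic cs K : Set W).Finite) :
    (G.posRootsOn K).Finite := by
  refine (Set.Finite.image2 (fun w s => G.ρ w (α s)) h K.toFinite).subset fun v hv => ?_
  obtain ⟨w, hw, s, hs, rfl⟩ := exists_ρ_simpleRoot_of_mem_posRootsOn hv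
  exact ⟨w, hw, s, hs, rfl⟩

end GeomRep

/-! ### Finite subgroups -/

namespace GeomRep

variable {ι W : Type*} [Fintype ι] [DecidableEq ι] [Group W] {M : CoxeterMatrix ι}
  {cs : CoxeterSystem M W} {G : GeomRep cs}

theorem exists_titsInterior_comp_ρ_eq (G : GeomRep cs) (H : Subgroup W) [Finite H] :
    ∃ x ∈ G.titsInterior, ∀ w ∈ H, x ∘ₗ G.ρ w = x := by
  cases nonempty_fintype H
  refine ⟨∑ h : H, height ∘ₗ G.ρ h, ?_, fun w hw => ?_⟩
  · exact Finset.sum_induction_nonempty _ (· ∈ G.titsInterior)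
      (fun a b ha hb => add_mem_titsInterior ha hb) Finset.univ_nonempty
      fun h _ => comp_ρ_mem_titsInterior height_mem_titsInterior _
  · calc (∑ h : H, height ∘ₗ G.ρ h) ∘ₗ G.ρ w
        = ∑ h : H, height ∘ₗ G.ρ ((h * ⟨w, hw⟩ : H) : W) :=
          LinearMap.ext fun v => by simp [map_mul]
      _ = ∑ h : H, height ∘ₗ G.ρ h :=
          Fintype.sum_equiv (Equiv.mulRight (⟨w, hw⟩ : H)) _ _ fun h => rfl

theorem apply_eq_zero_of_comp_refl_eq {x : (ι → ℝ) →ₗ[ℝ] ℝ} {g : ι → ℝ} (hg : G.IsRoot g)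
    (h : x ∘ₗ G.refl g = x) : x g = 0 := by
  have := LinearMap.congr_fun h g
  rw [LinearMap.comp_apply, refl_self _ hg.form_self, map_neg] at this
  linarith

section PosDef

variable {K : Set ι}

theorem form_mem_insert_sphericalValues {u v : ι → ℝ} (hu : G.IsRoot u) (hv : G.IsRoot v)
    (hadd : 0 ≤ G.form (u + v) (u + v)) (hsub : 0 ≤ G.form (u - v) (u - v)) :
    G.form u v ∈ insert 1 (insert (-1) G.sphericalValues) := by
  simp only [map_add, map_sub, LinearMap.add_apply, LinearMap.sub_apply, hu.form_self,
    hv.form_self, G.form_comm v u] at hadd hsub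
  rw [Set.mem_insert_iff, Set.mem_insert_iff, or_iff_not_imp_left, or_iff_not_imp_left]
  exact fun h₁ h₂ => form_mem_sphericalValues_of_abs_lt_one hu hv
    (abs_lt.mpr ⟨lt_of_le_of_ne (by linarith) (Ne.symm h₂), lt_of_le_of_ne (by linarith) h₁⟩)

theorem finite_posRootsOn_of_forall_form_pos
    (h : ∀ v ∈ supportedOn K, v ≠ 0 → 0 < G.form v v) : (G.posRootsOn K).Finite := by
  have hnn : ∀ v ∈ supportedOn K, 0 ≤ G.form v v := by
    intro v hv
    rcases eq_or_ne v 0 with rfl | h0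
    · simp
    · exact (h v hv h0).le
  refine Set.Finite.of_finite_image (f := fun (u : ι → ℝ) (s : K) => G.form u (α s)) ?_ ?_
  · refine (Set.Finite.pi fun _ : K =>
      ((finite_sphericalValues (G := G)).insert (-1)).insert 1).subset ?_
    rintro _ ⟨u, ⟨hu, hK⟩, rfl⟩ s _
    have hs : α (s : ι) ∈ supportedOn K := simpleRoot_mem_supportedOn s.2
    exact form_mem_insert_sphericalValues hu.isRoot (G.isRoot_simpleRoot s)
      (hnn _ (add_mem hK hs)) (hnn _ (sub_mem hK hs))
  · intro u hu v hv huv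
    by_contra hne
    have hK : u - v ∈ supportedOn K := sub_mem hu.2 hv.2
    refine (h _ hK (sub_ne_zero.mpr hne)).ne' ?_
    rw [form_eq_sum_right]
    refine Finset.sum_eq_zero fun t _ => ?_
    by_cases ht : t ∈ K
    · rw [map_sub, LinearMap.sub_apply, sub_eq_zero.mpr (congrFun huv ⟨t, ht⟩), mul_zero]
    · rw [hK t ht, zero_mul]

theorem form_self_eq_sum_sq (G : GeomRep cs) {y z p : ι → ℝ} (hy : ∀ i, y i = z i * p i) :
    G.form y y = ∑ i, G.form p (α i) * p i * z i ^ 2 +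
      (1 / 2) * ∑ i, ∑ j, -G.gram i j * p i * p j * (z i - z j) ^ 2 := by
  have hdiag : ∑ i, G.form p (α i) * p i * z i ^ 2 =
      ∑ i, ∑ j, G.gram i j * p i * p j * z i ^ 2 := by
    refine Finset.sum_congr rfl fun i _ => ?_
    rw [form_simpleRoot_right, Finset.sum_mul, Finset.sum_mul]
    refine Finset.sum_congr rfl fun j _ => ?_
    rw [G.gram_comm j i]
    ring
  have hswap : ∑ i, ∑ j, G.gram i j * p i * p j * z j ^ 2 =
      ∑ i, ∑ j, G.gram i j * p i * p j * z i ^ 2 := by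
    rw [Finset.sum_comm]
    refine Finset.sum_congr rfl fun i _ => Finset.sum_congr rfl fun j _ => ?_
    rw [G.gram_comm]
    ring
  have hoff : ∑ i, ∑ j, -G.gram i j * p i * p j * (z i - z j) ^ 2 =
      2 * G.form y y - ∑ i, ∑ j, G.gram i j * p i * p j * z i ^ 2
        - ∑ i, ∑ j, G.gram i j * p i * p j * z j ^ 2 := by
    rw [form_apply, Finset.mul_sum, ← Finset.sum_sub_distrib, ← Finset.sum_sub_distrib]
    refine Finset.sum_congr rfl fun i _ => ?_
    rw [Finset.mul_sum, ← Finset.sum_sub_distrib, ← Finset.sum_sub_distrib]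
    refine Finset.sum_congr rfl fun j _ => ?_
    rw [hy i, hy j]
    ring
  rw [hdiag, hoff, hswap]
  ring

variable {p : ι → ℝ}

theorem form_self_nonneg_and_eq_of_form_self_eq_zero (hp : ∀ i ∈ K, 0 < p i)
    (hpK : p ∈ supportedOn K) (hnn : ∀ i ∈ K, 0 ≤ G.form p (α i)) {y z : ι → ℝ}
    (hy : ∀ i, y i = z i * p i) :
    0 ≤ G.form y y ∧ (G.form y y = 0 → ∀ i ∈ K, (0 < G.form p (α i) → z i = 0) ∧
      ∀ j ∈ K, G.gram i j ≠ 0 → z i = z j) := by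
  have hp0 : ∀ i, 0 ≤ p i := fun i => by
    by_cases hi : i ∈ K
    · exact (hp i hi).le
    · rw [hpK i hi]
  have hdiag : ∀ i ∈ Finset.univ, 0 ≤ G.form p (α i) * p i * z i ^ 2 := fun i _ => by
    by_cases hi : i ∈ K
    · exact mul_nonneg (mul_nonneg (hnn i hi) (hp0 i)) (sq_nonneg _)
    · simp [hpK i hi]
  have hoff : ∀ i, ∀ j ∈ Finset.univ, 0 ≤ -G.gram i j * p i * p j * (z i - z j) ^ 2 :=
    fun i j _ => by
      rcases eq_or_ne i j with rfl | hij
      · simp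
      · exact mul_nonneg (mul_nonneg (mul_nonneg (neg_nonneg.mpr (G.gram_nonpos hij)) (hp0 i))
          (hp0 j)) (sq_nonneg _)
  have hoffSum : ∀ i ∈ Finset.univ, 0 ≤ ∑ j, -G.gram i j * p i * p j * (z i - z j) ^ 2 :=
    fun i _ => Finset.sum_nonneg (hoff i)
  have hsum := Finset.sum_nonneg hdiag
  have hsum' := Finset.sum_nonneg hoffSum
  rw [G.form_self_eq_sum_sq hy]
  refine ⟨by linarith, fun h0 i hi => ⟨fun hpos => ?_, fun j hj hij => ?_⟩⟩
  · have := (Finset.sum_eq_zero_iff_of_nonneg hdiag).mp (by linarith) i (Finset.mem_univ i)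
    simpa [hpos.ne', (hp i hi).ne'] using this
  · have hi0 := (Finset.sum_eq_zero_iff_of_nonneg hoffSum).mp (by linarith) i (Finset.mem_univ i)
    have := (Finset.sum_eq_zero_iff_of_nonneg (hoff i)).mp hi0 j (Finset.mem_univ j)
    simpa [hij, (hp i hi).ne', (hp j hj).ne', sub_eq_zero] using this

theorem form_self_pos_of_forall_exists_form_pos (hp : ∀ i ∈ K, 0 < p i)
    (hpK : p ∈ supportedOn K) (hnn : ∀ i ∈ K, 0 ≤ G.form p (α i))
    (hpos : ∀ L ⊆ K, L.Nonempty → (∀ i ∈ L, ∀ j ∈ K \ L, G.gram i j = 0) →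
      ∃ i ∈ L, 0 < G.form p (α i)) {y : ι → ℝ} (hy : y ∈ supportedOn K) (hne : y ≠ 0) :
    0 < G.form y y := by
  have hyz : ∀ i, y i = y i / p i * p i := fun i => by
    by_cases hi : i ∈ K
    · rw [div_mul_cancel₀ _ (hp i hi).ne']
    · simp [hy i hi]
  obtain ⟨hge, heq⟩ := form_self_nonneg_and_eq_of_form_self_eq_zero hp hpK hnn hyz
  refine hge.lt_of_ne' fun h0 => ?_
  obtain ⟨i₀, hi₀⟩ := Function.ne_iff.mp hne
  obtain ⟨i, ⟨hiK, hiz⟩, hi⟩ := hpos {i | i ∈ K ∧ y i / p i = y i₀ / p i₀} (fun i hi => hi.1)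
    ⟨i₀, mem_of_mem_supportedOn hy hi₀, rfl⟩ fun i hi j hj => by
      by_contra hij
      exact hj.2 ⟨hj.1, ((heq h0 i hi.1).2 j hj.1 hij).symm.trans hi.2⟩
  refine hi₀ ?_
  rw [hyz, ← hiz, (heq h0 i hiK).1 hi, zero_mul, Pi.zero_apply]

end PosDef

section Antidominant

variable {K : Set ι} {d : ι → ℝ}

theorem ρ_sub_nonneg_of_form_nonpos (hd : ∀ s ∈ K, G.form d (α s) ≤ 0) {w : W}
    (hw : w ∈ parabolic cs K) : 0 ≤ G.ρ w d - d := by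
  refine parabolic_induction G (P := fun w => 0 ≤ G.ρ w d - d) (by simp) ?_ hw
  intro w _ s hs hp _ ih
  have hstep : G.ρ (w * cs.simple s) d - d =
      (G.ρ w d - d) + (-2 * G.form d (α s)) • G.ρ w (α s) := by
    rw [map_mul, Module.End.mul_apply, ρ_simple, refl_apply, map_sub, map_smul]
    module
  rw [hstep]
  exact add_nonneg ih (smul_nonneg (by linarith [hd s hs]) hp.nonneg)

theorem sub_ρ_nonneg_of_form_nonneg (hd : ∀ s ∈ K, 0 ≤ G.form d (α s)) {w : W}
    (hw : w ∈ parabolic cs K) : 0 ≤ d - G.ρ w d := by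
  have := ρ_sub_nonneg_of_form_nonpos (d := -d) (fun s hs => by
    rw [map_neg, LinearMap.neg_apply]
    exact neg_nonpos.mpr (hd s hs)) hw
  rwa [map_neg, neg_sub_neg] at this

theorem ρ_eq_self_of_form_nonneg {w : W} (hw : w ∈ parabolic cs K)
    (hd : ∀ s ∈ K, 0 ≤ G.form d (α s)) (hd' : ∀ s ∈ K, 0 ≤ G.form (G.ρ w d) (α s)) :
    G.ρ w d = d := by
  have h := sub_ρ_nonneg_of_form_nonneg hd' (inv_mem hw)
  rw [ρ_inv_apply_ρ] at h
  exact le_antisymm (sub_nonneg.mp (sub_ρ_nonneg_of_form_nonneg hd hw)) (sub_nonneg.mp h)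

theorem exists_parabolic_form_add_nonpos (K : Set ι) {g : ι → ℝ} (hg : G.IsPosRoot g)
    (hd : G.IsPosRoot d) (hB : G.form g d ≤ -1) :
    ∃ w ∈ parabolic cs K, G.IsPosRoot (G.ρ w g) ∧ G.IsPosRoot (G.ρ w d) ∧
      ∀ s ∈ K, G.form (G.ρ w g + G.ρ w d) (α s) ≤ 0 := by
  set T : Set ((ι → ℝ) × (ι → ℝ)) := {p | (∃ w ∈ parabolic cs K, p = (G.ρ w g, G.ρ w d)) ∧
    G.IsPosRoot p.1 ∧ G.IsPosRoot p.2 ∧ height p.1 + height p.2 ≤ height g + height d}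
  have hfin : T.Finite := by
    refine ((G.finite_setOf_height_le (height g + height d)).prod
      (G.finite_setOf_height_le (height g + height d))).subset ?_
    rintro p ⟨-, h₁, h₂, hle⟩
    exact ⟨⟨h₁, by linarith [h₂.one_le_height]⟩, ⟨h₂, by linarith [h₁.one_le_height]⟩⟩
  obtain ⟨_, ⟨⟨w, hw, rfl⟩, h₁, h₂, hle⟩, hmin⟩ := Set.exists_min_image T
    (fun p => height p.1 + height p.2) hfin ⟨(g, d), ⟨1, one_mem _, by simp⟩, hg, hd, le_rfl⟩
  refine ⟨w, hw, h₁, h₂, fun s hs => ?_⟩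
  by_contra! hcon
  rw [map_add, LinearMap.add_apply] at hcon
  rw [← G.form_ρ w] at hB
  have hne₁ : G.ρ w g ≠ α s := fun h => by
    rw [h, G.form_comm] at hB
    rw [h, form_simpleRoot, gram_self] at hcon
    linarith
  have hne₂ : G.ρ w d ≠ α s := fun h => by
    rw [h] at hB
    rw [h, form_simpleRoot, gram_self] at hcon
    linarith
  have hρ : ∀ u, G.ρ (cs.simple s * w) u = G.refl (α s) (G.ρ w u) := fun u => by
    rw [map_mul, Module.End.mul_apply, ρ_simple]
  have hheight := height_refl_simpleRoot (G := G) (G.ρ w g) s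
  have hheight' := height_refl_simpleRoot (G := G) (G.ρ w d) s
  have := hmin (G.refl (α s) (G.ρ w g), G.refl (α s) (G.ρ w d))
    ⟨⟨_, mul_mem (simple_mem_parabolic cs hs) hw, by rw [hρ, hρ]⟩, h₁.refl_simpleRoot hne₁,
      h₂.refl_simpleRoot hne₂, by dsimp only at hle ⊢; linarith⟩
  dsimp only at this
  linarith

end Antidominant

/-- The vectors on which every functional in the interior of the Tits cone is positive: the
interior of the dual of the Tits cone, also called the imaginary cone. -/
def titsDual (G : GeomRep cs) : Set (ι → ℝ) := {y | ∀ x ∈ G.titsInterior, 0 < x y}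

theorem ρ_mem_titsDual {y : ι → ℝ} (hy : y ∈ G.titsDual) (w : W) : G.ρ w y ∈ G.titsDual :=
  fun _ hx => hy _ (comp_ρ_mem_titsInterior hx w)

theorem nonneg_of_mem_titsDual {y : ι → ℝ} (hy : y ∈ G.titsDual) : 0 ≤ y := by
  intro s
  by_contra! h
  rw [Pi.zero_apply] at h
  have hheight := hy _ height_mem_titsInterior
  have hpos := hy _ (height_add_smul_proj_mem_titsInterior (G := G) s (n := height y / -y s)
    (div_nonneg hheight.le (neg_nonneg.mpr h.le)))
  simp only [LinearMap.add_apply, LinearMap.smul_apply, LinearMap.proj_apply, smul_eq_mul] at hpos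
  have : height y / -y s * y s = -height y := by
    have := h.ne
    field_simp
  linarith

section HyperbolicPairs

variable {g d : ι → ℝ}

theorem apply_add_ne_zero (hg : G.IsRoot g) (hd : G.IsRoot d) (hB : G.form g d ≤ -1)
    (hne : g + d ≠ 0) {x : (ι → ℝ) →ₗ[ℝ] ℝ} (hx : x ∈ G.titsInterior) : x (g + d) ≠ 0 := by
  intro h
  rw [map_add] at h
  have hy : G.wallProj g x + G.wallProj d x + (-2 * G.form g d - 2) • x ∈ G.titsInterior :=
    add_smul_mem_titsInterior (add_mem_titsInterior (wallProj_mem_titsInterior hx hg)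
      (wallProj_mem_titsInterior hx hd)) hx (by linarith)
  have hxd : x d = -x g := by linarith
  refine false_of_apply_eq_zero hg hd hB hne hy ?_ ?_
  · simp only [LinearMap.add_apply, LinearMap.smul_apply, wallProj_apply, hg.form_self,
      smul_eq_mul, hxd]
    ring
  · simp only [LinearMap.add_apply, LinearMap.smul_apply, wallProj_apply, hd.form_self,
      smul_eq_mul, hxd, G.form_comm d g]
    ring

theorem mem_titsDual_or_neg_mem_titsDual {y : ι → ℝ} (h : ∀ x ∈ G.titsInterior, x y ≠ 0) :
    y ∈ G.titsDual ∨ -y ∈ G.titsDual := by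
  by_contra! hcon
  simp only [titsDual, Set.mem_ofPred_eq, not_forall, not_lt, map_neg, Left.neg_nonpos_iff] at hcon
  obtain ⟨⟨x, hx, hxy⟩, z, hz, hzy⟩ := hcon
  have hxy' := hxy.lt_of_ne (h x hx)
  have hzy' := hzy.lt_of_ne' (h z hz)
  refine h _ (add_mem_titsInterior (smul_mem_titsInterior hx hzy')
    (smul_mem_titsInterior hz (neg_pos.mpr hxy'))) ?_
  simp only [LinearMap.add_apply, LinearMap.smul_apply, smul_eq_mul]
  ring

theorem add_mem_titsDual_or_neg (hg : G.IsRoot g) (hd : G.IsRoot d) (hB : G.form g d ≤ -1)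
    (hne : g + d ≠ 0) : g + d ∈ G.titsDual ∨ -(g + d) ∈ G.titsDual :=
  mem_titsDual_or_neg_mem_titsDual fun _ hx => apply_add_ne_zero hg hd hB hne hx

theorem form_add_nonpos_of_mem_titsDual {y : ι → ℝ} (hg : G.IsRoot g) (hd : G.IsRoot d)
    (hB : G.form g d ≤ -1) (hgd : g + d ∈ G.titsDual) (hy : y ∈ G.titsDual) :
    G.form (g + d) y ≤ 0 := by
  have hdU := wallProj_mem_titsInterior height_mem_titsInterior hd
  have hgU := wallProj_mem_titsInterior height_mem_titsInterior hg
  have hdpos := hgd _ hdU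
  have hgpos := hgd _ hgU
  rw [map_add, wallProj_apply_self hd, add_zero] at hdpos
  rw [map_add, wallProj_apply_self hg, zero_add] at hgpos
  obtain ⟨w, hw⟩ := exists_forall_nonneg_comp_ρ (add_mem_titsInterior hdU hgU)
  have hpos : ∀ u, G.IsRoot u → 0 < (G.wallProj d height + G.wallProj g height) u →
      G.IsPosRoot (G.ρ w⁻¹ u) := by
    intro u hu hxu
    refine (hu.ρ_apply w⁻¹).pos_or_neg.resolve_right fun h => ?_
    have := hw _ h.nonneg
    rw [map_neg, ρ_apply_ρ_inv, map_neg] at this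
    linarith
  obtain ⟨w', -, -, -, hanti⟩ := exists_parabolic_form_add_nonpos Set.univ
    (hpos g hg (by rwa [LinearMap.add_apply, wallProj_apply_self hg, add_zero]))
    (hpos d hd (by rwa [LinearMap.add_apply, wallProj_apply_self hd, zero_add]))
    (by rwa [form_ρ])
  rw [← map_add, ← map_add] at hanti
  rw [← G.form_ρ w⁻¹, ← G.form_ρ w', form_eq_sum_right]
  exact Finset.sum_nonpos fun t _ => mul_nonpos_of_nonneg_of_nonpos
    (nonneg_of_mem_titsDual (ρ_mem_titsDual (ρ_mem_titsDual hy _) _) t) (hanti t trivial)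

end HyperbolicPairs

end GeomRep

open GeomRep

/- An element of finite order fixes an interior point of the Tits cone; moving that point to the
fundamental chamber, every inversion of the conjugated element is supported on the spherical set of
walls containing it. -/
theorem GeomRep.exists_conj_length_le_of_isOfFinOrder {ι W : Type*} [Finite ι] [Group W]
    {M : CoxeterMatrix ι} {cs : CoxeterSystem M W} (G : GeomRep cs) :
    ∃ n : ℕ, ∀ g : W, IsOfFinOrder g → ∃ w : W, cs.length (w⁻¹ * g * w) ≤ n := by
  classical
  cases nonempty_fintype ι
  refine ⟨∑ J : Set ι, (G.posRootsOn J).ncard, fun g hg => ?_⟩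
  have : Finite (Subgroup.zpowers g) := (finite_zpowers.mpr hg).to_subtype
  obtain ⟨x, hx, hfix⟩ := G.exists_titsInterior_comp_ρ_eq (Subgroup.zpowers g)
  have hxg : ∀ v, x (G.ρ g v) = x v := LinearMap.congr_fun (hfix g (Subgroup.mem_zpowers g))
  obtain ⟨w, hw⟩ := exists_forall_nonneg_comp_ρ hx
  refine ⟨w, (GeomRep.length_le_ncard_inversionSet (G := G) _).trans ?_⟩
  refine (Set.ncard_le_ncard ?_ (finite_posRootsOn_setOf_eq_zero
    (comp_ρ_mem_titsInterior hx w))).trans (Finset.single_le_sum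
      (f := fun J : Set ι => (G.posRootsOn J).ncard) (fun _ _ => Nat.zero_le _)
      (Finset.mem_univ _))
  rintro v ⟨hv, hinv⟩
  refine ⟨hv, TwistRigid.mem_supportedOn_of_apply_eq_zero hw hv.nonneg
    (le_antisymm ?_ (hw v hv.nonneg))⟩
  have hconj : G.ρ w (G.ρ (w⁻¹ * g * w) v) = G.ρ g (G.ρ w v) := by
    simp only [map_mul, Module.End.mul_apply, ρ_apply_ρ_inv]
  have hneg := hw _ hinv.nonneg
  rw [map_neg, map_neg, hconj, hxg] at hneg
  rw [LinearMap.comp_apply]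
  linarith

/-! ### Angle-preserving linear maps realizing an automorphism -/

/-- Irreducibility of a nonempty set `K` of generators: no proper nonempty subset of `K` commutes
with its complement in `K`. -/
def IsIrreducible {ι : Type*} (M : CoxeterMatrix ι) (K : Set ι) : Prop :=
  K.Nonempty ∧ ∀ L ⊆ K, L.Nonempty → (∀ i ∈ L, ∀ j ∈ K, j ∉ L → M i j = 2) → K ⊆ L

section Realizations

variable {ι W : Type*} [Fintype ι] [DecidableEq ι] [Group W] {M : CoxeterMatrix ι}
  {cs : CoxeterSystem M W}

namespace GeomRep

variable (G : GeomRep cs)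

theorem ρ_conj_eq_refl {g : W} {v : ι → ℝ} (hg : G.ρ g = G.refl v) (w : W) :
    G.ρ (w * g * w⁻¹) = G.refl (G.ρ w v) := by
  refine LinearMap.ext fun u => ?_
  rw [map_mul, map_mul, Module.End.mul_apply, Module.End.mul_apply, hg, refl_apply, refl_apply,
    map_sub, map_smul, ρ_apply_ρ_inv, ← G.form_ρ w, ρ_apply_ρ_inv]

theorem refl_neg_root (v : ι → ℝ) : G.refl (-v) = G.refl v := by
  refine LinearMap.ext fun u => ?_
  rw [refl_apply, refl_apply, map_neg, smul_neg, mul_neg, neg_smul, neg_neg]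

end GeomRep

section Realizes

/-- The linear map `φ` realizes the automorphism `a`: it sends each simple root `α s` to a root
whose reflection is `a s`. -/
structure Realizes (G : GeomRep cs) (a : MulAut W) (φ : (ι → ℝ) →ₗ[ℝ] (ι → ℝ)) : Prop where
  isRoot : ∀ s, G.IsRoot (φ (α s))
  ρ_simple : ∀ s, G.ρ (a (cs.simple s)) = G.refl (φ (α s))

/-- The map `φ` is an isometry from the span of the simple roots in `K`, with the form of `D`, to
the form of `G`. -/
def IsometricOn (D G : GeomRep cs) (φ : (ι → ℝ) →ₗ[ℝ] (ι → ℝ)) (K : Set ι) : Prop :=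
  ∀ s ∈ K, ∀ t ∈ K, G.form (φ (α s)) (φ (α t)) = D.gram s t

/-- For every functional `x` in the interior of the Tits cone, `ε * x ∘ φ` is negative on only
finitely many positive roots supported on `K`. The sign `ε` is meant to be `1` or `-1`. -/
def AlmostPositiveOn (D G : GeomRep cs) (φ : (ι → ℝ) →ₗ[ℝ] (ι → ℝ)) (K : Set ι) (ε : ℝ) : Prop :=
  ∀ x ∈ G.titsInterior, {g | g ∈ D.posRootsOn K ∧ ε * x (φ g) < 0}.Finite

variable {D G : GeomRep cs} {a : MulAut W} {φ : (ι → ℝ) →ₗ[ℝ] (ι → ℝ)} {K : Set ι}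

theorem Realizes.neg (P : Realizes G a φ) : Realizes G a (-φ) where
  isRoot s := (P.isRoot s).neg
  ρ_simple s := by rw [LinearMap.neg_apply, refl_neg_root, P.ρ_simple s]

theorem IsometricOn.neg (h : IsometricOn D G φ K) : IsometricOn D G (-φ) K := by
  intro s hs t ht
  simpa using h s hs t ht

theorem IsometricOn.mono {L : Set ι} (h : IsometricOn D G φ L) (hKL : K ⊆ L) :
    IsometricOn D G φ K :=
  fun s hs t ht => h s (hKL hs) t (hKL ht)

theorem IsometricOn.form_simpleRoot (h : IsometricOn D G φ K) {u : ι → ℝ} (hu : u ∈ supportedOn K)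
    {t : ι} (ht : t ∈ K) : G.form (φ u) (φ (α t)) = D.form u (α t) := by
  conv_lhs => rw [eq_sum_smul_simpleRoot u]
  rw [map_sum, map_sum, LinearMap.sum_apply, form_simpleRoot_right]
  refine Finset.sum_congr rfl fun s _ => ?_
  by_cases hs : s ∈ K
  · simp [h s hs t ht]
  · simp [hu s hs]

theorem IsometricOn.form_map (h : IsometricOn D G φ K) {u v : ι → ℝ} (hu : u ∈ supportedOn K)
    (hv : v ∈ supportedOn K) : G.form (φ u) (φ v) = D.form u v := by
  conv_lhs => rw [eq_sum_smul_simpleRoot v]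
  rw [map_sum, map_sum, D.form_eq_sum_right]
  refine Finset.sum_congr rfl fun s _ => ?_
  by_cases hs : s ∈ K
  · rw [map_smul, map_smul, smul_eq_mul, h.form_simpleRoot hu hs]
  · simp [hv s hs]

theorem Realizes.map_ρ (P : Realizes G a φ) (h : IsometricOn D G φ K) {w : W}
    (hw : w ∈ parabolic cs K) {v : ι → ℝ} (hv : v ∈ supportedOn K) :
    φ (D.ρ w v) = G.ρ (a w) (φ v) := by
  refine parabolic_induction D
    (P := fun w => ∀ v ∈ supportedOn K, φ (D.ρ w v) = G.ρ (a w) (φ v)) (by simp) ?_ hw v hv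
  intro w _ s hs _ _ ih v hv
  rw [map_mul, map_mul, map_mul, Module.End.mul_apply, Module.End.mul_apply, D.ρ_simple,
    P.ρ_simple, ih _ (refl_simpleRoot_mem_supportedOn hs hv), refl_apply, refl_apply, map_sub,
    map_smul, h.form_simpleRoot hv hs]

theorem Realizes.exists_ρ_eq_refl (P : Realizes G a φ) (h : IsometricOn D G φ K) {v : ι → ℝ}
    (hv : v ∈ D.posRootsOn K) :
    ∃ r ∈ parabolic cs K, D.ρ r = D.refl v ∧ G.ρ (a r) = G.refl (φ v) := by
  obtain ⟨w, hw, s, hs, rfl⟩ := exists_ρ_simpleRoot_of_mem_posRootsOn hv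
  refine ⟨w * cs.simple s * w⁻¹,
    mul_mem (mul_mem hw (simple_mem_parabolic cs hs)) (inv_mem hw),
    D.ρ_conj_eq_refl (D.ρ_simple s) w, ?_⟩
  rw [P.map_ρ h hw (simpleRoot_mem_supportedOn hs), map_mul a, map_mul a, map_inv a]
  exact G.ρ_conj_eq_refl (P.ρ_simple s) _

theorem Realizes.isRoot_map (P : Realizes G a φ) (h : IsometricOn D G φ K) {v : ι → ℝ}
    (hv : v ∈ D.posRootsOn K) : G.IsRoot (φ v) := by
  obtain ⟨w, hw, s, hs, rfl⟩ := exists_ρ_simpleRoot_of_mem_posRootsOn hv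
  rw [P.map_ρ h hw (simpleRoot_mem_supportedOn hs)]
  exact (P.isRoot s).ρ_apply _

theorem Realizes.eq_of_map_eq_or_neg (P : Realizes G a φ) (h : IsometricOn D G φ K) {u v : ι → ℝ}
    (hu : u ∈ D.posRootsOn K) (hv : v ∈ D.posRootsOn K) (he : φ u = φ v ∨ φ u = -φ v) :
    u = v := by
  obtain ⟨r, -, hru, haru⟩ := P.exists_ρ_eq_refl h hu
  obtain ⟨r', -, hrv, harv⟩ := P.exists_ρ_eq_refl h hv
  have hrefl : G.refl (φ u) = G.refl (φ v) := by
    rcases he with he | he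
    · rw [he]
    · rw [he, refl_neg_root]
  rw [← haru, ← harv] at hrefl
  rw [a.injective (ρ_injective hrefl), hrv] at hru
  rcases eq_or_eq_neg_of_refl_eq hv.1.isRoot hu.1.isRoot hru with heq | heq
  · exact heq.symm
  · exact (hu.1.not_neg (heq ▸ hv.1)).elim

theorem Realizes.injOn (P : Realizes G a φ) (h : IsometricOn D G φ K) :
    Set.InjOn φ (D.posRootsOn K) :=
  fun _ hu _ hv he => P.eq_of_map_eq_or_neg h hu hv (.inl he)

theorem Realizes.add_mem_titsDual_or_neg (P : Realizes G a φ) (h : IsometricOn D G φ K)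
    {u v : ι → ℝ} (hu : u ∈ D.posRootsOn K) (hv : v ∈ D.posRootsOn K) (hB : D.form u v ≤ -1) :
    φ u + φ v ∈ G.titsDual ∨ -(φ u + φ v) ∈ G.titsDual := by
  refine GeomRep.add_mem_titsDual_or_neg (P.isRoot_map h hu) (P.isRoot_map h hv)
    (by rwa [h.form_map hu.2 hv.2]) fun h0 => ?_
  rw [P.eq_of_map_eq_or_neg h hu hv (.inr (eq_neg_of_add_eq_zero_left h0)),
    hv.1.isRoot.form_self] at hB
  linarith

end Realizes

section Irreducible

variable {D : GeomRep cs} {K : Set ι}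

theorem form_simpleRoot_neg_of_pos {y : ι → ℝ} (hy : 0 ≤ y) {s t : ι} (hs : y s = 0) (ht : 0 < y t)
    (hM : M t s ≠ 2) : D.form y (α s) < 0 := by
  have hne : t ≠ s := by
    rintro rfl
    exact ht.ne' hs
  rw [form_simpleRoot_right]
  refine Finset.sum_neg' (fun i _ => ?_) ⟨t, Finset.mem_univ _, mul_neg_of_pos_of_neg ht
    ((D.gram_nonpos hne).lt_of_ne fun h => hM ((D.gram_eq_zero_iff hne).mp h))⟩
  rcases eq_or_ne i s with rfl | hi
  · rw [hs, zero_mul]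
  · exact mul_nonpos_of_nonneg_of_nonpos (hy i) (D.gram_nonpos hi)

theorem IsIrreducible.pos_of_form_nonneg (hI : IsIrreducible M K) {y : ι → ℝ} (hy : 0 < y)
    (hK : y ∈ supportedOn K) (hB : ∀ s ∈ K, 0 ≤ D.form y (α s)) {s : ι} (hs : s ∈ K) : 0 < y s := by
  obtain ⟨hnn, t, ht⟩ := Pi.lt_def.mp hy
  refine (hI.2 {s | s ∈ K ∧ 0 < y s} (fun s h => h.1)
    ⟨t, mem_of_mem_supportedOn hK ht.ne', ht⟩ ?_ hs).2
  rintro i ⟨_, hyi⟩ j hj hj'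
  by_contra hM
  have hj0 : y j = 0 := le_antisymm (not_lt.mp fun h => hj' ⟨hj, h⟩) (hnn j)
  exact (form_simpleRoot_neg_of_pos (D := D) hnn hj0 hyi hM).not_ge (hB j hj)

theorem IsIrreducible.exists_parabolic_ρ_pos (hI : IsIrreducible M K) {z : ι → ℝ} (hz : 0 < z)
    (hzK : z ∈ supportedOn K) (hnn : ∀ w ∈ parabolic cs K, 0 ≤ D.ρ w z) {s : ι} (hs : s ∈ K) :
    ∃ w ∈ parabolic cs K, 0 < D.ρ w z s := by
  obtain ⟨-, t, ht⟩ := Pi.lt_def.mp hz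
  refine (hI.2 {s | s ∈ K ∧ ∃ w ∈ parabolic cs K, 0 < D.ρ w z s} (fun s h => h.1)
    ⟨t, mem_of_mem_supportedOn hzK ht.ne', 1, one_mem _, by simpa using ht⟩ ?_ hs).2
  rintro i ⟨_, w, hw, hwi⟩ j hj hj'
  by_contra hM
  have hj0 : D.ρ w z j = 0 := le_antisymm (not_lt.mp fun h => hj' ⟨hj, w, hw, h⟩) (hnn w hw j)
  have hneg := form_simpleRoot_neg_of_pos (D := D) (hnn w hw) hj0 hwi hM
  refine hj' ⟨hj, cs.simple j * w, mul_mem (simple_mem_parabolic cs hj) hw, ?_⟩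
  rw [map_mul, Module.End.mul_apply, ρ_simple, refl_apply, Pi.sub_apply, hj0, Pi.smul_apply,
    simpleRoot_self, smul_eq_mul]
  linarith

theorem IsIrreducible.form_eq_zero_of_antidominant (hI : IsIrreducible M K) {z z' : ι → ℝ}
    (hz : 0 < z) (hzK : z ∈ supportedOn K) (hzB : ∀ s ∈ K, D.form z (α s) ≤ 0)
    (hzB' : ∀ s ∈ K, D.form z' (α s) ≤ 0)
    (hpos : ∀ w ∈ parabolic cs K, 0 ≤ D.form (D.ρ w z) z') : ∀ s ∈ K, D.form z' (α s) = 0 := by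
  have hnn : ∀ w ∈ parabolic cs K, 0 ≤ D.ρ w z := fun w hw =>
    hz.le.trans (sub_nonneg.mp (ρ_sub_nonneg_of_form_nonpos hzB hw))
  intro s hs
  obtain ⟨w, hw, hws⟩ := hI.exists_parabolic_ρ_pos hz hzK hnn hs
  refine le_antisymm (hzB' s hs) ?_
  by_contra! hlt
  refine (hpos w hw).not_gt ?_
  rw [form_comm, form_eq_sum_right]
  refine Finset.sum_neg' (fun i _ => ?_) ⟨s, Finset.mem_univ _, mul_neg_of_pos_of_neg hws hlt⟩
  by_cases hi : i ∈ K
  · exact mul_nonpos_of_nonneg_of_nonpos (hnn w hw i) (hzB' i hi)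
  · rw [ρ_mem_supportedOn hw hzK i hi, zero_mul]

theorem IsIrreducible.exists_eq_smul (hI : IsIrreducible M K) {z z' : ι → ℝ} (hz : 0 < z)
    (hzK : z ∈ supportedOn K) (hzB : ∀ s ∈ K, D.form z (α s) = 0) (hz' : 0 ≤ z')
    (hzK' : z' ∈ supportedOn K) (hzB' : ∀ s ∈ K, D.form z' (α s) = 0) :
    ∃ c : ℝ, 0 ≤ c ∧ z' = c • z := by
  have hfull := fun s (hs : s ∈ K) => hI.pos_of_form_nonneg hz hzK (fun s hs => (hzB s hs).ge) hs
  obtain ⟨i, hi, hmin⟩ := Set.exists_min_image K (fun s => z' s / z s) K.toFinite hI.1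
  set c := z' i / z i with hc
  refine ⟨c, div_nonneg (hz' i) (hz.le i), ?_⟩
  have hyK : z' - c • z ∈ supportedOn K := sub_mem hzK' (Submodule.smul_mem _ c hzK)
  have hyi : (z' - c • z) i = 0 := by
    rw [Pi.sub_apply, Pi.smul_apply, smul_eq_mul, hc, div_mul_cancel₀ _ (hfull i hi).ne', sub_self]
  have hy : 0 ≤ z' - c • z := by
    intro s
    by_cases hs : s ∈ K
    · have := hmin s hs
      rw [le_div_iff₀ (hfull s hs)] at this
      simpa using this
    · rw [hyK s hs, Pi.zero_apply]
  have hyB : ∀ s ∈ K, 0 ≤ D.form (z' - c • z) (α s) := by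
    intro s hs
    simp [hzB s hs, hzB' s hs]
  by_contra hne
  exact (hI.pos_of_form_nonneg (hy.lt_of_ne' (sub_ne_zero.mpr hne)) hyK hyB hi).ne' hyi

end Irreducible

section SameSign

variable {D G : GeomRep cs} {a : MulAut W} {φ : (ι → ℝ) →ₗ[ℝ] (ι → ℝ)} {K : Set ι}

theorem Realizes.exists_antidominant_add (P : Realizes G a φ) (h : IsometricOn D G φ K)
    {u v : ι → ℝ} (hu : u ∈ D.posRootsOn K) (hv : v ∈ D.posRootsOn K) (hB : D.form u v ≤ -1)
    (hQ : φ u + φ v ∈ G.titsDual) :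
    ∃ g ∈ D.posRootsOn K, ∃ d ∈ D.posRootsOn K, D.form g d ≤ -1 ∧ φ (g + d) ∈ G.titsDual ∧
      ∀ s ∈ K, D.form (g + d) (α s) ≤ 0 := by
  obtain ⟨w, hw, hwu, hwv, hanti⟩ := exists_parabolic_form_add_nonpos K hu.1 hv.1 hB
  refine ⟨_, ⟨hwu, ρ_mem_supportedOn hw hu.2⟩, _, ⟨hwv, ρ_mem_supportedOn hw hv.2⟩,
    by rwa [form_ρ], ?_, hanti⟩
  rw [← map_add, P.map_ρ h hw (add_mem hu.2 hv.2), map_add φ]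
  exact ρ_mem_titsDual hQ _

theorem add_pos_of_isPosRoot {g d : ι → ℝ} (hg : D.IsPosRoot g) (hd : D.IsPosRoot d) : 0 < g + d :=
  add_pos_of_pos_of_nonneg
    (lt_of_le_of_ne' (show (0 : ι → ℝ) ≤ g from hg.nonneg) hg.isRoot.ne_zero) hd.nonneg

theorem Realizes.form_ρ_add_nonneg (P : Realizes G a φ) (h : IsometricOn D G φ K)
    {g d z : ι → ℝ} (hg : g ∈ D.posRootsOn K) (hd : d ∈ D.posRootsOn K) (hB : D.form g d ≤ -1)
    (hQ : φ (g + d) ∈ G.titsDual) (hz : z ∈ supportedOn K) (hzQ : (-φ) z ∈ G.titsDual) {w : W}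
    (hw : w ∈ parabolic cs K) : 0 ≤ D.form (D.ρ w (g + d)) z := by
  have hgd := add_mem hg.2 hd.2
  have hmap : φ (D.ρ w (g + d)) = G.ρ (a w) (φ g) + G.ρ (a w) (φ d) := by
    rw [P.map_ρ h hw hgd, map_add, map_add]
  have hdual : φ (D.ρ w (g + d)) ∈ G.titsDual := by
    rw [P.map_ρ h hw hgd]
    exact ρ_mem_titsDual hQ _
  have := form_add_nonpos_of_mem_titsDual ((P.isRoot_map h hg).ρ_apply (a w))
    ((P.isRoot_map h hd).ρ_apply (a w)) (by rwa [form_ρ, h.form_map hg.2 hd.2])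
    (hmap ▸ hdual) hzQ
  rwa [← hmap, LinearMap.neg_apply, map_neg, h.form_map (ρ_mem_supportedOn hw hgd) hz,
    neg_nonpos] at this

theorem Realizes.false_of_mem_titsDual_of_neg_mem_titsDual (P : Realizes G a φ)
    (h : IsometricOn D G φ K) (hI : IsIrreducible M K) {u v u' v' : ι → ℝ}
    (hu : u ∈ D.posRootsOn K) (hv : v ∈ D.posRootsOn K) (hB : D.form u v ≤ -1)
    (hu' : u' ∈ D.posRootsOn K) (hv' : v' ∈ D.posRootsOn K) (hB' : D.form u' v' ≤ -1)
    (hQ : φ u + φ v ∈ G.titsDual) (hQ' : (-φ) u' + (-φ) v' ∈ G.titsDual) : False := by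
  obtain ⟨g, hg, d, hd, hgd, hQ, hanti⟩ := P.exists_antidominant_add h hu hv hB hQ
  obtain ⟨g', hg', d', hd', hgd', hQ', hanti'⟩ :=
    P.neg.exists_antidominant_add h.neg hu' hv' hB' hQ'
  have hpos := add_pos_of_isPosRoot hg.1 hd.1
  have hpos' := add_pos_of_isPosRoot hg'.1 hd'.1
  have hK := add_mem hg.2 hd.2
  have hK' := add_mem hg'.2 hd'.2
  have hB₀ := hI.form_eq_zero_of_antidominant hpos' hK' hanti' hanti fun w hw =>
    P.neg.form_ρ_add_nonneg h.neg hg' hd' hgd' hQ' hK (by rwa [neg_neg]) hw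
  have hB₀' := hI.form_eq_zero_of_antidominant hpos hK hanti hanti' fun w hw =>
    P.form_ρ_add_nonneg h hg hd hgd hQ hK' hQ' hw
  obtain ⟨c, hc, he⟩ := hI.exists_eq_smul hpos hK hB₀ hpos'.le hK' hB₀'
  have hheight := hQ _ height_mem_titsInterior
  have hheight' := hQ' _ height_mem_titsInterior
  rw [he, LinearMap.neg_apply, map_smul, map_neg, map_smul, smul_eq_mul] at hheight'
  exact (neg_pos.mp hheight').not_ge (mul_nonneg hc hheight.le)

end SameSign

section AlmostPositive

variable {D G : GeomRep cs} {a : MulAut W} {φ : (ι → ℝ) →ₗ[ℝ] (ι → ℝ)} {K : Set ι}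

/- Only finitely many roots in `N` have form of absolute value at least `1` with some member of a
basis of the span of `N`; all others take values in a finite set on that basis. Two of them with
the same values and with form of absolute value less than `1` would differ by a vector orthogonal
to `N`, which is impossible. -/
theorem finite_of_forall_finite_one_le_abs_form {N : Set (ι → ℝ)} (hN : ∀ g ∈ N, D.IsRoot g)
    (hfin : ∀ g ∈ N, {d | d ∈ N ∧ ¬|D.form g d| < 1}.Finite) : N.Finite := by
  by_contra hinf
  obtain ⟨b, hbN, hspan, hli⟩ := exists_linearIndependent ℝ N
  have hb : b.Finite := hli.setFinite
  have : Finite b := hb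
  set N' := {d | d ∈ N ∧ ∀ t ∈ b, |D.form t d| < 1}
  have hinf' : N'.Infinite := fun hf => hinf <| by
    refine (hf.union (hb.biUnion fun t ht => hfin t (hbN ht))).subset fun d hd => ?_
    by_cases hc : ∀ t ∈ b, |D.form t d| < 1
    · exact .inl ⟨hd, hc⟩
    · push Not at hc
      obtain ⟨t, ht, hle⟩ := hc
      exact .inr (Set.mem_biUnion ht ⟨hd, hle.not_gt⟩)
  obtain ⟨y, hy⟩ : ∃ y, {d | d ∈ N' ∧ (fun t : b => D.form t d) = y}.Infinite := by
    by_contra! hc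
    have hvalues : (Set.pi Set.univ fun _ : b => D.sphericalValues).Finite :=
      Set.Finite.pi fun _ => finite_sphericalValues
    refine hinf' ((hvalues.biUnion fun y _ => hc y).subset fun d hd =>
      Set.mem_biUnion (x := fun t : b => D.form t d) (fun t _ => ?_) ⟨hd, rfl⟩)
    exact form_mem_sphericalValues_of_abs_lt_one (hN t (hbN t.2)) (hN d hd.1) (hd.2 t t.2)
  obtain ⟨d, hd, hdy⟩ := hy.nonempty
  obtain ⟨d', ⟨hd', hdy'⟩, hdd'⟩ := (hy.sdiff (hfin d hd.1)).nonempty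
  have hker : Submodule.span ℝ N ≤ LinearMap.ker (D.form.flip (d - d')) := by
    rw [← hspan, Submodule.span_le]
    intro t ht
    have : D.form t d = D.form t d' := congrFun (hdy.trans hdy'.symm) ⟨t, ht⟩
    simp [this]
  have hself : D.form d (d - d') = 0 := by simpa using hker (Submodule.subset_span hd.1)
  rw [map_sub, (hN d hd.1).form_self, sub_eq_zero] at hself
  exact hdd' ⟨hd'.1, by simp [← hself]⟩

/-- The positive roots of `D` supported on `K` that `φ` sends to negative roots of `G`. -/
def flippedRoots (D G : GeomRep cs) (φ : (ι → ℝ) →ₗ[ℝ] (ι → ℝ)) (K : Set ι) : Set (ι → ℝ) :=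
  {g | g ∈ D.posRootsOn K ∧ G.IsPosRoot (-φ g)}

variable (P : Realizes G a φ) (h : IsometricOn D G φ K)
  (hQ : ∀ u ∈ D.posRootsOn K, ∀ v ∈ D.posRootsOn K, D.form u v ≤ -1 → φ u + φ v ∈ G.titsDual)

include hQ in
theorem neg_one_lt_form_of_mem_flippedRoots {g d : ι → ℝ} (hg : g ∈ flippedRoots D G φ K)
    (hd : d ∈ flippedRoots D G φ K) : -1 < D.form g d := by
  by_contra! hle
  have hpos := hQ g hg.1 d hd.1 hle _ height_mem_titsInterior
  have hneg := add_pos_of_pos_of_nonneg (one_pos.trans_le hg.2.one_le_height)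
    (one_pos.trans_le hd.2.one_le_height).le
  rw [map_add] at hpos
  rw [map_neg, map_neg] at hneg
  linarith

include P h hQ in
theorem height_map_le_height_map {w : W} (hw : w ∈ parabolic cs K) {s : ι} (hs : s ∈ K)
    {d : ι → ℝ} (hd : d ∈ D.posRootsOn K) (hpos : D.IsPosRoot (D.ρ w⁻¹ d)) (hne : d ≠ D.ρ w (α s))
    (hB : 1 ≤ D.form (D.ρ w (α s)) d) : height (φ (D.ρ w (α s))) ≤ height (φ d) := by
  have hne' : D.ρ w⁻¹ d ≠ α s := fun he => hne (by rw [← he, ρ_apply_ρ_inv])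
  have hmem : D.refl (α s) (D.ρ w⁻¹ d) ∈ D.posRootsOn K :=
    ⟨hpos.refl_simpleRoot hne',
      refl_simpleRoot_mem_supportedOn hs (ρ_mem_supportedOn (inv_mem hw) hd.2)⟩
  have hsK : α s ∈ D.posRootsOn K := ⟨D.isPosRoot_simpleRoot s, simpleRoot_mem_supportedOn hs⟩
  have hself := D.form_simpleRoot_self s
  have hle : D.form (D.refl (α s) (D.ρ w⁻¹ d)) (α s) ≤ -1 := by
    have hform : D.form (D.ρ w⁻¹ d) (α s) = D.form (D.ρ w (α s)) d := by
      rw [← D.form_ρ w, ρ_apply_ρ_inv, form_comm]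
    have := D.form_refl hself (D.ρ w⁻¹ d) (α s)
    rw [refl_self _ hself, map_neg] at this
    linarith
  have hws : w * cs.simple s ∈ parabolic cs K := mul_mem hw (simple_mem_parabolic cs hs)
  have hdual := ρ_mem_titsDual (hQ _ hmem _ hsK hle) (a (w * cs.simple s))
  rw [← map_add, ← P.map_ρ h hws (add_mem hmem.2 hsK.2), map_add, map_mul, Module.End.mul_apply,
    Module.End.mul_apply, D.ρ_simple, refl_simpleRoot_refl_simpleRoot, ρ_apply_ρ_inv,
    refl_self _ hself, map_neg] at hdual
  have := hdual _ height_mem_titsInterior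
  rw [map_add, map_neg, map_add, map_neg] at this
  linarith

include P h hQ in
theorem finite_flippedRoots : (flippedRoots D G φ K).Finite := by
  refine finite_of_forall_finite_one_le_abs_form (fun g hg => hg.1.1.isRoot) fun g hg => ?_
  obtain ⟨w, hw, s, hs, rfl⟩ := exists_ρ_simpleRoot_of_mem_posRootsOn hg.1
  have hheight : {d | d ∈ flippedRoots D G φ K ∧
      height (-φ d) ≤ height (-φ (D.ρ w (α s)))}.Finite := by
    refine .of_finite_image (f := fun d => -φ d)
      ((G.finite_setOf_height_le (height (-φ (D.ρ w (α s))))).subset ?_)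
      fun u hu v hv he => P.injOn h hu.1.1 hv.1.1 (neg_injective he)
    rintro _ ⟨d, hd, rfl⟩
    exact ⟨hd.1.2, hd.2⟩
  refine ((finite_inversionSet (G := D) w⁻¹).union hheight).subset ?_
  rintro d ⟨hd, habs⟩
  rcases (hd.1.1.isRoot.ρ_apply w⁻¹).pos_or_neg with hpos | hneg
  · refine .inr ⟨hd, ?_⟩
    by_cases hne : d = D.ρ w (α s)
    · rw [← hne]
    · rw [map_neg, map_neg, neg_le_neg_iff]
      refine height_map_le_height_map P h hQ hw hs hd.1 hpos hne (not_lt.mp fun hlt => ?_)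
      exact habs (abs_lt.mpr ⟨neg_one_lt_form_of_mem_flippedRoots hQ hg hd, hlt⟩)
  · exact .inl ⟨hd.1.1, hneg⟩

include P h hQ in
theorem almostPositiveOn_one : AlmostPositiveOn D G φ K 1 := by
  intro x hx
  have hfin : {g | g ∈ D.posRootsOn K ∧ G.IsPosRoot (φ g) ∧ x (φ g) ≤ 0}.Finite := by
    refine .of_finite_image (f := φ) (Set.Finite.subset hx ?_) fun u hu v hv he =>
      P.injOn h hu.1 hv.1 he
    rintro _ ⟨g, hg, rfl⟩
    exact hg.2
  refine (hfin.union (finite_flippedRoots P h hQ)).subset ?_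
  rintro g ⟨hg, hlt⟩
  rw [one_mul] at hlt
  rcases (P.isRoot_map h hg).pos_or_neg with hpos | hneg
  · exact .inl ⟨hg, hpos, hlt.le⟩
  · exact .inr ⟨hg, hneg⟩

theorem Realizes.exists_almostPositiveOn (P : Realizes G a φ) (h : IsometricOn D G φ K)
    (hI : IsIrreducible M K) : ∃ ε : ℝ, (ε = 1 ∨ ε = -1) ∧ AlmostPositiveOn D G φ K ε := by
  by_cases hneg : ∃ u ∈ D.posRootsOn K, ∃ v ∈ D.posRootsOn K, D.form u v ≤ -1 ∧
      (-φ) u + (-φ) v ∈ G.titsDual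
  · obtain ⟨u, hu, v, hv, hB, hQ⟩ := hneg
    refine ⟨-1, .inr rfl, fun x hx => ?_⟩
    have := almostPositiveOn_one P.neg h.neg (fun u' hu' v' hv' hB' =>
      (P.neg.add_mem_titsDual_or_neg h.neg hu' hv' hB').resolve_right fun hQ' =>
        P.false_of_mem_titsDual_of_neg_mem_titsDual h hI hu' hv' hB' hu hv hB
          (by simpa [add_comm] using hQ') hQ) x hx
    simpa using this
  · push Not at hneg
    refine ⟨1, .inl rfl, almostPositiveOn_one P h fun u hu v hv hB => ?_⟩
    exact (P.add_mem_titsDual_or_neg h hu hv hB).resolve_right fun hQ =>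
      hneg u hu v hv hB (by simpa [add_comm] using hQ)

end AlmostPositive

end Realizations

section Spherical

variable {ι W : Type*} [Group W] {M : CoxeterMatrix ι} {cs : CoxeterSystem M W} {X Y : Set ι}

/-- Pairwise adjacency of the generators in `X`; the entry `0` of a Coxeter matrix encodes
infinite order. -/
def TwoSpherical (M : CoxeterMatrix ι) (X : Set ι) : Prop := ∀ s ∈ X, ∀ t ∈ X, M s t ≠ 0

/-- Sphericity of a set of generators: the parabolic subgroup it generates is finite. -/
def IsSpherical (cs : CoxeterSystem M W) (X : Set ι) : Prop := (parabolic cs X : Set W).Finite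

/-- The generators outside `X ∪ X⊥`. -/
def outerVertices (M : CoxeterMatrix ι) (X : Set ι) : Set ι := {m | m ∉ X ∧ ∃ j ∈ X, M j m ≠ 2}

/-- Twist-rigidity of a Coxeter system, with connectedness of the set of outer vertices expressed
by chains of adjacent generators. -/
def IsTwistRigidSystem (cs : CoxeterSystem M W) : Prop :=
  ∀ J : Set ι, IsIrreducible M J → IsSpherical cs J →
    ∀ p ∈ outerVertices M J, ∀ q ∈ outerVertices M J,
      Relation.ReflTransGen (fun x y => x ∈ outerVertices M J ∧ y ∈ outerVertices M J ∧ M x y ≠ 0)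
        p q

/-- The set `X` lies in a spherical irreducible component of the Coxeter diagram. -/
def InSphericalComponent (cs : CoxeterSystem M W) (X : Set ι) : Prop :=
  ∃ Y, X ⊆ Y ∧ IsIrreducible M Y ∧ IsSpherical cs Y ∧ outerVertices M Y = ∅

theorem IsSpherical.mono (h : IsSpherical cs Y) (hXY : X ⊆ Y) : IsSpherical cs X :=
  Set.Finite.subset h (parabolic_mono cs hXY)

theorem TwoSpherical.mono (h : TwoSpherical M Y) (hXY : X ⊆ Y) : TwoSpherical M X :=
  fun s hs t ht => h s (hXY hs) t (hXY ht)

theorem InSphericalComponent.mono (h : InSphericalComponent cs Y) (hXY : X ⊆ Y) :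
    InSphericalComponent cs X := by
  obtain ⟨Z, hYZ, hZ⟩ := h
  exact ⟨Z, hXY.trans hYZ, hZ⟩

theorem ne_of_apply_ne_one {s t : ι} (h : M s t ≠ 1) : s ≠ t := by
  rintro rfl
  exact h (M.diagonal s)

theorem IsIrreducible.insert_of_mem_outerVertices (h : IsIrreducible M X) {c : ι}
    (hc : c ∈ outerVertices M X) :
    IsIrreducible M (insert c X) := by
  obtain ⟨-, j, hj, hjc⟩ := hc
  refine ⟨⟨c, Set.mem_insert _ _⟩, fun L hL hne hperp => ?_⟩
  by_cases hX : (L ∩ X).Nonempty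
  · have hXL : X ⊆ L := fun i hi => (h.2 _ Set.inter_subset_right hX (fun i hi k hk hk' =>
      hperp i hi.1 k (.inr hk) fun hkL => hk' ⟨hkL, hk⟩) hi).1
    refine Set.insert_subset ?_ hXL
    by_contra hc
    exact hjc (hperp j (hXL hj) c (.inl rfl) hc)
  · exfalso
    have hjL : j ∉ L := fun hjL => hX ⟨j, hjL, hj⟩
    obtain ⟨i, hi⟩ := hne
    rcases hL hi with rfl | hiX
    · exact hjc (by rw [M.symmetric]; exact hperp _ hi j (.inr hj) hjL)
    · exact hX ⟨i, hi, hiX⟩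

theorem IsIrreducible.exists_mem_outerVertices (h : IsIrreducible M Y) (hX : X.Nonempty)
    (hXY : X ⊆ Y) (hne : ¬ Y ⊆ X) : ∃ c ∈ Y, c ∈ outerVertices M X := by
  by_contra! hc
  refine hne (h.2 X hXY hX fun i hi j hj hj' => ?_)
  by_contra hM
  exact hc j hj ⟨hj', i, hi, hM⟩

theorem IsIrreducible.exists_maximal_twoSpherical [Finite ι] (hI : IsIrreducible M X)
    (hX : TwoSpherical M X) : ∃ Y, X ⊆ Y ∧ IsIrreducible M Y ∧ TwoSpherical M Y ∧
      ∀ c ∈ outerVertices M Y, ¬ TwoSpherical M (insert c Y) := by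
  obtain ⟨Y, ⟨hXY, hYI, hY⟩, hmax⟩ := Set.Finite.exists_maximal
    (s := {Y : Set ι | X ⊆ Y ∧ IsIrreducible M Y ∧ TwoSpherical M Y}) (Set.toFinite _)
    ⟨X, subset_rfl, hI, hX⟩
  exact ⟨Y, hXY, hYI, hY, fun c hc h => hc.1 <| hmax
    ⟨hXY.trans (Set.subset_insert _ _), hYI.insert_of_mem_outerVertices hc, h⟩
    (Set.subset_insert _ _) (Set.mem_insert _ _)⟩

theorem TwoSpherical.exists_apply_eq_zero (hX : TwoSpherical M X) {c : ι}
    (h : ¬ TwoSpherical M (insert c X)) : c ∉ X ∧ ∃ z ∈ X, M z c = 0 := by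
  refine ⟨fun hc => h (by rwa [Set.insert_eq_of_mem hc]), ?_⟩
  by_contra! hc
  apply h
  rintro s (rfl | hs) t (rfl | ht)
  · rw [M.diagonal]
    exact one_ne_zero
  · rw [M.symmetric]
    exact hc t ht
  · exact hc s hs
  · exact hX s hs t ht

end Spherical

section AngleRealizations

variable {ι W : Type*} [Fintype ι] [DecidableEq ι] [Group W] {M : CoxeterMatrix ι}
  {cs : CoxeterSystem M W} {D G : GeomRep cs} {a : MulAut W} {φ : (ι → ℝ) →ₗ[ℝ] (ι → ℝ)}
  {X Y : Set ι} {x y : (ι → ℝ) →ₗ[ℝ] ℝ} {g : ι → ℝ}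

section FixedPoints

/-- The stabilizer of the functional `x` under the action of `W` on the dual space. -/
def GeomRep.stabilizer (G : GeomRep cs) (x : (ι → ℝ) →ₗ[ℝ] ℝ) : Subgroup W where
  carrier := {w | x ∘ₗ G.ρ w = x}
  one_mem' := LinearMap.ext fun y => by simp
  mul_mem' {p q} hp hq := by
    rw [Set.mem_ofPred_eq] at *
    rw [map_mul, Module.End.mul_eq_comp, ← LinearMap.comp_assoc, hp, hq]
  inv_mem' {p} hp := by
    rw [Set.mem_ofPred_eq] at *
    conv_lhs => rw [← hp]
    rw [LinearMap.comp_assoc, ← Module.End.mul_eq_comp, ← map_mul, mul_inv_cancel, map_one]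
    rfl

theorem comp_refl_eq_of_apply_eq_zero {u : ι → ℝ} (h : x u = 0) : x ∘ₗ G.refl u = x :=
  LinearMap.ext fun y => by simp [refl_apply, h]

/- The images under `a` of two reflections of `D` generating an infinite dihedral group have no
common fixed point in the interior of the Tits cone: otherwise that group would be finite, and
would then have a fixed point in the interior of the Tits cone of `D` itself. -/
theorem false_of_ρ_map_eq_refl (a : MulAut W) {u v u' v' : ι → ℝ} {r r' : W} (hu : D.IsPosRoot u)
    (hv : D.IsPosRoot v) (hB : D.form u v ≤ -1) (hr : D.ρ r = D.refl u) (hr' : D.ρ r' = D.refl v)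
    (har : G.ρ (a r) = G.refl u') (har' : G.ρ (a r') = G.refl v') (hx : x ∈ G.titsInterior)
    (hxu : x u' = 0) (hxv : x v' = 0) : False := by
  have hle : Subgroup.closure {r, r'} ≤ (G.stabilizer x).comap a.toMonoidHom := by
    rw [Subgroup.closure_le]
    rintro w (rfl | rfl)
    · exact (congrArg (x ∘ₗ ·) har).trans (comp_refl_eq_of_apply_eq_zero hxu)
    · exact (congrArg (x ∘ₗ ·) har').trans (comp_refl_eq_of_apply_eq_zero hxv)
  have hfin : (Subgroup.closure {r, r'} : Set W).Finite :=
    .of_finite_image (f := a) ((finite_stabilizer hx).subset (Set.image_subset_iff.mpr hle))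
      a.injective.injOn
  have : Finite (Subgroup.closure {r, r'}) := hfin
  obtain ⟨y, hy, hfix⟩ := D.exists_titsInterior_comp_ρ_eq (Subgroup.closure {r, r'})
  have hyu : y u = 0 := apply_eq_zero_of_comp_refl_eq hu.isRoot
    (hr ▸ hfix r (Subgroup.subset_closure (by simp)))
  have hyv : y v = 0 := apply_eq_zero_of_comp_refl_eq hv.isRoot
    (hr' ▸ hfix r' (Subgroup.subset_closure (by simp)))
  exact false_of_apply_eq_zero hu.isRoot hv.isRoot hB (add_pos_of_isPosRoot hu hv).ne' hy hyu hyv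

theorem not_isSpherical_of_form_le_neg_one {u v : ι → ℝ} (hu : u ∈ D.posRootsOn Y)
    (hv : v ∈ D.posRootsOn Y) (hB : D.form u v ≤ -1) : ¬ IsSpherical cs Y := by
  intro hY
  have : Finite (parabolic cs Y) := hY
  obtain ⟨y, hy, hfix⟩ := D.exists_titsInterior_comp_ρ_eq (parabolic cs Y)
  have hzero : ∀ u ∈ D.posRootsOn Y, y u = 0 := by
    intro u hu
    obtain ⟨w, hw, s, hs, rfl⟩ := exists_ρ_simpleRoot_of_mem_posRootsOn hu
    refine apply_eq_zero_of_comp_refl_eq hu.1.isRoot ?_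
    rw [← ρ_conj_eq_refl D (D.ρ_simple s) w]
    exact hfix _ (mul_mem (mul_mem hw (simple_mem_parabolic cs hs)) (inv_mem hw))
  exact false_of_apply_eq_zero hu.1.isRoot hv.1.isRoot hB (add_pos_of_isPosRoot hu.1 hv.1).ne' hy
    (hzero u hu) (hzero v hv)

theorem simpleRoot_mem_posRootsOn {s : ι} (hs : s ∈ X) : α s ∈ D.posRootsOn X :=
  ⟨D.isPosRoot_simpleRoot s, simpleRoot_mem_supportedOn hs⟩

omit [Fintype ι] [DecidableEq ι] in
theorem IsSpherical.twoSpherical [Finite ι] (D : GeomRep cs) (h : IsSpherical cs X) :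
    TwoSpherical M X := by
  classical
  cases nonempty_fintype ι
  exact fun s hs t ht h0 => not_isSpherical_of_form_le_neg_one (D := D)
    (simpleRoot_mem_posRootsOn hs) (simpleRoot_mem_posRootsOn ht)
    (by simpa using D.gram_le_neg_one s t h0) h

end FixedPoints

section FullRoots

/-- The positive roots whose support is exactly `X`. -/
def IsFullRoot (D : GeomRep cs) (X : Set ι) (g : ι → ℝ) : Prop :=
  g ∈ D.posRootsOn X ∧ ∀ s ∈ X, 0 < g s

theorem ne_simpleRoot_of_form_neg {c : ι} (hB : D.form g (α c) < 0) : g ≠ α c := by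
  rintro rfl
  rw [D.form_simpleRoot_self] at hB
  linarith

theorem refl_simpleRoot_mem_posRootsOn (hg : g ∈ D.posRootsOn X) {t : ι} (ht : t ∈ X)
    (hB : D.form g (α t) < 0) : D.refl (α t) g ∈ D.posRootsOn X :=
  ⟨hg.1.refl_simpleRoot (ne_simpleRoot_of_form_neg hB), refl_simpleRoot_mem_supportedOn ht hg.2⟩

theorem form_simpleRoot_le_neg_one (hg : D.IsPosRoot g) {v z : ι} (hv : g v = 0) (hM : M z v = 0)
    (hz : 0 < g z) : D.form g (α v) ≤ -1 := by
  have hz1 : 1 ≤ g z := (hg.2 z).resolve_left hz.ne'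
  have hgram := D.gram_le_neg_one z v hM
  rw [form_simpleRoot_right, ← Finset.add_sum_erase _ _ (Finset.mem_univ z)]
  have hrest : ∑ s ∈ Finset.univ.erase z, g s * D.gram s v ≤ 0 := by
    refine Finset.sum_nonpos fun s _ => ?_
    rcases eq_or_ne s v with rfl | hsv
    · rw [hv, zero_mul]
    · exact mul_nonpos_of_nonneg_of_nonpos (hg.nonneg s) (D.gram_nonpos hsv)
  nlinarith

namespace IsFullRoot

theorem form_neg (hg : IsFullRoot D X g) {c : ι} (hc : c ∈ outerVertices M X) :
    D.form g (α c) < 0 := by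
  obtain ⟨hcX, j, hj, hM⟩ := hc
  exact form_simpleRoot_neg_of_pos hg.1.1.nonneg (hg.1.2 c hcX) (hg.2 j hj) hM

theorem form_eq_zero (hg : IsFullRoot D X g) {c : ι} (hcX : c ∉ X) (hc : c ∉ outerVertices M X) :
    D.form g (α c) = 0 := by
  rw [form_simpleRoot_right]
  refine Finset.sum_eq_zero fun s _ => ?_
  by_cases hs : s ∈ X
  · have hne : s ≠ c := fun h => hcX (h ▸ hs)
    rw [(D.gram_eq_zero_iff hne).mpr, mul_zero]
    by_contra hM
    exact hc ⟨hcX, s, hs, hM⟩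
  · rw [hg.1.2 s hs, zero_mul]

theorem form_le_neg_one (hg : IsFullRoot D X g) {v z : ι} (hv : v ∉ X) (hz : z ∈ X)
    (hM : M z v = 0) : D.form g (α v) ≤ -1 :=
  form_simpleRoot_le_neg_one hg.1.1 (hg.1.2 v hv) hM (hg.2 z hz)

theorem refl_simpleRoot (hg : IsFullRoot D X g) {c : ι} (hB : D.form g (α c) < 0) :
    IsFullRoot D (insert c X) (D.refl (α c) g) := by
  refine ⟨refl_simpleRoot_mem_posRootsOn
    ⟨hg.1.1, supportedOn_mono (Set.subset_insert _ _) hg.1.2⟩ (Set.mem_insert c X) hB,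
    fun s hs => ?_⟩
  rcases eq_or_ne s c with rfl | hsc
  · rw [refl_apply, Pi.sub_apply, Pi.smul_apply, simpleRoot_self, smul_eq_mul]
    linarith [hg.1.1.nonneg s]
  · rw [refl_simpleRoot_apply_of_ne _ _ hsc]
    exact hg.2 s (hs.resolve_left hsc)

end IsFullRoot

/-- The orbit of the simple root `α s` under the parabolic subgroup generated by `X`. -/
def parabolicOrbit (D : GeomRep cs) (X : Set ι) (s : ι) : Set (ι → ℝ) :=
  {g | ∃ w ∈ parabolic cs X, g = D.ρ w (α s)}

theorem simpleRoot_mem_parabolicOrbit (s : ι) : α s ∈ parabolicOrbit D X s :=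
  ⟨1, one_mem _, by simp⟩

theorem refl_mem_parabolicOrbit {s t : ι} (ht : t ∈ X) (hg : g ∈ parabolicOrbit D X s) :
    D.refl (α t) g ∈ parabolicOrbit D X s := by
  obtain ⟨w, hw, rfl⟩ := hg
  exact ⟨cs.simple t * w, mul_mem (simple_mem_parabolic cs ht) hw, by
    rw [map_mul, Module.End.mul_apply, ρ_simple]⟩

theorem IsIrreducible.exists_dominant_isFullRoot (hI : IsIrreducible M X) (hS : IsSpherical cs X)
    {s : ι} (hs : s ∈ X) : ∃ θ, IsFullRoot D X θ ∧ (∀ t ∈ X, 0 ≤ D.form θ (α t)) ∧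
      θ ∈ parabolicOrbit D X s := by
  have hfin : (D.posRootsOn X ∩ parabolicOrbit D X s).Finite :=
    (finite_posRootsOn_of_finite_parabolic hS).inter_of_left _
  obtain ⟨θ, ⟨hθ, hθs⟩, hmax⟩ := Set.exists_max_image _ height hfin
    ⟨α s, simpleRoot_mem_posRootsOn hs, simpleRoot_mem_parabolicOrbit s⟩
  have hdom : ∀ t ∈ X, 0 ≤ D.form θ (α t) := by
    intro t ht
    by_contra! hlt
    have := hmax _ ⟨refl_simpleRoot_mem_posRootsOn hθ ht hlt, refl_mem_parabolicOrbit ht hθs⟩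
    rw [height_refl_simpleRoot] at this
    linarith
  exact ⟨θ, ⟨hθ, fun t ht => hI.pos_of_form_nonneg
    (lt_of_le_of_ne' (show (0 : ι → ℝ) ≤ θ from hθ.1.nonneg) hθ.1.isRoot.ne_zero)
    hθ.2 hdom ht⟩, hdom, hθs⟩

end FullRoots

section Walls

/-- A realization of the automorphism `a` which also respects the form on each pair of adjacent
generators, that is, the angles between their walls. -/
structure AngleRealization (D G : GeomRep cs) (a : MulAut W) (φ : (ι → ℝ) →ₗ[ℝ] (ι → ℝ)) : Prop
    extends Realizes G a φ where
  form_map_simpleRoot : ∀ s t, M s t ≠ 0 → G.form (φ (α s)) (φ (α t)) = D.gram s t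

/-- The map `φ` has sign `ε` at `g` on the wall of `φ (α v)` inside the Tits cone. -/
def PositiveOnWall (G : GeomRep cs) (φ : (ι → ℝ) →ₗ[ℝ] (ι → ℝ)) (ε : ℝ) (g : ι → ℝ) (v : ι) :
    Prop :=
  ∀ x ∈ G.titsInterior, x (φ (α v)) = 0 → 0 < ε * x (φ g)

namespace AngleRealization

variable (C : AngleRealization D G a φ)
include C

theorem isometricOn (hX : TwoSpherical M X) : IsometricOn D G φ X :=
  fun s hs t ht => C.form_map_simpleRoot s t (hX s hs t ht)

theorem apply_map_ne_zero (hX : TwoSpherical M X) (hg : g ∈ D.posRootsOn X) {v : ι}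
    (hB : D.form g (α v) ≤ -1) (hx : x ∈ G.titsInterior) (hxv : x (φ (α v)) = 0) :
    x (φ g) ≠ 0 := by
  intro h
  obtain ⟨r, -, hr, har⟩ := C.exists_ρ_eq_refl (C.isometricOn hX) hg
  exact false_of_ρ_map_eq_refl a hg.1 (D.isPosRoot_simpleRoot v) hB hr (D.ρ_simple v) har
    (C.ρ_simple v) hx h hxv

/- The wall of `φ (α v)` inside the Tits cone is convex, and `φ g` does not vanish on it. -/
theorem positiveOnWall_of_pos (hX : TwoSpherical M X) (hg : g ∈ D.posRootsOn X) {v : ι}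
    (hB : D.form g (α v) ≤ -1) (hx : x ∈ G.titsInterior) (hxv : x (φ (α v)) = 0) {ε : ℝ}
    (h : 0 < ε * x (φ g)) : PositiveOnWall G φ ε g v := by
  intro y hy hyv
  by_contra hc
  have hlt : ε * y (φ g) < 0 := lt_of_le_of_ne (not_lt.mp hc)
    (mul_ne_zero (left_ne_zero_of_mul h.ne') (C.apply_map_ne_zero hX hg hB hy hyv))
  have hz : (-(ε * y (φ g))) • x + (ε * x (φ g)) • y ∈ G.titsInterior :=
    add_mem_titsInterior (smul_mem_titsInterior hx (neg_pos.mpr hlt)) (smul_mem_titsInterior hy h)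
  refine C.apply_map_ne_zero hX hg hB hz (by simp [hxv, hyv]) ?_
  simp only [LinearMap.add_apply, LinearMap.smul_apply, smul_eq_mul]
  ring

theorem exists_titsInterior_apply_eq_zero (v : ι) : ∃ x ∈ G.titsInterior, x (φ (α v)) = 0 :=
  ⟨_, wallProj_mem_titsInterior height_mem_titsInterior (C.isRoot v),
    wallProj_apply_self (C.isRoot v) _⟩

theorem exists_titsInterior_apply_eq_zero₂ {c v : ι} (hM : M c v ≠ 0) :
    ∃ x ∈ G.titsInterior, x (φ (α c)) = 0 ∧ x (φ (α v)) = 0 := by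
  rcases eq_or_ne c v with rfl | h
  · obtain ⟨x, hx, hxc⟩ := C.exists_titsInterior_apply_eq_zero c
    exact ⟨x, hx, hxc, hxc⟩
  · refine exists_titsInterior_of_abs_form_lt_one (C.isRoot c) (C.isRoot v) ?_
    rw [C.form_map_simpleRoot c v hM, abs_lt]
    exact ⟨D.neg_one_lt_gram h hM, by linarith [D.gram_nonpos h]⟩

theorem exists_titsInterior_apply_eq_zero_of_isSpherical {L : Set ι} (hL : IsSpherical cs L) {v : ι}
    (hv : ∀ l ∈ L, M l v = 2) :
    ∃ x ∈ G.titsInterior, x (φ (α v)) = 0 ∧ ∀ l ∈ L, x (φ (α l)) = 0 := by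
  have : Finite ((parabolic cs L).map a.toMonoidHom) := (Set.Finite.image a hL :)
  obtain ⟨x, hx, hfix⟩ := G.exists_titsInterior_comp_ρ_eq ((parabolic cs L).map a.toMonoidHom)
  refine ⟨_, wallProj_mem_titsInterior hx (C.isRoot v), wallProj_apply_self (C.isRoot v) _,
    fun l hl => ?_⟩
  have hxl : x (φ (α l)) = 0 := apply_eq_zero_of_comp_refl_eq (C.isRoot l) <| by
    rw [← C.ρ_simple]
    exact hfix _ ⟨_, simple_mem_parabolic cs hl, rfl⟩
  have hne : l ≠ v := ne_of_apply_ne_one (M := M) (by simp [hv l hl])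
  rw [wallProj_apply, hxl, C.form_map_simpleRoot l v (by simp [hv l hl]),
    (D.gram_eq_zero_iff hne).mpr (hv l hl)]
  simp

end AngleRealization

end Walls

section Signs

/-- The map `φ` has sign `ε` on `X` as seen from the walls: the wall of `φ (α v)` lies on the side
`ε` of that of `φ g`, for each root `g` with support `X` whose wall is disjoint from that of
`α v`. -/
def HasWallSign (D G : GeomRep cs) (φ : (ι → ℝ) →ₗ[ℝ] (ι → ℝ)) (X : Set ι) (ε : ℝ) : Prop :=
  ∀ g, IsFullRoot D X g → ∀ v, D.form g (α v) ≤ -1 → PositiveOnWall G φ ε g v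

/-- The map `φ` has sign `ε` on every irreducible two-spherical set containing `X`, both as seen
from the walls and, in the infinite case, almost everywhere. -/
def HasSign (D G : GeomRep cs) (φ : (ι → ℝ) →ₗ[ℝ] (ι → ℝ)) (X : Set ι) (ε : ℝ) : Prop :=
  ∀ Y, X ⊆ Y → IsIrreducible M Y → TwoSpherical M Y →
    HasWallSign D G φ Y ε ∧ (¬ IsSpherical cs Y → AlmostPositiveOn D G φ Y ε)

theorem HasSign.mono {ε : ℝ} (h : HasSign D G φ X ε) (hXY : X ⊆ Y) : HasSign D G φ Y ε :=
  fun Z hZ => h Z (hXY.trans hZ)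

theorem InSphericalComponent.hasSign (h : InSphericalComponent cs X) (hX : X.Nonempty) (ε : ℝ) :
    HasSign D G φ X ε := by
  obtain ⟨Z, hXZ, -, hS, hM⟩ := h
  intro Y hY hI _
  have hYZ : Y ⊆ Z := by
    by_contra hne
    obtain ⟨c, hc, hcYZ, j, hj, hjc⟩ := hI.exists_mem_outerVertices (X := Y ∩ Z)
      (hX.mono (Set.subset_inter hY hXZ)) Set.inter_subset_left
      fun h => hne (h.trans Set.inter_subset_right)
    exact Set.notMem_empty c (hM ▸ ⟨fun hcZ => hcYZ ⟨hc, hcZ⟩, j, hj.2, hjc⟩)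
  refine ⟨fun g hg v hv => ?_, fun h => (h (hS.mono hYZ)).elim⟩
  by_cases hvZ : v ∈ Z
  · exact (not_isSpherical_of_form_le_neg_one ⟨hg.1.1, supportedOn_mono hYZ hg.1.2⟩
      (simpleRoot_mem_posRootsOn hvZ) hv hS).elim
  · have h0 : D.form g (α v) = 0 := hg.form_eq_zero (fun h => hvZ (hYZ h)) fun ⟨_, j, hj, hjv⟩ =>
      Set.notMem_empty v (hM ▸ ⟨hvZ, j, hYZ hj, hjv⟩)
    linarith

theorem AngleRealization.mul_nonneg_of_almostPositiveOn (C : AngleRealization D G a φ)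
    (hY : TwoSpherical M Y) (hS : ¬ IsSpherical cs Y) {ε ε' : ℝ}
    (h : AlmostPositiveOn D G φ Y ε) (h' : AlmostPositiveOn D G φ Y ε') : 0 ≤ ε * ε' := by
  by_contra! hlt
  refine hS (finite_parabolic_of_finite_posRootsOn (G := D) ?_)
  have hzero : {g | g ∈ D.posRootsOn Y ∧ height (φ g) = 0}.Finite := by
    refine .of_finite_image (f := φ)
      ((finite_setOf_isRoot_eq_zero (G := G) height_mem_titsInterior).subset ?_)
      fun u hu v hv => C.injOn (C.isometricOn hY) hu.1 hv.1
    rintro _ ⟨g, hg, rfl⟩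
    exact ⟨C.isRoot_map (C.isometricOn hY) hg.1, hg.2⟩
  refine (((h _ height_mem_titsInterior).union (h' _ height_mem_titsInterior)).union hzero).subset
    fun g hg => ?_
  by_cases h₁ : ε * height (φ g) < 0
  · exact .inl (.inl ⟨hg, h₁⟩)
  by_cases h₂ : ε' * height (φ g) < 0
  · exact .inl (.inr ⟨hg, h₂⟩)
  refine .inr ⟨hg, ?_⟩
  by_contra h0
  nlinarith [mul_nonneg (not_lt.mp h₁) (not_lt.mp h₂), mul_self_pos.mpr h0]

theorem AngleRealization.mul_nonneg_of_hasSign (C : AngleRealization D G a φ)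
    (hI : IsIrreducible M X) (hX : TwoSpherical M X) (hN : ¬ InSphericalComponent cs X) {ε ε' : ℝ}
    (h : HasSign D G φ X ε) (h' : HasSign D G φ X ε') : 0 ≤ ε * ε' := by
  obtain ⟨Y, hXY, hYI, hY, hmax⟩ := hI.exists_maximal_twoSpherical hX
  by_cases hS : IsSpherical cs Y
  · obtain ⟨v, hv⟩ : (outerVertices M Y).Nonempty :=
      Set.nonempty_iff_ne_empty.mpr fun h => hN ⟨Y, hXY, hYI, hS, h⟩
    obtain ⟨hvY, z, hz, hM⟩ := hY.exists_apply_eq_zero (hmax v hv)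
    obtain ⟨s, hs⟩ := hYI.1
    obtain ⟨θ, hθ, -⟩ := hYI.exists_dominant_isFullRoot (D := D) hS hs
    obtain ⟨x, hx, hxv⟩ := C.exists_titsInterior_apply_eq_zero v
    have hB := hθ.form_le_neg_one hvY hz hM
    have hpos := (h Y hXY hYI hY).1 θ hθ v hB x hx hxv
    have hpos' := (h' Y hXY hYI hY).1 θ hθ v hB x hx hxv
    nlinarith [mul_pos hpos hpos', mul_self_nonneg (x (φ θ))]
  · exact C.mul_nonneg_of_almostPositiveOn hY hS ((h Y hXY hYI hY).2 hS) ((h' Y hXY hYI hY).2 hS)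

theorem HasSign.of_insert (hI : IsIrreducible M X) {ε : ℝ} (hwall : HasWallSign D G φ X ε)
    (hpos : ¬ IsSpherical cs X → AlmostPositiveOn D G φ X ε)
    (hins : ∀ c ∈ outerVertices M X, TwoSpherical M (insert c X) →
      HasSign D G φ (insert c X) ε) : HasSign D G φ X ε := by
  intro Y hXY hYI hY
  by_cases h : Y ⊆ X
  · obtain rfl := h.antisymm hXY
    exact ⟨hwall, hpos⟩
  · obtain ⟨c, hcY, hc⟩ := hYI.exists_mem_outerVertices hI.1 hXY h
    have hsub : insert c X ⊆ Y := Set.insert_subset hcY hXY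
    exact hins c hc (hY.mono hsub) Y hsub hYI hY

end Signs

end AngleRealizations

/-! ### Propagation of signs -/

section Propagation

theorem exists_isIrreducible_of_apply_ne_two {ι : Type*} [Finite ι] {M : CoxeterMatrix ι}
    {X Y : Set ι} (hXY : ∀ i ∈ X, ∀ j ∈ Y, j ∉ X → M i j = 2) {v : ι} (hv : ∃ j ∈ X, M j v ≠ 2) :
    ∃ J ⊆ X, IsIrreducible M J ∧ (∀ i ∈ J, ∀ j ∈ Y, j ∉ J → M i j = 2) ∧ ∃ j ∈ J, M j v ≠ 2 := by
  obtain ⟨J, ⟨hJX, hJ, j, hj, hjv⟩, hmin⟩ := Set.Finite.exists_minimal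
    (s := {J : Set ι | J ⊆ X ∧ (∀ i ∈ J, ∀ j ∈ Y, j ∉ J → M i j = 2) ∧ ∃ j ∈ J, M j v ≠ 2})
    (Set.toFinite _) ⟨X, subset_rfl, hXY, hv⟩
  refine ⟨J, hJX, ⟨⟨j, hj⟩, fun L hL hne hperp => ?_⟩, hJ, j, hj, hjv⟩
  by_cases hLv : ∃ j ∈ L, M j v ≠ 2
  · refine hmin ⟨hL.trans hJX, fun i hi j hj hj' => ?_, hLv⟩ hL
    by_cases hjJ : j ∈ J
    · exact hperp i hi j hjJ hj'
    · exact hJ i (hL hi) j hj hjJ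
  · push Not at hLv
    obtain ⟨k, hk⟩ := hne
    refine absurd hk (hmin (y := J \ L) ⟨Set.sdiff_subset.trans hJX, fun i hi j hj hj' => ?_,
      j, ⟨hj, fun h => hjv (hLv j h)⟩, hjv⟩ Set.sdiff_subset (hL hk)).2
    by_cases hjJ : j ∈ J
    · rw [M.symmetric]
      exact hperp j (by_contra fun h => hj' ⟨hjJ, h⟩) i hi.1 hi.2
    · exact hJ i hi.1 j hj hjJ

variable {ι W : Type*} [Fintype ι] [DecidableEq ι] [Group W] {M : CoxeterMatrix ι}
  {cs : CoxeterSystem M W} {D G : GeomRep cs} {a : MulAut W} {φ : (ι → ℝ) →ₗ[ℝ] (ι → ℝ)}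
  {X Y : Set ι} {x : (ι → ℝ) →ₗ[ℝ] ℝ} {g : ι → ℝ} {ε : ℝ} {v t : ι} {w : W}

theorem ρ_eq_self_of_form_eq_zero {u : ι → ℝ} (h : ∀ q ∈ Y, D.form u (α q) = 0)
    (hw : w ∈ parabolic cs Y) : D.ρ w u = u := by
  refine parabolic_induction D (P := fun w => D.ρ w u = u) (by simp) (fun w _ s hs _ _ ih => ?_) hw
  rw [map_mul, Module.End.mul_apply, ρ_simple, refl_apply_of_form_eq_zero _ (h s hs), ih]

theorem isPosRoot_ρ_simpleRoot (hw : w ∈ parabolic cs Y) (ht : t ∉ Y) :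
    D.IsPosRoot (D.ρ w (α t)) :=
  ((D.isRoot_simpleRoot t).ρ_apply w).isPosRoot_of_pos (s := t) <| by
    rw [ρ_apply_of_notMem hw _ ht, simpleRoot_self]
    exact one_pos

theorem infinite_setOf_posRootsOn_eq_smul_add_smul {u : ι → ℝ} (hu : u ∈ D.posRootsOn Y)
    (hv : v ∈ Y) (hB : D.form u (α v) ≤ -1) :
    {f ∈ D.posRootsOn Y | ∃ c > (0 : ℝ), ∃ d : ℝ, f = c • u + d • α v}.Infinite := by
  have hc : 2 ≤ -2 * D.form u (α v) := by linarith
  have hmono := strictMono_chebyshevCoeff hc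
  set c := chebyshevCoeff (-2 * D.form u (α v))
  have hheight : StrictMono fun n => height (c (2 * n + 1) • u + c (2 * n) • α v) := by
    intro m n hmn
    have hodd : c (2 * m + 1) < c (2 * n + 1) := hmono (by omega)
    have heven : c (2 * m) < c (2 * n) := hmono (by omega)
    simp only [map_add, map_smul, smul_eq_mul, height_simpleRoot]
    nlinarith [hu.1.one_le_height]
  refine Set.infinite_of_injective_forall_mem
    (Function.Injective.of_comp (f := height) hheight.injective) fun n => ?_
  obtain ⟨hnonneg, hle⟩ := chebyshevCoeff_nonneg_and_add_one_le hc (2 * n)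
  have hpos : 0 < c (2 * n + 1) := by linarith
  obtain ⟨s, hs⟩ := hu.1.exists_one_le
  refine ⟨⟨(isRoot_chebyshevCoeff_even hu.1.isRoot (D.isRoot_simpleRoot v) n).isPosRoot_of_pos
    (s := s) ?_, add_mem (Submodule.smul_mem _ _ hu.2)
      (Submodule.smul_mem _ _ (simpleRoot_mem_supportedOn hv))⟩, _, hpos, _, rfl⟩
  exact add_pos_of_pos_of_nonneg (mul_pos hpos (one_pos.trans_le hs))
    (mul_nonneg hnonneg ((D.isPosRoot_simpleRoot v).nonneg s))

theorem AngleRealization.positiveOnWall_of_almostPositiveOn (C : AngleRealization D G a φ)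
    (hY : TwoSpherical M Y) {u : ι → ℝ} (hu : u ∈ D.posRootsOn Y) (hv : v ∈ Y)
    (hB : D.form u (α v) ≤ -1) (hε : ε ≠ 0) (hpos : AlmostPositiveOn D G φ Y ε) :
    PositiveOnWall G φ ε u v := by
  intro x hx hxv
  by_contra hc
  have hlt : ε * x (φ u) < 0 :=
    lt_of_le_of_ne (not_lt.mp hc) (mul_ne_zero hε (C.apply_map_ne_zero hY hu hB hx hxv))
  refine infinite_setOf_posRootsOn_eq_smul_add_smul hu hv hB ((hpos x hx).subset ?_)
  rintro _ ⟨hf, c, hc, d, rfl⟩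
  refine ⟨hf, ?_⟩
  simp only [map_add, map_smul, smul_eq_mul, hxv, mul_zero, add_zero]
  nlinarith [mul_pos hc (neg_pos.mpr hlt)]

namespace IsFullRoot

theorem mem_outerVertices (hg : IsFullRoot D X g) {c : ι} (hcX : c ∉ X)
    (h : D.form g (α c) ≠ 0) : c ∈ outerVertices M X :=
  not_imp_comm.mp (hg.form_eq_zero hcX) h

theorem ρ_refl_simpleRoot (hg : IsFullRoot D X g) (hYX : Y ⊆ X) (hw : w ∈ parabolic cs Y)
    (hwg : D.ρ w g = g) (ht : t ∈ X) (htY : t ∉ Y) (hB : D.form g (α t) < 0) :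
    IsFullRoot D X (D.ρ w (D.refl (α t) g)) := by
  have hpos := isPosRoot_ρ_simpleRoot (D := D) hw htY
  have heq : D.ρ w (D.refl (α t) g) = g + (-(2 * D.form g (α t))) • D.ρ w (α t) := by
    rw [refl_apply, map_sub, map_smul, hwg, neg_smul, sub_eq_add_neg]
  have hfull : ∀ s ∈ X, 0 < D.ρ w (D.refl (α t) g) s := by
    intro s hs
    rw [heq, Pi.add_apply, Pi.smul_apply, smul_eq_mul]
    nlinarith [hpos.nonneg s, hg.2 s hs]
  refine ⟨⟨IsRoot.isPosRoot_of_pos (((D.isRoot_simpleRoot t).refl hg.1.1.isRoot).ρ_apply w)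
    (hfull t ht), ?_⟩, hfull⟩
  exact ρ_mem_supportedOn (parabolic_mono cs hYX hw) (refl_simpleRoot_mem_supportedOn ht hg.1.2)

end IsFullRoot

/-- The generators in `X` whose reflection does not increase the root `g`. -/
def dominantPart (D : GeomRep cs) (X : Set ι) (g : ι → ℝ) : Set ι :=
  {z ∈ X | 0 ≤ D.form g (α z)}

/-- The union of the components of `dominantPart D X g` orthogonal to `g`. -/
def nullPart (D : GeomRep cs) (X : Set ι) (g : ι → ℝ) : Set ι :=
  ⋃₀ {Q | Q ⊆ dominantPart D X g ∧ (∀ q ∈ Q, D.form g (α q) = 0) ∧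
    ∀ q ∈ Q, ∀ j ∈ dominantPart D X g, j ∉ Q → M q j = 2}

theorem dominantPart_subset : dominantPart D X g ⊆ X := Set.sep_subset _ _

theorem nullPart_subset_dominantPart : nullPart D X g ⊆ dominantPart D X g :=
  Set.sUnion_subset fun _ hQ => hQ.1

theorem form_eq_zero_of_mem_nullPart : ∀ q ∈ nullPart D X g, D.form g (α q) = 0 := by
  rintro q ⟨Q, ⟨-, hQ, -⟩, hq⟩
  exact hQ q hq

theorem apply_eq_two_of_mem_nullPart :
    ∀ q ∈ nullPart D X g, ∀ j ∈ dominantPart D X g, j ∉ nullPart D X g → M q j = 2 := by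
  rintro q ⟨Q, hQ, hq⟩ j hj hjQ
  exact hQ.2.2 q hq j hj fun h => hjQ ⟨Q, hQ, h⟩

/- Restricted to this set, `g` lies in the closed dominant chamber and is nonzero on every
component, so the form is positive definite there. -/
theorem IsFullRoot.isSpherical_dominantPart_diff_nullPart (hg : IsFullRoot D X g) :
    IsSpherical cs (dominantPart D X g \ nullPart D X g) := by
  classical
  set J := dominantPart D X g \ nullPart D X g
  set p : ι → ℝ := fun i => if i ∈ J then g i else 0 with hp
  have hform : ∀ i ∈ J, D.form g (α i) ≤ D.form p (α i) := by
    intro i hi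
    rw [form_simpleRoot_right, form_simpleRoot_right]
    refine Finset.sum_le_sum fun s _ => ?_
    by_cases hs : s ∈ J
    · simp [hp, hs]
    · simp only [hp, hs, if_false, zero_mul]
      exact mul_nonpos_of_nonneg_of_nonpos (hg.1.1.nonneg s)
        (D.gram_nonpos fun h => hs (h ▸ hi))
  refine finite_parabolic_of_finite_posRootsOn (finite_posRootsOn_of_forall_form_pos fun v hv hne =>
    form_self_pos_of_forall_exists_form_pos (p := p) (fun i hi => ?_) (fun i hi => ?_)
      (fun i hi => hi.1.2.trans (hform i hi)) (fun L hL ⟨i, hi⟩ hperp => ?_) hv hne)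
  · simpa only [hp, hi, if_true] using hg.2 i hi.1.1
  · simp only [hp, hi, if_false]
  · by_contra! hcon
    refine (hL hi).2 ⟨L, ⟨fun i hi => (hL hi).1, fun q hq =>
      ((hform q (hL hq)).trans (hcon q hq)).antisymm (hL hq).1.2, fun q hq j hj hj' => ?_⟩, hi⟩
    by_cases hjQ : j ∈ nullPart D X g
    · rw [M.symmetric]
      exact apply_eq_two_of_mem_nullPart j hjQ q (hL hq).1 (hL hq).2
    · exact (D.gram_eq_zero_iff (by rintro rfl; exact hj' hq)).mp (hperp q hq j ⟨⟨hj, hjQ⟩, hj'⟩)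

/-- The data of the induction step for the sign `ε` on `X`: the sign is known on the two-spherical
extensions of `X` and, in the infinite case, almost everywhere on `X`. -/
structure InductiveSign (D G : GeomRep cs) (φ : (ι → ℝ) →ₗ[ℝ] (ι → ℝ)) (X : Set ι) (ε : ℝ) :
    Prop where
  isIrreducible : IsIrreducible M X
  twoSpherical : TwoSpherical M X
  ne_zero : ε ≠ 0
  hasSign_insert : ∀ c ∈ outerVertices M X, TwoSpherical M (insert c X) →
    HasSign D G φ (insert c X) ε
  almostPositiveOn : ¬ IsSpherical cs X → AlmostPositiveOn D G φ X ε
  exists_twoSpherical_insert : IsSpherical cs X →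
    ∃ c ∈ outerVertices M X, TwoSpherical M (insert c X)

/-- The map `φ` has sign `ε` at each root with support `X` of height larger than that of `g`. -/
def PositiveAbove (D G : GeomRep cs) (φ : (ι → ℝ) →ₗ[ℝ] (ι → ℝ)) (X : Set ι) (ε : ℝ)
    (g : ι → ℝ) : Prop :=
  ∀ g', IsFullRoot D X g' → height g < height g' → ∀ v, D.form g' (α v) ≤ -1 →
    PositiveOnWall G φ ε g' v

theorem PositiveAbove.pos_map_ρ_simpleRoot (h : PositiveAbove D G φ X ε g)
    (hg : IsFullRoot D X g) (hYX : Y ⊆ X) (hw : w ∈ parabolic cs Y) (hwg : D.ρ w g = g)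
    (ht : t ∈ X) (htY : t ∉ Y) (hB : D.form g (α t) < 0) (hvX : v ∉ X) {z : ι} (hz : z ∈ X)
    (hM : M z v = 0) (hx : x ∈ G.titsInterior) (hxv : x (φ (α v)) = 0)
    (hneg : ε * x (φ g) ≤ 0) : 0 < ε * x (φ (D.ρ w (α t))) := by
  have hfull := hg.ρ_refl_simpleRoot hYX hw hwg ht htY hB
  have heq : D.ρ w (D.refl (α t) g) = g + (-(2 * D.form g (α t))) • D.ρ w (α t) := by
    rw [refl_apply, map_sub, map_smul, hwg, neg_smul, sub_eq_add_neg]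
  have hlt : height g < height (D.ρ w (D.refl (α t) g)) := by
    rw [heq, map_add, map_smul, smul_eq_mul]
    nlinarith [(isPosRoot_ρ_simpleRoot (D := D) hw htY).one_le_height]
  have hpos := h _ hfull hlt v (hfull.form_le_neg_one hvX hz hM) x hx hxv
  rw [heq, map_add, map_smul, map_add, map_smul, smul_eq_mul, mul_add] at hpos
  refine (mul_pos_iff_of_pos_left (show 0 < -(2 * D.form g (α t)) by linarith)).mp ?_
  linarith

namespace InductiveSign

variable (H : InductiveSign D G φ X ε)
include H

theorem positiveOnWall_of_twoSpherical (C : AngleRealization D G a φ) (hg : IsFullRoot D X g)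
    (hB : D.form g (α v) ≤ -1) (hvX : TwoSpherical M (insert v X)) :
    PositiveOnWall G φ ε g v := by
  have hg' : g ∈ D.posRootsOn (insert v X) :=
    ⟨hg.1.1, supportedOn_mono (Set.subset_insert _ _) hg.1.2⟩
  refine C.positiveOnWall_of_almostPositiveOn hvX hg' (Set.mem_insert _ _) hB H.ne_zero ?_
  have hS : ¬ IsSpherical cs (insert v X) := not_isSpherical_of_form_le_neg_one hg'
    (simpleRoot_mem_posRootsOn (Set.mem_insert _ _)) hB
  by_cases hv : v ∈ X
  · rw [Set.insert_eq_of_mem hv] at hS ⊢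
    exact H.almostPositiveOn hS
  · have hm := hg.mem_outerVertices hv (by linarith)
    exact (H.hasSign_insert v hm hvX _ subset_rfl
      (H.isIrreducible.insert_of_mem_outerVertices hm) hvX).2 hS

/- The reflection in `α c` raises `g` and fixes the points of the wall of `φ (α c)`, where the sign
of the raised root is known. -/
theorem positiveOnWall_of_adjacent (C : AngleRealization D G a φ) (hg : IsFullRoot D X g)
    (hIH : PositiveAbove D G φ X ε g) {c : ι} (hBc : D.form g (α c) < 0)
    (hc : TwoSpherical M (insert c X)) (hM : M c v ≠ 0) (hv : ¬ TwoSpherical M (insert v X)) :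
    PositiveOnWall G φ ε g v := by
  obtain ⟨hvX, z, hz, hMz⟩ := H.twoSpherical.exists_apply_eq_zero hv
  have hvc : v ≠ c := fun h => hv (h ▸ hc)
  have hr := hg.refl_simpleRoot hBc
  have hBv : D.form (D.refl (α c) g) (α v) ≤ -1 :=
    hr.form_le_neg_one (not_or.mpr ⟨hvc, hvX⟩) (.inr hz) hMz
  have hraised : PositiveOnWall G φ ε (D.refl (α c) g) v := by
    by_cases hcX : c ∈ X
    · rw [Set.insert_eq_of_mem hcX] at hr
      exact hIH _ hr (by rw [height_refl_simpleRoot]; linarith) v hBv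
    · have hm := hg.mem_outerVertices hcX hBc.ne
      exact (H.hasSign_insert c hm hc _ subset_rfl
        (H.isIrreducible.insert_of_mem_outerVertices hm) hc).1 _ hr v hBv
  obtain ⟨y, hy, hyc, hyv⟩ := C.exists_titsInterior_apply_eq_zero₂ hM
  refine C.positiveOnWall_of_pos H.twoSpherical hg.1 (hg.form_le_neg_one hvX hz hMz) hy hyv ?_
  simpa [refl_apply, hyc] using hraised y hy hyv

theorem twoSpherical_or_positiveOnWall (C : AngleRealization D G a φ) (hg : IsFullRoot D X g)
    (hIH : PositiveAbove D G φ X ε g) {P : Set ι} (hP : ∀ m ∈ P, D.form g (α m) < 0) {n : ι}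
    (hn : TwoSpherical M (insert n X))
    (hpath : Relation.ReflTransGen (fun s t => s ∈ P ∧ t ∈ P ∧ M s t ≠ 0) n v) :
    TwoSpherical M (insert v X) ∨ PositiveOnWall G φ ε g v := by
  induction hpath with
  | refl => exact .inl hn
  | @tail b c _ hbc ih =>
    obtain ⟨hb, -, hM⟩ := hbc
    refine or_iff_not_imp_left.mpr fun hc => ?_
    rcases ih with hbX | hpos
    · exact H.positiveOnWall_of_adjacent C hg hIH (hP b hb) hbX hM hc
    · obtain ⟨hcX, z, hz, hMz⟩ := H.twoSpherical.exists_apply_eq_zero hc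
      obtain ⟨y, hy, hyb, hyc⟩ := C.exists_titsInterior_apply_eq_zero₂ hM
      exact C.positiveOnWall_of_pos H.twoSpherical hg.1 (hg.form_le_neg_one hcX hz hMz) hy hyc
        (hpos y hy hyb)

/- Twist-rigidity provides a chain of outer vertices of a component `J` from `v` to a generator `n`
with `insert n X` two-spherical; the reflections in all of them raise `g`. -/
theorem positiveOnWall_of_exists_apply_ne_two (hT : IsTwistRigidSystem cs)
    (C : AngleRealization D G a φ) (hg : IsFullRoot D X g) (hIH : PositiveAbove D G φ X ε g)
    (hv : ¬ TwoSpherical M (insert v X))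
    (hJv : ∃ j ∈ dominantPart D X g \ nullPart D X g, M j v ≠ 2) : PositiveOnWall G φ ε g v := by
  obtain ⟨J, hJsub, hJ, hJperp, j, hj, hjv⟩ := exists_isIrreducible_of_apply_ne_two
    (Y := dominantPart D X g) (fun i hi j hj hj' => by
      rw [M.symmetric]
      exact apply_eq_two_of_mem_nullPart j (by_contra fun h => hj' ⟨hj, h⟩) i hi.1 hi.2) hJv
  have hJX : J ⊆ X := fun i hi => (hJsub hi).1.1
  have hJS : IsSpherical cs J := hg.isSpherical_dominantPart_diff_nullPart.mono hJsub
  have hneg : ∀ m ∈ outerVertices M J, D.form g (α m) < 0 := by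
    rintro m ⟨hmJ, j, hj, hM⟩
    by_cases hmX : m ∈ X
    · by_contra h
      exact hM (hJperp j hj m ⟨hmX, not_lt.mp h⟩ hmJ)
    · exact hg.form_neg ⟨hmX, j, hJX hj, hM⟩
  have hvX := (H.twoSpherical.exists_apply_eq_zero hv).1
  have hvJ : v ∈ outerVertices M J := ⟨fun h => hvX (hJX h), j, hj, hjv⟩
  obtain ⟨n, hnJ, hn⟩ : ∃ n ∈ outerVertices M J, TwoSpherical M (insert n X) := by
    by_cases hXJ : X ⊆ J
    · obtain rfl := hXJ.antisymm hJX
      exact H.exists_twoSpherical_insert hJS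
    · obtain ⟨n, hnX, hn⟩ := H.isIrreducible.exists_mem_outerVertices hJ.1 hJX hXJ
      exact ⟨n, hn, by rw [Set.insert_eq_of_mem hnX]; exact H.twoSpherical⟩
  exact (H.twoSpherical_or_positiveOnWall C hg hIH hneg hn (hT J hJ hJS n hnJ v hvJ)).resolve_left
    hv

theorem exists_parabolic_nonneg (hYX : Y ⊆ X) (hx : x ∈ G.titsInterior) :
    ∃ w ∈ parabolic cs Y, ∀ q ∈ Y, 0 ≤ ε * x (φ (D.ρ w (α q))) := by
  refine exists_parabolic_forall_nonneg (G := D) (ε • (x ∘ₗ φ)) Y ?_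
  by_cases hS : IsSpherical cs X
  · exact (finite_posRootsOn_of_finite_parabolic hS).subset fun v hv =>
      ⟨hv.1.1, supportedOn_mono hYX hv.1.2⟩
  · exact (H.almostPositiveOn hS x hx).subset fun v hv =>
      ⟨⟨hv.1.1, supportedOn_mono hYX hv.1.2⟩, hv.2⟩

/- At a point of the wall of `φ (α v)` fixed by the spherical part, a nonpositive value of `ε • φ g`
would be a nonnegative combination of the nonnegative values of `ε • φ` at the roots
`ρ w (α z)`. -/
theorem positiveOnWall_of_forall_apply_eq_two (C : AngleRealization D G a φ)
    (hg : IsFullRoot D X g) (hIH : PositiveAbove D G φ X ε g) (hB : D.form g (α v) ≤ -1)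
    (hv : ¬ TwoSpherical M (insert v X))
    (hJv : ∀ j ∈ dominantPart D X g \ nullPart D X g, M j v = 2) : PositiveOnWall G φ ε g v := by
  obtain ⟨hvX, z₀, hz₀, hM⟩ := H.twoSpherical.exists_apply_eq_zero hv
  obtain ⟨x, hx, hxv, hxJ⟩ := C.exists_titsInterior_apply_eq_zero_of_isSpherical
    hg.isSpherical_dominantPart_diff_nullPart hJv
  refine C.positiveOnWall_of_pos H.twoSpherical hg.1 hB hx hxv ?_
  by_contra hcon
  have hlt : ε * x (φ g) < 0 := lt_of_le_of_ne (not_lt.mp hcon)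
    (mul_ne_zero H.ne_zero (C.apply_map_ne_zero H.twoSpherical hg.1 hB hx hxv))
  have hQX : nullPart D X g ⊆ X := nullPart_subset_dominantPart.trans dominantPart_subset
  obtain ⟨w, hw, hwq⟩ := H.exists_parabolic_nonneg hQX hx
  have hwg : D.ρ w g = g := ρ_eq_self_of_form_eq_zero form_eq_zero_of_mem_nullPart hw
  have hnonneg : ∀ z ∈ X, 0 ≤ ε * x (φ (D.ρ w (α z))) := by
    intro z hz
    by_cases hzQ : z ∈ nullPart D X g
    · exact hwq z hzQ
    by_cases hzY : z ∈ dominantPart D X g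
    · rw [ρ_eq_self_of_form_eq_zero (fun q hq => ?_) hw, hxJ z ⟨hzY, hzQ⟩, mul_zero]
      rw [form_simpleRoot, D.gram_eq_zero_iff (by rintro rfl; exact hzQ hq), M.symmetric]
      exact apply_eq_two_of_mem_nullPart q hq z hzY hzQ
    · exact (hIH.pos_map_ρ_simpleRoot hg hQX hw hwg hz hzQ (not_le.mp fun h => hzY ⟨hz, h⟩) hvX hz₀
        hM hx hxv hlt.le).le
  have hsum : ε * x (φ g) = ∑ z, g z * (ε * x (φ (D.ρ w (α z)))) := by
    conv_lhs => rw [← hwg, eq_sum_smul_simpleRoot g]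
    simp only [map_sum, map_smul, smul_eq_mul, Finset.mul_sum]
    exact Finset.sum_congr rfl fun z _ => mul_left_comm _ _ _
  refine hlt.not_ge (hsum ▸ Finset.sum_nonneg fun z _ => ?_)
  by_cases hz : z ∈ X
  · exact mul_nonneg (hg.1.1.nonneg z) (hnonneg z hz)
  · rw [hg.1.2 z hz, zero_mul]

theorem positiveOnWall (hT : IsTwistRigidSystem cs) (C : AngleRealization D G a φ)
    (hg : IsFullRoot D X g) (hIH : PositiveAbove D G φ X ε g) (hB : D.form g (α v) ≤ -1) :
    PositiveOnWall G φ ε g v := by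
  by_cases hv : TwoSpherical M (insert v X)
  · exact H.positiveOnWall_of_twoSpherical C hg hB hv
  by_cases hJv : ∃ j ∈ dominantPart D X g \ nullPart D X g, M j v ≠ 2
  · exact H.positiveOnWall_of_exists_apply_ne_two hT C hg hIH hv hJv
  · push Not at hJv
    exact H.positiveOnWall_of_forall_apply_eq_two C hg hIH hB hv hJv

theorem finite_setOf_not_positiveOnWall (C : AngleRealization D G a φ) :
    {g | IsFullRoot D X g ∧ ∃ v, D.form g (α v) ≤ -1 ∧ ¬ PositiveOnWall G φ ε g v}.Finite := by
  by_cases hS : IsSpherical cs X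
  · exact (finite_posRootsOn_of_finite_parabolic (G := D) hS).subset fun g hg => hg.1.1
  · choose y hy hyv using C.exists_titsInterior_apply_eq_zero
    refine (Set.finite_iUnion fun v => H.almostPositiveOn hS (y v) (hy v)).subset ?_
    rintro g ⟨hg, v, hB, hbad⟩
    refine Set.mem_iUnion.mpr ⟨v, hg.1, lt_of_le_of_ne (not_lt.mp fun h => hbad ?_)
      (mul_ne_zero H.ne_zero (C.apply_map_ne_zero H.twoSpherical hg.1 hB (hy v) (hyv v)))⟩
    exact C.positiveOnWall_of_pos H.twoSpherical hg.1 hB (hy v) (hyv v) h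

theorem hasWallSign (hT : IsTwistRigidSystem cs) (C : AngleRealization D G a φ) :
    HasWallSign D G φ X ε := by
  by_contra hcon
  simp only [HasWallSign, not_forall] at hcon
  obtain ⟨g, hg, v, hB, hbad⟩ := hcon
  obtain ⟨g, ⟨hg, v, hB, hbad⟩, hmax⟩ := Set.exists_max_image _ height
    (H.finite_setOf_not_positiveOnWall C) ⟨g, hg, v, hB, hbad⟩
  refine hbad (H.positiveOnWall hT C hg (fun g' hg' hlt v' hB' => ?_) hB)
  by_contra h
  exact (hmax g' ⟨hg', v', hB', h⟩).not_gt hlt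

end InductiveSign

end Propagation

section Links

variable {ι W : Type*} [Fintype ι] [DecidableEq ι] [Group W] {M : CoxeterMatrix ι}
  {cs : CoxeterSystem M W} {D : GeomRep cs} {X : Set ι} {g : ι → ℝ} {s t u : ι}

theorem form_simpleRoot_nonpos_of_apply_eq_zero (hg : D.IsPosRoot g) (hgu : g u = 0) :
    D.form g (α u) ≤ 0 := by
  rw [form_simpleRoot_right]
  refine Finset.sum_nonpos fun i _ => ?_
  rcases eq_or_ne i u with rfl | hi
  · rw [hgu, zero_mul]
  · exact mul_nonpos_of_nonneg_of_nonpos (hg.nonneg i) (D.gram_nonpos hi)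

omit [Fintype ι] [DecidableEq ι] in
theorem gram_neg_of_apply_ne_two (D : GeomRep cs) (hne : u ≠ t) (hM : M u t ≠ 2) :
    D.gram u t < 0 :=
  (D.gram_nonpos hne).lt_of_ne fun h => hM ((D.gram_eq_zero_iff hne).mp h)

omit [Fintype ι] [DecidableEq ι] in
theorem gram_le_neg_half [Finite ι] (D : GeomRep cs) (hne : u ≠ t) (hM : M u t ≠ 2) :
    D.gram u t ≤ -1 / 2 := by
  classical
  cases nonempty_fintype ι
  have hroot : D.IsPosRoot (D.refl (α t) (α u)) := (D.isPosRoot_simpleRoot u).refl_simpleRoot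
    fun h => by simpa [simpleRoot_of_ne hne] using congrFun h u
  have hcoeff : D.refl (α t) (α u) t = -2 * D.gram u t := by
    simp [refl_apply, simpleRoot_of_ne hne.symm]
  rcases hroot.2 t with h | h <;> linarith [gram_neg_of_apply_ne_two D hne hM]

theorem refl_mem_parabolicOrbit_of_mem {h : ι → ℝ} (hs : s ∈ X) (hg : g ∈ parabolicOrbit D X s)
    (hh : h ∈ parabolicOrbit D X t) : D.refl g h ∈ parabolicOrbit D X t := by
  obtain ⟨w, hw, rfl⟩ := hg
  obtain ⟨w', hw', rfl⟩ := hh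
  refine ⟨w * cs.simple s * w⁻¹ * w',
    mul_mem (mul_mem (mul_mem hw (simple_mem_parabolic cs hs)) (inv_mem hw)) hw', ?_⟩
  rw [map_mul, Module.End.mul_apply, ρ_conj_eq_refl D (D.ρ_simple s)]

theorem simpleRoot_mem_parabolicOrbit_of_gram (ht : t ∈ X) (hu : u ∈ X)
    (hgram : D.gram u t = -1 / 2) (h : α t ∈ parabolicOrbit D X s) :
    α u ∈ parabolicOrbit D X s := by
  have heq : D.refl (α t) (D.refl (α u) (α t)) = α u := by
    simp only [refl_apply, map_sub, map_smul, form_simpleRoot, gram_self, D.gram_comm t u, hgram]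
    module
  exact heq ▸ refl_mem_parabolicOrbit ht (refl_mem_parabolicOrbit hu h)

/-- A root `g` and a simple root `α t` supported on `X`, in the orbits of `α s₀` and `α t₀`, such
that the reflection in `α t` raises `g`. -/
structure IsLinked (D : GeomRep cs) (X : Set ι) (s₀ t₀ : ι) (g : ι → ℝ) (t : ι) : Prop where
  mem_posRootsOn : g ∈ D.posRootsOn X
  mem_parabolicOrbit : g ∈ parabolicOrbit D X s₀
  mem : t ∈ X
  simpleRoot_mem_parabolicOrbit : α t ∈ parabolicOrbit D X t₀
  form_neg : D.form g (α t) < 0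

/-- Linked pairs for which the root `g` has maximal height. -/
structure IsMaximallyLinked (D : GeomRep cs) (X : Set ι) (s₀ t₀ : ι) (g : ι → ℝ) (t : ι) : Prop
    extends IsLinked D X s₀ t₀ g t where
  height_le : ∀ g' t', IsLinked D X s₀ t₀ g' t' → height g' ≤ height g

theorem exists_isMaximallyLinked (hS : IsSpherical cs X) {s₀ t₀ : ι} (hs₀ : s₀ ∈ X) (ht₀ : t₀ ∈ X)
    (hne : s₀ ≠ t₀) (hM : M s₀ t₀ ≠ 2) : ∃ g t, IsMaximallyLinked D X s₀ t₀ g t := by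
  have hfin : {p : (ι → ℝ) × ι | IsLinked D X s₀ t₀ p.1 p.2}.Finite :=
    ((finite_posRootsOn_of_finite_parabolic hS).prod Set.finite_univ).subset
      fun p hp => ⟨hp.mem_posRootsOn, Set.mem_univ _⟩
  obtain ⟨⟨g, t⟩, h, hmax⟩ := Set.exists_max_image _ (fun p => height p.1) hfin
    ⟨(α s₀, t₀), simpleRoot_mem_posRootsOn hs₀, simpleRoot_mem_parabolicOrbit s₀, ht₀,
      simpleRoot_mem_parabolicOrbit t₀, by
        rw [form_simpleRoot]
        exact gram_neg_of_apply_ne_two D hne hM⟩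
  exact ⟨g, t, h, fun g' t' h' => hmax (g', t') h'⟩

theorem IsIrreducible.exists_apply_ne_two_of_form_nonneg (hI : IsIrreducible M X)
    (hg : D.IsPosRoot g) (ht : t ∈ X) (hdom : ∀ u ∈ X, u ≠ t → 0 ≤ D.form g (α u))
    (hnull : ∃ u ∈ X, u ≠ t ∧ g u = 0) : ∃ u ∈ X, u ≠ t ∧ g u = 0 ∧ M u t ≠ 2 := by
  by_contra! hcon
  refine (hI.2 {u ∈ X | u ≠ t ∧ g u = 0} (Set.sep_subset _ _) hnull (fun i hi j hj hj' => ?_)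
    ht).2.1 rfl
  obtain ⟨hiX, hit, hgi⟩ := hi
  rcases eq_or_ne j t with rfl | hjt
  · exact hcon i hiX hit hgi
  · by_contra hM
    have hgj : 0 < g j := lt_of_le_of_ne' (hg.nonneg j) fun h => hj' ⟨hj, hjt, h⟩
    exact (hdom i hiX hit).not_gt
      (form_simpleRoot_neg_of_pos hg.nonneg hgi hgj (by rwa [M.symmetric]))

namespace IsLinked

variable {s₀ t₀ : ι}

theorem form_refl_simpleRoot (hgu : D.form g (α u) = 0) :
    D.form (D.refl (α t) g) (α u) = -2 * D.form g (α t) * D.gram u t := by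
  simp only [refl_apply, map_sub, map_smul, LinearMap.sub_apply, LinearMap.smul_apply,
    form_simpleRoot, smul_eq_mul, hgu, D.gram_comm t u]
  ring

variable (h : IsLinked D X s₀ t₀ g t)
include h

theorem refl_of_form_neg (hu : u ∈ X) (hut : u ≠ t) (hgu : D.form g (α u) < 0) :
    IsLinked D X s₀ t₀ (D.refl (α u) g) t where
  mem_posRootsOn := refl_simpleRoot_mem_posRootsOn h.mem_posRootsOn hu hgu
  mem_parabolicOrbit := refl_mem_parabolicOrbit hu h.mem_parabolicOrbit
  mem := h.mem
  simpleRoot_mem_parabolicOrbit := h.simpleRoot_mem_parabolicOrbit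
  form_neg := by
    simp only [refl_apply, map_sub, map_smul, LinearMap.sub_apply, LinearMap.smul_apply,
      form_simpleRoot, smul_eq_mul]
    nlinarith [h.form_neg, mul_nonneg_of_nonpos_of_nonpos hgu.le (D.gram_nonpos hut)]

theorem refl_of_gram_eq (hu : u ∈ X) (hgu : D.form g (α u) = 0) (hgram : D.gram u t = -1 / 2) :
    IsLinked D X s₀ t₀ (D.refl (α t) g) u where
  mem_posRootsOn := refl_simpleRoot_mem_posRootsOn h.mem_posRootsOn h.mem h.form_neg
  mem_parabolicOrbit := refl_mem_parabolicOrbit h.mem h.mem_parabolicOrbit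
  mem := hu
  simpleRoot_mem_parabolicOrbit :=
    simpleRoot_mem_parabolicOrbit_of_gram h.mem hu hgram h.simpleRoot_mem_parabolicOrbit
  form_neg := by
    rw [form_refl_simpleRoot hgu, hgram]
    linarith [h.form_neg]

theorem refl_refl_of_gram_lt (hu : u ∈ X) (hgu : D.form g (α u) = 0)
    (hgram : D.gram u t < -1 / 2) : IsLinked D X s₀ t₀ (D.refl (α u) (D.refl (α t) g)) t where
  mem_posRootsOn := by
    refine refl_simpleRoot_mem_posRootsOn
      (refl_simpleRoot_mem_posRootsOn h.mem_posRootsOn h.mem h.form_neg) hu ?_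
    rw [form_refl_simpleRoot hgu]
    nlinarith [h.form_neg]
  mem_parabolicOrbit :=
    refl_mem_parabolicOrbit hu (refl_mem_parabolicOrbit h.mem h.mem_parabolicOrbit)
  mem := h.mem
  simpleRoot_mem_parabolicOrbit := h.simpleRoot_mem_parabolicOrbit
  form_neg := by
    rw [refl_apply, form_refl_simpleRoot hgu, refl_apply]
    simp only [map_sub, map_smul, LinearMap.sub_apply, LinearMap.smul_apply, form_simpleRoot,
      smul_eq_mul, gram_self]
    have hsq : 1 < 4 * (D.gram u t * D.gram u t) := by nlinarith
    nlinarith [h.form_neg]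

theorem isFullRoot_refl_simpleRoot (hfull : ∀ u ∈ X, u ≠ t → 0 < g u) :
    IsFullRoot D X (D.refl (α t) g) := by
  refine ⟨refl_simpleRoot_mem_posRootsOn h.mem_posRootsOn h.mem h.form_neg, fun s hs => ?_⟩
  rcases eq_or_ne s t with rfl | hst
  · rw [refl_apply, Pi.sub_apply, Pi.smul_apply, simpleRoot_self, smul_eq_mul]
    linarith [h.mem_posRootsOn.1.nonneg s, h.form_neg]
  · rw [refl_simpleRoot_apply_of_ne _ _ hst]
    exact hfull s hs hst

theorem isFullRoot_refl (hfull : ∀ u ∈ X, u ≠ t → 0 < g u) :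
    IsFullRoot D X (D.refl g (α t)) := by
  have hneg := h.form_neg
  have heq (s : ι) : D.refl g (α t) s = (α t : ι → ℝ) s + -2 * D.form g (α t) * g s := by
    rw [refl_apply, D.form_comm, Pi.sub_apply, Pi.smul_apply, smul_eq_mul]
    ring
  have hpos : ∀ s ∈ X, 0 < D.refl g (α t) s := by
    intro s hs
    rw [heq]
    rcases eq_or_ne s t with rfl | hst
    · rw [simpleRoot_self]
      nlinarith [h.mem_posRootsOn.1.nonneg s]
    · rw [simpleRoot_of_ne hst]
      nlinarith [hfull s hs hst]
  refine ⟨⟨(h.mem_posRootsOn.1.isRoot.refl (D.isRoot_simpleRoot t)).isPosRoot_of_pos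
    (hpos t h.mem), ?_⟩, hpos⟩
  rw [refl_apply]
  exact sub_mem (simpleRoot_mem_supportedOn h.mem) (Submodule.smul_mem _ _ h.mem_posRootsOn.2)

end IsLinked

namespace IsMaximallyLinked

variable {s₀ t₀ : ι} (h : IsMaximallyLinked D X s₀ t₀ g t)
include h

theorem form_nonneg (hu : u ∈ X) (hut : u ≠ t) : 0 ≤ D.form g (α u) := by
  by_contra! hneg
  have := h.height_le _ _ (h.refl_of_form_neg hu hut hneg)
  rw [height_refl_simpleRoot] at this
  linarith

theorem pos (hI : IsIrreducible M X) (hu : u ∈ X) (hut : u ≠ t) : 0 < g u := by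
  have hg := h.mem_posRootsOn.1
  refine lt_of_le_of_ne' (hg.nonneg u) fun hgu => ?_
  obtain ⟨u, hu, hut, hgu, hM⟩ := hI.exists_apply_ne_two_of_form_nonneg hg h.mem
    (fun _ => h.form_nonneg) ⟨u, hu, hut, hgu⟩
  have hzero : D.form g (α u) = 0 :=
    (form_simpleRoot_nonpos_of_apply_eq_zero hg hgu).antisymm (h.form_nonneg hu hut)
  rcases (gram_le_neg_half D hut hM).lt_or_eq with hlt | heq
  · have hle := h.height_le _ _ (h.refl_refl_of_gram_lt hu hzero hlt)
    rw [height_refl_simpleRoot, height_refl_simpleRoot,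
      IsLinked.form_refl_simpleRoot hzero] at hle
    nlinarith [h.form_neg]
  · have hle := h.height_le _ _ (h.refl_of_gram_eq hu hzero heq)
    rw [height_refl_simpleRoot] at hle
    linarith [h.form_neg]

end IsMaximallyLinked

theorem IsIrreducible.exists_isFullRoot_eq_smul_add_smul (hI : IsIrreducible M X)
    (hS : IsSpherical cs X) {s₀ t₀ : ι} (hs₀ : s₀ ∈ X) (ht₀ : t₀ ∈ X) (hne : s₀ ≠ t₀)
    (hM : M s₀ t₀ ≠ 2) : ∃ g₁ ∈ parabolicOrbit D X s₀, ∃ g₂ ∈ parabolicOrbit D X t₀,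
      IsFullRoot D X g₁ ∧ IsFullRoot D X g₂ ∧
        ∃ l > (0 : ℝ), ∃ m : ℝ, ∃ t ∈ X, g₂ = l • g₁ + m • α t := by
  obtain ⟨g, t, h⟩ := exists_isMaximallyLinked (D := D) hS hs₀ ht₀ hne hM
  have hfull : ∀ u ∈ X, u ≠ t → 0 < g u := fun _ => h.pos hI
  refine ⟨_, refl_mem_parabolicOrbit h.mem h.mem_parabolicOrbit, _,
    refl_mem_parabolicOrbit_of_mem hs₀ h.mem_parabolicOrbit h.simpleRoot_mem_parabolicOrbit,
    h.isFullRoot_refl_simpleRoot hfull, h.isFullRoot_refl hfull, -2 * D.form g (α t), ?_,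
    1 - 4 * D.form g (α t) ^ 2, t, h.mem, ?_⟩
  · linarith [h.form_neg]
  · rw [refl_apply, refl_apply, D.form_comm (α t) g]
    module

end Links

section MaximalSpherical

variable {ι W : Type*} [Fintype ι] [DecidableEq ι] [Group W] {M : CoxeterMatrix ι}
  {cs : CoxeterSystem M W} {D G : GeomRep cs} {a : MulAut W} {φ : (ι → ℝ) →ₗ[ℝ] (ι → ℝ)}
  {X : Set ι} {g g₁ g₂ : ι → ℝ} {s t : ι} {ε : ℝ}

/-- An irreducible spherical set with outer vertices, none of which can be added to it without
destroying two-sphericity. -/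
structure IsMaximalSpherical (cs : CoxeterSystem M W) (X : Set ι) : Prop where
  isIrreducible : IsIrreducible M X
  isSpherical : IsSpherical cs X
  not_twoSpherical_insert : ∀ v ∈ outerVertices M X, ¬ TwoSpherical M (insert v X)
  outerVertices_nonempty : (outerVertices M X).Nonempty

/-- The map `φ` has sign `ε` at `g` on the walls of all outer vertices of `X`. -/
def PositiveOnOuterWalls (G : GeomRep cs) (φ : (ι → ℝ) →ₗ[ℝ] (ι → ℝ)) (X : Set ι) (ε : ℝ)
    (g : ι → ℝ) : Prop :=
  ∀ v ∈ outerVertices M X, PositiveOnWall G φ ε g v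

theorem exists_sign_mul_pos {y : ℝ} (hy : y ≠ 0) : ∃ ε : ℝ, (ε = 1 ∨ ε = -1) ∧ 0 < ε * y := by
  rcases hy.lt_or_gt with h | h
  · exact ⟨-1, .inr rfl, by linarith⟩
  · exact ⟨1, .inl rfl, by linarith⟩

/- Otherwise `v` is joined to an irreducible component of `X \ {t}`, which twist-rigidity then has
to connect to `t` through outer vertices of `X` not adjacent to `t`. -/
omit [Fintype ι] [DecidableEq ι] in
theorem IsTwistRigidSystem.apply_eq_two_of_forall_apply_eq_zero [Finite ι]
    (hT : IsTwistRigidSystem cs)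
    (hI : IsIrreducible M X) (hS : IsSpherical cs X) (ht : t ∈ X)
    (hzero : ∀ v ∈ outerVertices M X, M t v = 0) {v : ι} (hv : v ∈ outerVertices M X) {z : ι}
    (hz : z ∈ X) (hzt : z ≠ t) : M z v = 2 := by
  by_contra hM
  obtain ⟨J, hJX, hJI, hJ, j, hj, hjv⟩ := exists_isIrreducible_of_apply_ne_two
    (X := X \ {t}) (Y := X \ {t}) (fun i _ j hj hj' => (hj' hj).elim) ⟨z, ⟨hz, hzt⟩, hM⟩
  have hJX' : J ⊆ X := hJX.trans Set.sdiff_subset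
  have htJ : t ∉ J := fun h => (hJX h).2 rfl
  have hvJ : v ∈ outerVertices M J := ⟨fun h => hv.1 (hJX' h), j, hj, hjv⟩
  have htJ' : t ∈ outerVertices M J := by
    refine ⟨htJ, ?_⟩
    by_contra! hc
    refine htJ (hI.2 J hJX' hJI.1 (fun i hi j hj hj' => ?_) ht)
    rcases eq_or_ne j t with rfl | hjt
    · exact hc i hi
    · exact hJ i hi j ⟨hj, hjt⟩ hj'
  have hvt : v = t := by
    have hchain := hT J hJI (hS.mono hJX') t htJ' v hvJ
    clear hv hvJ hjv hM
    induction hchain with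
    | refl => rfl
    | @tail b c _ hbc ih =>
      subst ih
      by_contra hne
      obtain ⟨hcJ, i, hi, hic⟩ := hbc.2.1
      by_cases hcX : c ∈ X
      · exact hic (hJ i hi c ⟨hcX, hne⟩ hcJ)
      · exact hbc.2.2 (hzero c ⟨hcX, i, hJX' hi, hic⟩)
  exact hv.1 (hvt ▸ ht)

theorem eq_of_mem_parabolicOrbit_of_form_nonneg (h₁ : g₁ ∈ parabolicOrbit D X s)
    (h₂ : g₂ ∈ parabolicOrbit D X s) (hdom₁ : ∀ t ∈ X, 0 ≤ D.form g₁ (α t))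
    (hdom₂ : ∀ t ∈ X, 0 ≤ D.form g₂ (α t)) : g₁ = g₂ := by
  obtain ⟨w₁, hw₁, rfl⟩ := h₁
  obtain ⟨w₂, hw₂, rfl⟩ := h₂
  have heq : D.ρ (w₂ * w₁⁻¹) (D.ρ w₁ (α s)) = D.ρ w₂ (α s) := by
    rw [map_mul, Module.End.mul_apply, ρ_inv_apply_ρ]
  rw [← heq, ρ_eq_self_of_form_nonneg (mul_mem hw₂ (inv_mem hw₁)) hdom₁ (heq ▸ hdom₂)]

namespace IsMaximalSpherical

variable (H : IsMaximalSpherical cs X)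
include H

omit [Fintype ι] [DecidableEq ι] in
theorem twoSpherical [Finite ι] (D : GeomRep cs) : TwoSpherical M X :=
  H.isSpherical.twoSpherical D

theorem form_le_neg_one (hg : IsFullRoot D X g) {v : ι} (hv : v ∈ outerVertices M X) :
    D.form g (α v) ≤ -1 := by
  obtain ⟨hvX, z, hz, hM⟩ :=
    (H.twoSpherical D).exists_apply_eq_zero (H.not_twoSpherical_insert v hv)
  exact hg.form_le_neg_one hvX hz hM

theorem hasWallSign (h : ∀ g, IsFullRoot D X g → PositiveOnOuterWalls G φ X ε g) :
    HasWallSign D G φ X ε := by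
  intro g hg v hgv
  have hvX : v ∉ X := fun hv => not_isSpherical_of_form_le_neg_one hg.1
    (simpleRoot_mem_posRootsOn hv) hgv H.isSpherical
  refine h g hg v ?_
  by_contra hv
  linarith [hg.form_eq_zero hvX hv]

variable (hT : IsTwistRigidSystem cs) (C : AngleRealization D G a φ)
include hT C

/- Twist-rigidity joins any two outer vertices by a chain of adjacent ones, whose consecutive walls
intersect inside the Tits cone. -/
theorem positiveOnOuterWalls_of_pos (hg : IsFullRoot D X g) {v : ι} (hv : v ∈ outerVertices M X)
    {x : (ι → ℝ) →ₗ[ℝ] ℝ} (hx : x ∈ G.titsInterior) (hxv : x (φ (α v)) = 0)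
    (hpos : 0 < ε * x (φ g)) : PositiveOnOuterWalls G φ X ε g := by
  intro u hu
  have hchain := hT X H.isIrreducible H.isSpherical v hv u hu
  clear hu
  induction hchain with
  | refl =>
    exact C.positiveOnWall_of_pos (H.twoSpherical D) hg.1 (H.form_le_neg_one hg hv) hx hxv hpos
  | tail _ hbc ih =>
    obtain ⟨y, hy, hyb, hyc⟩ := C.exists_titsInterior_apply_eq_zero₂ hbc.2.2
    exact C.positiveOnWall_of_pos (H.twoSpherical D) hg.1 (H.form_le_neg_one hg hbc.2.1) hy hyc
      (ih y hy hyb)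

theorem exists_positiveOnOuterWalls (hg : IsFullRoot D X g) :
    ∃ ε : ℝ, (ε = 1 ∨ ε = -1) ∧ PositiveOnOuterWalls G φ X ε g := by
  obtain ⟨v, hv⟩ := H.outerVertices_nonempty
  obtain ⟨x, hx, hxv⟩ := C.exists_titsInterior_apply_eq_zero v
  obtain ⟨ε, hε, hpos⟩ := exists_sign_mul_pos
    (C.apply_map_ne_zero (H.twoSpherical D) hg.1 (H.form_le_neg_one hg hv) hx hxv)
  exact ⟨ε, hε, H.positiveOnOuterWalls_of_pos hT C hg hv hx hxv hpos⟩

/- At a common point of the walls of `φ (α t)` and `φ (α v)` the values at `φ g₁` and `φ g₂` are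
positive multiples of each other. -/
theorem positiveOnOuterWalls_of_eq_smul_add_smul (ht : ∃ v ∈ outerVertices M X, M t v ≠ 0)
    (hg₂ : IsFullRoot D X g₂) (h : PositiveOnOuterWalls G φ X ε g₁) {l m : ℝ} (hl : 0 < l)
    (heq : g₂ = l • g₁ + m • α t) : PositiveOnOuterWalls G φ X ε g₂ := by
  obtain ⟨v, hv, hM⟩ := ht
  obtain ⟨x, hx, hxt, hxv⟩ := C.exists_titsInterior_apply_eq_zero₂ hM
  refine H.positiveOnOuterWalls_of_pos hT C hg₂ hv hx hxv ?_
  rw [heq, map_add, map_smul, map_smul, map_add, map_smul, map_smul, hxt, smul_zero, add_zero,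
    smul_eq_mul, mul_left_comm]
  exact mul_pos hl (h v hv x hx hxv)

theorem positiveOnOuterWalls_refl_iff (hadj : ∃ v ∈ outerVertices M X, M t v ≠ 0) (ht : t ∈ X)
    (hg : IsFullRoot D X g) (hneg : D.form g (α t) < 0) :
    PositiveOnOuterWalls G φ X ε (D.refl (α t) g) ↔ PositiveOnOuterWalls G φ X ε g := by
  have hrefl : IsFullRoot D X (D.refl (α t) g) := by
    simpa only [Set.insert_eq_of_mem ht] using hg.refl_simpleRoot hneg
  constructor <;> intro h
  · refine H.positiveOnOuterWalls_of_eq_smul_add_smul hT C hadj hg h one_pos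
      (m := 2 * D.form g (α t)) ?_
    rw [refl_apply]
    module
  · refine H.positiveOnOuterWalls_of_eq_smul_add_smul hT C hadj hrefl h one_pos
      (m := -(2 * D.form g (α t))) ?_
    rw [refl_apply]
    module

section AllAdjacent

variable (hadj : ∀ t ∈ X, ∃ v ∈ outerVertices M X, M t v ≠ 0)
include hadj

theorem positiveOnOuterWalls_iff_of_form_nonneg {θ : ι → ℝ} (hθ : ∀ t ∈ X, 0 ≤ D.form θ (α t))
    (hθs : θ ∈ parabolicOrbit D X s) (hg : IsFullRoot D X g) (hgs : g ∈ parabolicOrbit D X s) :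
    PositiveOnOuterWalls G φ X ε g ↔ PositiveOnOuterWalls G φ X ε θ := by
  by_contra hcon
  obtain ⟨g, ⟨hg, hgs, hne⟩, hmax⟩ := Set.exists_max_image
    {g | IsFullRoot D X g ∧ g ∈ parabolicOrbit D X s ∧
      ¬ (PositiveOnOuterWalls G φ X ε g ↔ PositiveOnOuterWalls G φ X ε θ)} height
    ((finite_posRootsOn_of_finite_parabolic (G := D) H.isSpherical).subset fun g hg => hg.1.1)
    ⟨g, hg, hgs, hcon⟩
  by_cases hdom : ∀ t ∈ X, 0 ≤ D.form g (α t)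
  · exact hne (by rw [eq_of_mem_parabolicOrbit_of_form_nonneg hgs hθs hdom hθ])
  · push Not at hdom
    obtain ⟨t, ht, hneg⟩ := hdom
    have hrefl : IsFullRoot D X (D.refl (α t) g) := by
      simpa only [Set.insert_eq_of_mem ht] using hg.refl_simpleRoot hneg
    have hle := hmax _ ⟨hrefl, refl_mem_parabolicOrbit ht hgs, by
      rwa [H.positiveOnOuterWalls_refl_iff hT C (hadj t ht) ht hg hneg]⟩
    rw [height_refl_simpleRoot] at hle
    linarith

theorem positiveOnOuterWalls_iff_of_mem_parabolicOrbit (hs : s ∈ X) (hg₁ : IsFullRoot D X g₁)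
    (hg₂ : IsFullRoot D X g₂) (h₁ : g₁ ∈ parabolicOrbit D X s) (h₂ : g₂ ∈ parabolicOrbit D X s) :
    PositiveOnOuterWalls G φ X ε g₁ ↔ PositiveOnOuterWalls G φ X ε g₂ := by
  obtain ⟨θ, -, hθ, hθs⟩ := H.isIrreducible.exists_dominant_isFullRoot (D := D) H.isSpherical hs
  rw [H.positiveOnOuterWalls_iff_of_form_nonneg hT C hadj hθ hθs hg₁ h₁,
    H.positiveOnOuterWalls_iff_of_form_nonneg hT C hadj hθ hθs hg₂ h₂]

theorem exists_hasWallSign_of_forall_adjacent :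
    ∃ ε : ℝ, (ε = 1 ∨ ε = -1) ∧ HasWallSign D G φ X ε := by
  obtain ⟨s₀, hs₀⟩ := H.isIrreducible.1
  obtain ⟨θ, hθ, -, hθs⟩ := H.isIrreducible.exists_dominant_isFullRoot (D := D) H.isSpherical hs₀
  obtain ⟨ε, hε, hpos⟩ := H.exists_positiveOnOuterWalls hT C hθ
  have hall := H.isIrreducible.2 {s ∈ X | ∀ g, IsFullRoot D X g → g ∈ parabolicOrbit D X s →
    PositiveOnOuterWalls G φ X ε g} (Set.sep_subset _ _)
    ⟨s₀, hs₀, fun g hg hgs => (H.positiveOnOuterWalls_iff_of_mem_parabolicOrbit hT C hadj hs₀ hg hθ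
      hgs hθs).mpr hpos⟩ (by
        rintro i ⟨hi, hposi⟩ j hj hj'
        by_contra hM
        have hij : i ≠ j := by
          rintro rfl
          exact hj' ⟨hi, hposi⟩
        obtain ⟨g₁, hg₁i, g₂, hg₂j, hg₁, hg₂, l, hl, m, t, ht, heq⟩ :=
          H.isIrreducible.exists_isFullRoot_eq_smul_add_smul (D := D) H.isSpherical hi hj hij hM
        refine hj' ⟨hj, fun g hg hgj =>
          (H.positiveOnOuterWalls_iff_of_mem_parabolicOrbit hT C hadj hj hg hg₂ hgj hg₂j).mpr ?_⟩
        exact H.positiveOnOuterWalls_of_eq_smul_add_smul hT C (hadj t ht) hg₂ (hposi g₁ hg₁ hg₁i)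
          hl heq)
  refine ⟨ε, hε, H.hasWallSign fun g hg => ?_⟩
  obtain ⟨w, hw, s, hs, rfl⟩ := exists_ρ_simpleRoot_of_mem_posRootsOn hg.1
  exact (hall hs).2 _ hg ⟨w, hw, rfl⟩

end AllAdjacent

/- All roots in `X` vanish at a common point of the walls, up to the multiple of `α t` in them. -/
theorem exists_hasWallSign_of_forall_apply_eq_zero (ht : t ∈ X)
    (hzero : ∀ v ∈ outerVertices M X, M t v = 0) :
    ∃ ε : ℝ, (ε = 1 ∨ ε = -1) ∧ HasWallSign D G φ X ε := by
  obtain ⟨θ, hθ, -⟩ := H.isIrreducible.exists_dominant_isFullRoot (D := D) H.isSpherical ht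
  obtain ⟨ε, hε, hpos⟩ := H.exists_positiveOnOuterWalls hT C hθ
  obtain ⟨v, hv⟩ := H.outerVertices_nonempty
  obtain ⟨x, hx, hxv, hxX⟩ := C.exists_titsInterior_apply_eq_zero_of_isSpherical
    (H.isSpherical.mono (Set.sdiff_subset (t := {t}))) (v := v) fun l hl =>
      hT.apply_eq_two_of_forall_apply_eq_zero H.isIrreducible H.isSpherical ht hzero hv hl.1 hl.2
  have heval : ∀ g, IsFullRoot D X g → x (φ g) = g t * x (φ (α t)) := by
    intro g hg
    conv_lhs => rw [eq_sum_smul_simpleRoot g]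
    simp only [map_sum, map_smul, smul_eq_mul]
    refine Finset.sum_eq_single t (fun s _ hst => ?_) (by simp)
    by_cases hs : s ∈ X
    · rw [hxX s ⟨hs, hst⟩, mul_zero]
    · rw [hg.1.2 s hs, zero_mul]
  refine ⟨ε, hε, H.hasWallSign fun g hg => H.positiveOnOuterWalls_of_pos hT C hg hv hx hxv ?_⟩
  have hθx := hpos v hv x hx hxv
  rw [heval θ hθ, mul_left_comm] at hθx
  rw [heval g hg, mul_left_comm]
  exact mul_pos (hg.2 t ht) (pos_of_mul_pos_right hθx (hθ.2 t ht).le)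

theorem exists_hasWallSign : ∃ ε : ℝ, (ε = 1 ∨ ε = -1) ∧ HasWallSign D G φ X ε := by
  by_cases hadj : ∀ t ∈ X, ∃ v ∈ outerVertices M X, M t v ≠ 0
  · exact H.exists_hasWallSign_of_forall_adjacent hT C hadj
  · push Not at hadj
    obtain ⟨t, ht, hzero⟩ := hadj
    exact H.exists_hasWallSign_of_forall_apply_eq_zero hT C ht hzero

end IsMaximalSpherical

end MaximalSpherical

section ExistenceOfSigns

variable {ι W : Type*} [Fintype ι] [DecidableEq ι] [Group W] {M : CoxeterMatrix ι}
  {cs : CoxeterSystem M W} {D G : GeomRep cs} {a : MulAut W} {φ : (ι → ℝ) →ₗ[ℝ] (ι → ℝ)}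
  {X Y : Set ι} {θ : ι → ℝ} {b c : ι} {ε ε' : ℝ}

theorem AlmostPositiveOn.mono (h : AlmostPositiveOn D G φ Y ε) (hXY : X ⊆ Y) :
    AlmostPositiveOn D G φ X ε :=
  fun x hx => (h x hx).subset fun _ hg => ⟨⟨hg.1.1, supportedOn_mono hXY hg.1.2⟩, hg.2⟩

theorem sign_eq_of_mul_nonneg (hε : ε = 1 ∨ ε = -1) (hε' : ε' = 1 ∨ ε' = -1)
    (h : 0 ≤ ε * ε') : ε = ε' := by
  rcases hε with rfl | rfl <;> rcases hε' with rfl | rfl <;> first | rfl | norm_num at h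

theorem sign_eq_of_mul_pos {y : ℝ} (hε : ε = 1 ∨ ε = -1) (hε' : ε' = 1 ∨ ε' = -1)
    (h : 0 < ε * y) (h' : 0 < ε' * y) : ε = ε' :=
  sign_eq_of_mul_nonneg hε hε' (by nlinarith [mul_pos h h', mul_self_nonneg y])

omit [Fintype ι] [DecidableEq ι] in
theorem TwoSpherical.insert_of_insert (hb : TwoSpherical M (insert b X))
    (hc : TwoSpherical M (insert c X)) (hM : M b c ≠ 0) :
    TwoSpherical M (insert c (insert b X)) := by
  rintro s (rfl | hs) t (rfl | ht)
  · exact hc _ (.inl rfl) _ (.inl rfl)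
  · rcases ht with rfl | ht
    · rwa [M.symmetric]
    · exact hc _ (.inl rfl) _ (.inr ht)
  · rcases hs with rfl | hs
    · exact hM
    · exact hc _ (.inr hs) _ (.inl rfl)
  · exact hb s hs t ht

/-- The map `φ` has sign `ε` in the direction of the outer vertex `c` of `X`: on `insert c X` if
this set is two-spherical, and otherwise at `θ` on the wall of `c`. -/
structure HasSignAt (D G : GeomRep cs) (φ : (ι → ℝ) →ₗ[ℝ] (ι → ℝ)) (X : Set ι) (θ : ι → ℝ)
    (ε : ℝ) (c : ι) : Prop where
  hasSign : TwoSpherical M (insert c X) → HasSign D G φ (insert c X) ε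
  positiveOnWall : ¬ TwoSpherical M (insert c X) → PositiveOnWall G φ ε θ c

theorem InductiveSign.hasSign (H : InductiveSign D G φ X ε)
    (hT : IsTwistRigidSystem cs) (C : AngleRealization D G a φ) : HasSign D G φ X ε :=
  .of_insert H.isIrreducible (H.hasWallSign hT C) H.almostPositiveOn H.hasSign_insert

namespace AngleRealization

variable (C : AngleRealization D G a φ)
include C

/- Compare `θ` with its reflection in `α c`, which has full support on `insert c X`, at a common
point of the walls of `c` and `v`. -/
theorem positiveOnWall_of_hasSign_insert (hI : IsIrreducible M X) (hX : TwoSpherical M X)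
    (hθ : IsFullRoot D X θ) (hc : c ∈ outerVertices M X) (hcX : TwoSpherical M (insert c X))
    (h : HasSign D G φ (insert c X) ε) {v : ι} (hv : ¬ TwoSpherical M (insert v X))
    (hM : M c v ≠ 0) : PositiveOnWall G φ ε θ v := by
  obtain ⟨hvX, z, hz, hMz⟩ := hX.exists_apply_eq_zero hv
  obtain ⟨y, hy, hyc, hyv⟩ := C.exists_titsInterior_apply_eq_zero₂ hM
  refine C.positiveOnWall_of_pos hX hθ.1 (hθ.form_le_neg_one hvX hz hMz) hy hyv ?_
  have hvc : v ∉ insert c X := by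
    rintro (rfl | h)
    · exact hv hcX
    · exact hvX h
  have hrefl := hθ.refl_simpleRoot (hθ.form_neg hc)
  have hpos := (h _ subset_rfl (hI.insert_of_mem_outerVertices hc) hcX).1 _ hrefl v
    (hrefl.form_le_neg_one hvc (Set.mem_insert_of_mem c hz) hMz) y hy hyv
  rw [refl_apply] at hpos
  simpa [hyc] using hpos

theorem hasSign_insert_of_hasSign_insert (hI : IsIrreducible M X)
    (hN : ¬ InSphericalComponent cs X) (hε : ε = 1 ∨ ε = -1) (hε' : ε' = 1 ∨ ε' = -1)
    (hb : b ∈ outerVertices M X) (hc : c ∈ outerVertices M X) (hM : M b c ≠ 0)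
    (hbX : TwoSpherical M (insert b X)) (hcX : TwoSpherical M (insert c X))
    (h : HasSign D G φ (insert b X) ε) (h' : HasSign D G φ (insert c X) ε') :
    HasSign D G φ (insert c X) ε := by
  rcases eq_or_ne c b with rfl | hcb
  · exact h
  have hc' : c ∈ outerVertices M (insert b X) :=
    ⟨fun hmem => hmem.elim hcb hc.1, hc.2.imp fun j hj => ⟨.inr hj.1, hj.2⟩⟩
  have hsub : X ⊆ insert c (insert b X) := (Set.subset_insert _ _).trans (Set.subset_insert _ _)
  rwa [sign_eq_of_mul_nonneg hε hε' (C.mul_nonneg_of_hasSign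
    ((hI.insert_of_mem_outerVertices hb).insert_of_mem_outerVertices hc')
    (hbX.insert_of_insert hcX hM) (fun h => hN (h.mono hsub)) (h.mono (Set.subset_insert _ _))
    (h'.mono (Set.insert_subset_insert (Set.subset_insert _ _))))]

theorem hasSignAt_of_hasSignAt (hI : IsIrreducible M X) (hX : TwoSpherical M X)
    (hN : ¬ InSphericalComponent cs X) (hθ : IsFullRoot D X θ) (hε : ε = 1 ∨ ε = -1)
    (hins : ∀ c ∈ outerVertices M X, TwoSpherical M (insert c X) →
      ∃ ε : ℝ, (ε = 1 ∨ ε = -1) ∧ HasSign D G φ (insert c X) ε)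
    (hb : b ∈ outerVertices M X) (hc : c ∈ outerVertices M X) (hM : M b c ≠ 0)
    (h : HasSignAt D G φ X θ ε b) : HasSignAt D G φ X θ ε c := by
  by_cases hbX : TwoSpherical M (insert b X)
  · refine ⟨fun hcX => ?_, fun hcX =>
      C.positiveOnWall_of_hasSign_insert hI hX hθ hb hbX (h.hasSign hbX) hcX hM⟩
    obtain ⟨ε', hε', h'⟩ := hins c hc hcX
    exact C.hasSign_insert_of_hasSign_insert hI hN hε hε' hb hc hM hbX hcX (h.hasSign hbX) h'
  · have hpos := h.positiveOnWall hbX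
    refine ⟨fun hcX => ?_, fun hcX => ?_⟩
    · obtain ⟨ε', hε', h'⟩ := hins c hc hcX
      obtain ⟨x, hx, hxb⟩ := C.exists_titsInterior_apply_eq_zero b
      have hpos' := C.positiveOnWall_of_hasSign_insert hI hX hθ hc hcX h' hbX
        (by rwa [M.symmetric])
      rwa [sign_eq_of_mul_pos hε hε' (hpos x hx hxb) (hpos' x hx hxb)]
    · obtain ⟨y, hy, hyb, hyc⟩ := C.exists_titsInterior_apply_eq_zero₂ hM
      obtain ⟨hcX', z, hz, hMz⟩ := hX.exists_apply_eq_zero hcX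
      exact C.positiveOnWall_of_pos hX hθ.1 (hθ.form_le_neg_one hcX' hz hMz) hy hyc
        (hpos y hy hyb)

theorem exists_hasSign_insert_of_isSpherical (hT : IsTwistRigidSystem cs) (hI : IsIrreducible M X)
    (hS : IsSpherical cs X) (hN : ¬ InSphericalComponent cs X)
    (hins : ∀ c ∈ outerVertices M X, TwoSpherical M (insert c X) →
      ∃ ε : ℝ, (ε = 1 ∨ ε = -1) ∧ HasSign D G φ (insert c X) ε)
    (hc : c ∈ outerVertices M X) (hcX : TwoSpherical M (insert c X)) :
    ∃ ε : ℝ, (ε = 1 ∨ ε = -1) ∧ ∀ m ∈ outerVertices M X, TwoSpherical M (insert m X) →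
      HasSign D G φ (insert m X) ε := by
  obtain ⟨ε, hε, h⟩ := hins c hc hcX
  obtain ⟨s, hs⟩ := hI.1
  obtain ⟨θ, hθ, -⟩ := hI.exists_dominant_isFullRoot (D := D) hS hs
  suffices ∀ m ∈ outerVertices M X, HasSignAt D G φ X θ ε m from
    ⟨ε, hε, fun m hm => (this m hm).hasSign⟩
  intro m hm
  have hchain := hT X hI hS c hc m hm
  clear hm
  induction hchain with
  | refl => exact ⟨fun _ => h, fun h => (h hcX).elim⟩
  | tail _ hbc ih =>
    exact C.hasSignAt_of_hasSignAt hI (hS.twoSpherical D) hN hθ hε hins hbc.1 hbc.2.1 hbc.2.2 ih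

theorem exists_hasSign_insert_of_not_isSpherical (hI : IsIrreducible M X) (hX : TwoSpherical M X)
    (hS : ¬ IsSpherical cs X) (hins : ∀ c ∈ outerVertices M X, TwoSpherical M (insert c X) →
      ∃ ε : ℝ, (ε = 1 ∨ ε = -1) ∧ HasSign D G φ (insert c X) ε) :
    ∃ ε : ℝ, (ε = 1 ∨ ε = -1) ∧ AlmostPositiveOn D G φ X ε ∧
      ∀ c ∈ outerVertices M X, TwoSpherical M (insert c X) → HasSign D G φ (insert c X) ε := by
  obtain ⟨ε, hε, hpos⟩ := C.toRealizes.exists_almostPositiveOn (C.isometricOn hX) hI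
  refine ⟨ε, hε, hpos, fun c hc hcX => ?_⟩
  obtain ⟨ε', hε', h⟩ := hins c hc hcX
  have hpos' := ((h _ subset_rfl (hI.insert_of_mem_outerVertices hc) hcX).2
    fun h => hS (h.mono (Set.subset_insert _ _))).mono (Set.subset_insert _ _)
  rwa [sign_eq_of_mul_nonneg hε hε' (C.mul_nonneg_of_almostPositiveOn hX hS hpos hpos')]

theorem exists_hasSign_of_insert (hT : IsTwistRigidSystem cs) (hI : IsIrreducible M X)
    (hX : TwoSpherical M X) (hN : ¬ InSphericalComponent cs X)
    (hins : ∀ c ∈ outerVertices M X, TwoSpherical M (insert c X) →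
      ∃ ε : ℝ, (ε = 1 ∨ ε = -1) ∧ HasSign D G φ (insert c X) ε) :
    ∃ ε : ℝ, (ε = 1 ∨ ε = -1) ∧ HasSign D G φ X ε := by
  have ne_zero {ε : ℝ} (hε : ε = 1 ∨ ε = -1) : ε ≠ 0 := by rcases hε with rfl | rfl <;> norm_num
  by_cases hS : IsSpherical cs X
  · by_cases hmax : ∃ c ∈ outerVertices M X, TwoSpherical M (insert c X)
    · obtain ⟨c, hc, hcX⟩ := id hmax
      obtain ⟨ε, hε, h⟩ := C.exists_hasSign_insert_of_isSpherical hT hI hS hN hins hc hcX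
      exact ⟨ε, hε, InductiveSign.hasSign
        ⟨hI, hX, ne_zero hε, h, fun h => (h hS).elim, fun _ => hmax⟩ hT C⟩
    · push Not at hmax
      have hne : (outerVertices M X).Nonempty :=
        Set.nonempty_iff_ne_empty.mpr fun h => hN ⟨X, subset_rfl, hI, hS, h⟩
      obtain ⟨ε, hε, h⟩ := IsMaximalSpherical.exists_hasWallSign ⟨hI, hS, hmax, hne⟩ hT C
      exact ⟨ε, hε, .of_insert hI h (fun h => (h hS).elim) fun c hc hcX => (hmax c hc hcX).elim⟩
  · obtain ⟨ε, hε, hpos, h⟩ := C.exists_hasSign_insert_of_not_isSpherical hI hX hS hins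
    exact ⟨ε, hε, InductiveSign.hasSign
      ⟨hI, hX, ne_zero hε, h, fun _ => hpos, fun h => (hS h).elim⟩ hT C⟩

theorem exists_hasSign (hT : IsTwistRigidSystem cs) (hI : IsIrreducible M X)
    (hX : TwoSpherical M X) : ∃ ε : ℝ, (ε = 1 ∨ ε = -1) ∧ HasSign D G φ X ε := by
  induction X using WellFoundedGT.induction with
  | ind X ih =>
    by_cases hN : InSphericalComponent cs X
    · exact ⟨1, .inl rfl, hN.hasSign hI.1 1⟩
    · exact C.exists_hasSign_of_insert hT hI hX hN fun c hc hcX =>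
        ih _ (Set.ssubset_insert hc.1) (hI.insert_of_mem_outerVertices hc) hcX

end AngleRealization

end ExistenceOfSigns

section Rescaling

variable {ι W : Type*} [Fintype ι] [DecidableEq ι] [Group W] {M : CoxeterMatrix ι}
  {cs : CoxeterSystem M W} {D G : GeomRep cs} {a : MulAut W} {φ : (ι → ℝ) →ₗ[ℝ] (ι → ℝ)}
  {e : ι → ℝ}

/-- The linear map obtained from `φ` by rescaling the image of each simple root `α s` by `e s`. -/
noncomputable def rescale (e : ι → ℝ) (φ : (ι → ℝ) →ₗ[ℝ] (ι → ℝ)) : (ι → ℝ) →ₗ[ℝ] (ι → ℝ) :=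
  φ ∘ₗ LinearMap.pi fun s => e s • LinearMap.proj s

omit [Fintype ι] in
theorem rescale_simpleRoot (e : ι → ℝ) (φ : (ι → ℝ) →ₗ[ℝ] (ι → ℝ)) (s : ι) :
    rescale e φ (α s) = e s • φ (α s) := by
  rw [rescale, LinearMap.comp_apply, ← map_smul]
  congr 1
  ext t
  rcases eq_or_ne t s with rfl | h
  · simp
  · simp [simpleRoot_of_ne h]

omit [Fintype ι] [DecidableEq ι] in
theorem rescale_apply_of_mem_supportedOn {K : Set ι} {c : ℝ} (h : ∀ s ∈ K, e s = c) {v : ι → ℝ}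
    (hv : v ∈ supportedOn K) : rescale e φ v = c • φ v := by
  rw [rescale, LinearMap.comp_apply, ← map_smul]
  congr 1
  ext s
  by_cases hs : s ∈ K
  · simp [h s hs]
  · simp [hv s hs]

theorem Realizes.rescale (P : Realizes G a φ) (he : ∀ s, e s = 1 ∨ e s = -1) :
    Realizes G a (rescale e φ) where
  isRoot s := by
    rw [rescale_simpleRoot]
    rcases he s with h | h
    · rw [h, one_smul]; exact P.isRoot s
    · rw [h, neg_one_smul]; exact (P.isRoot s).neg
  ρ_simple s := by
    rw [rescale_simpleRoot]
    rcases he s with h | h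
    · rw [h, one_smul]; exact P.ρ_simple s
    · rw [h, neg_one_smul, refl_neg_root]; exact P.ρ_simple s

theorem form_rescale_simpleRoot (he : ∀ s, e s = 1 ∨ e s = -1) {s t : ι}
    (hst : M s t ≠ 2 → e s = e t) (h : G.form (φ (α s)) (φ (α t)) = D.gram s t) :
    G.form (rescale e φ (α s)) (rescale e φ (α t)) = D.gram s t := by
  simp only [rescale_simpleRoot, map_smul, LinearMap.smul_apply, smul_eq_mul, h]
  by_cases h2 : M s t = 2
  · rw [(D.gram_eq_zero_iff (ne_of_apply_ne_one (by rw [h2]; norm_num))).mpr h2]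
    ring
  · rw [hst h2]
    rcases he t with ht | ht <;> rw [ht] <;> ring

end Rescaling

section SignsOfGenerators

variable {ι W : Type*} [Fintype ι] [DecidableEq ι] [Group W] {M : CoxeterMatrix ι}
  {cs : CoxeterSystem M W} {D G : GeomRep cs} {a : MulAut W} {φ : (ι → ℝ) →ₗ[ℝ] (ι → ℝ)}

omit [Fintype ι] [DecidableEq ι] in
theorem isIrreducible_singleton (s : ι) : IsIrreducible M {s} := by
  refine ⟨Set.singleton_nonempty s, fun L hL hne _ => ?_⟩
  rw [hne.subset_singleton_iff.mp hL]

omit [Fintype ι] [DecidableEq ι] in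
theorem twoSpherical_pair {s t : ι} (h : M s t ≠ 0) : TwoSpherical M {s, t} := by
  rintro p (rfl | rfl) q (rfl | rfl)
  · simp
  · exact h
  · rwa [M.symmetric]
  · simp

omit [Fintype ι] [DecidableEq ι] in
theorem twoSpherical_singleton (s : ι) : TwoSpherical M {s} := by
  simpa using twoSpherical_pair (M := M) (s := s) (t := s) (by simp)

omit [Fintype ι] [DecidableEq ι] in
theorem InSphericalComponent.of_apply_ne_two {s t : ι} (h : InSphericalComponent cs {s})
    (hM : M s t ≠ 2) : InSphericalComponent cs {t} := by
  obtain ⟨Y, hsY, hI, hS, hY⟩ := h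
  refine ⟨Y, Set.singleton_subset_iff.mpr ?_, hI, hS, hY⟩
  by_contra htY
  exact Set.notMem_empty t (hY ▸ ⟨htY, s, hsY rfl, hM⟩)

theorem isFullRoot_simpleRoot (D : GeomRep cs) (s : ι) :
    IsFullRoot D {s} (α s) :=
  ⟨simpleRoot_mem_posRootsOn rfl, by rintro _ rfl; simp⟩

namespace AngleRealization

variable (C : AngleRealization D G a φ)
include C

theorem exists_hasSign_singleton (hT : IsTwistRigidSystem cs) (s : ι) :
    ∃ ε : ℝ, (ε = 1 ∨ ε = -1) ∧ HasSign D G φ {s} ε ∧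
      (InSphericalComponent cs {s} → ε = 1) := by
  by_cases hs : InSphericalComponent cs {s}
  · exact ⟨1, .inl rfl, hs.hasSign (Set.singleton_nonempty s) 1, fun _ => rfl⟩
  · obtain ⟨ε, hε, h⟩ := C.exists_hasSign hT (isIrreducible_singleton s) (twoSpherical_singleton s)
    exact ⟨ε, hε, h, fun h' => absurd h' hs⟩

theorem sign_eq_of_hasSign_singleton {s t : ι} {ε ε' : ℝ} (hε : ε = 1 ∨ ε = -1)
    (hε' : ε' = 1 ∨ ε' = -1) (h : HasSign D G φ {s} ε) (h' : HasSign D G φ {t} ε')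
    (hs : ¬ InSphericalComponent cs {s}) (hst : s ≠ t) (h0 : M s t ≠ 0) (h2 : M s t ≠ 2) :
    ε = ε' := by
  have hI : IsIrreducible M {s, t} := by
    rw [Set.pair_comm]
    exact (isIrreducible_singleton s).insert_of_mem_outerVertices
      ⟨fun ht => hst (Set.mem_singleton_iff.mp ht).symm, s, rfl, h2⟩
  exact sign_eq_of_mul_nonneg hε hε' (C.mul_nonneg_of_hasSign hI (twoSpherical_pair h0)
    (fun hN => hs (hN.mono (by simp))) (h.mono (by simp)) (h'.mono (by simp)))

theorem exists_sign (hT : IsTwistRigidSystem cs) : ∃ e : ι → ℝ,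
    (∀ s, e s = 1 ∨ e s = -1) ∧ (∀ s t, M s t ≠ 0 → M s t ≠ 2 → e s = e t) ∧
      ∀ s v, M s v = 0 → PositiveOnWall G φ (e s) (α s) v := by
  choose e he hsign hone using C.exists_hasSign_singleton hT
  refine ⟨e, he, fun s t h0 h2 => ?_, fun s v h0 => ?_⟩
  · rcases eq_or_ne s t with rfl | hst
    · rfl
    by_cases hs : InSphericalComponent cs {s}
    · rw [hone s hs, hone t (hs.of_apply_ne_two h2)]
    · exact C.sign_eq_of_hasSign_singleton (he s) (he t) (hsign s) (hsign t) hs hst h0 h2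
  · exact (hsign s _ subset_rfl (isIrreducible_singleton s) (twoSpherical_singleton s)).1 _
      (isFullRoot_simpleRoot D s) v (by simpa using D.gram_le_neg_one s v h0)

end AngleRealization

/- If `1 ≤ form u v`, then some positive combination of the reflection in `u` of a point on the wall
of `v` and of a point on the wall of `u` lies on the wall of `v` and is negative at `u`. -/
theorem form_le_neg_one_of_forall_pos {u v : ι → ℝ} (hu : G.IsRoot u) (hv : G.IsRoot v)
    (huv : ∀ x ∈ G.titsInterior, x v = 0 → 0 < x u)
    (hvu : ∀ x ∈ G.titsInterior, x u = 0 → 0 < x v) : G.form u v ≤ -1 := by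
  by_contra! hlt
  rcases lt_or_ge (G.form u v) 1 with hform | hform
  · obtain ⟨x, hx, hxu, hxv⟩ :=
      exists_titsInterior_of_abs_form_lt_one hu hv (abs_lt.mpr ⟨hlt, hform⟩)
    exact (huv x hx hxv).ne' hxu
  · have hx := wallProj_mem_titsInterior height_mem_titsInterior hv
    have hxv := wallProj_apply_self hv height
    set x := G.wallProj v height
    have hz := wallProj_mem_titsInterior height_mem_titsInterior hu
    have hzu := wallProj_apply_self hu height
    set z := G.wallProj u height
    have hxu := huv x hx hxv
    have hzv := hvu z hz hzu
    have hyu : (x ∘ₗ G.refl u) u = -x u := by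
      rw [LinearMap.comp_apply, refl_self _ hu.form_self, map_neg]
    have hyv : (x ∘ₗ G.refl u) v = -(2 * G.form u v * x u) := by
      rw [LinearMap.comp_apply, refl_apply, map_sub, map_smul, hxv, G.form_comm v u]
      simp
    have hc : 0 < 2 * G.form u v * x u := mul_pos (by linarith) hxu
    have hmem : z v • (x ∘ₗ G.refl u) + (2 * G.form u v * x u) • z ∈ G.titsInterior :=
      add_mem_titsInterior (smul_mem_titsInterior (comp_refl_mem_titsInterior hx hu) hzv)
        (smul_mem_titsInterior hz hc)
    have hpos := huv _ hmem (by
      simp only [LinearMap.add_apply, LinearMap.smul_apply, smul_eq_mul, hyv]; ring)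
    simp only [LinearMap.add_apply, LinearMap.smul_apply, smul_eq_mul, hzu, hyu] at hpos
    nlinarith [mul_pos hzv hxu]

theorem AngleRealization.exists_isometricOn_univ (C : AngleRealization D G a φ)
    (hT : IsTwistRigidSystem cs) : ∃ (D' : GeomRep cs) (φ' : (ι → ℝ) →ₗ[ℝ] (ι → ℝ)),
      Realizes G a φ' ∧ IsometricOn D' G φ' Set.univ := by
  obtain ⟨e, he, hedge, hwall⟩ := C.exists_sign hT
  have P := C.toRealizes.rescale he
  have hpos (s t : ι) (hM : M s t = 0) (x) (hx : x ∈ G.titsInterior)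
      (h0 : x (rescale e φ (α t)) = 0) : 0 < x (rescale e φ (α s)) := by
    rw [rescale_simpleRoot, map_smul, smul_eq_mul] at *
    have hne : e t ≠ 0 := by rcases he t with h | h <;> rw [h] <;> norm_num
    exact hwall s t hM x hx ((mul_eq_zero.mp h0).resolve_left hne)
  let D' : GeomRep cs :=
    { gram s t := G.form (rescale e φ (α s)) (rescale e φ (α t))
      gram_comm s t := G.form_comm _ _
      gram_eq_neg_cos s t h := by
        rw [form_rescale_simpleRoot he (hedge s t h) (C.form_map_simpleRoot s t h),
          D.gram_eq_neg_cos s t h]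
      gram_le_neg_one s t h := form_le_neg_one_of_forall_pos (P.isRoot s) (P.isRoot t)
        (hpos s t h) (hpos t s (by rwa [M.symmetric])) }
  exact ⟨D', _, P, fun s _ t _ => rfl⟩

end SignsOfGenerators

section Components

variable {ι W : Type*} [Fintype ι] [DecidableEq ι] [Group W] {M : CoxeterMatrix ι}
  {cs : CoxeterSystem M W} {D G : GeomRep cs} {a : MulAut W} {φ : (ι → ℝ) →ₗ[ℝ] (ι → ℝ)}
  {s t u : ι}

/-- The connected component of `s` in the Coxeter diagram, in which two generators are joined when
they do not commute. -/
def component (M : CoxeterMatrix ι) (s : ι) : Set ι :=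
  {t | Relation.ReflTransGen (fun x y => M x y ≠ 2) s t}

omit [Fintype ι] [DecidableEq ι] in
theorem self_mem_component (s : ι) : s ∈ component M s := Relation.ReflTransGen.refl

omit [Fintype ι] [DecidableEq ι] in
theorem mem_component_of_apply_ne_two (ht : t ∈ component M s) (h : M t u ≠ 2) :
    u ∈ component M s :=
  ht.tail h

omit [Fintype ι] [DecidableEq ι] in
theorem component_eq_of_mem (h : t ∈ component M s) : component M t = component M s := by
  have : Std.Symm fun x y => M x y ≠ 2 := ⟨fun x y hxy => by rwa [M.symmetric]⟩
  have hsymm : Relation.ReflTransGen (fun x y => M x y ≠ 2) t s := symm h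
  exact Set.ext fun u => ⟨h.trans, hsymm.trans⟩

omit [Fintype ι] [DecidableEq ι] in
theorem isIrreducible_component (s : ι) : IsIrreducible M (component M s) := by
  refine ⟨⟨s, self_mem_component s⟩, fun L hL ⟨i, hi⟩ hperp t ht => ?_⟩
  rw [← component_eq_of_mem (hL hi)] at ht
  induction ht with
  | refl => exact hi
  | tail _ hbc ih =>
    by_contra hc
    exact hbc (hperp _ ih _ (mem_component_of_apply_ne_two (hL ih) hbc) hc)

theorem ρ_mem_supportedOn_component (D : GeomRep cs) (s : ι) (w : W) {v : ι → ℝ}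
    (hv : v ∈ supportedOn (component M s)) : D.ρ w v ∈ supportedOn (component M s) := by
  induction w using cs.simple_induction_left with
  | one => simpa using hv
  | mul_simple_left w t ih =>
    rw [map_mul, Module.End.mul_apply, D.ρ_simple]
    by_cases ht : t ∈ component M s
    · exact refl_simpleRoot_mem_supportedOn ht ih
    · rw [refl_apply_of_form_eq_zero]
      · exact ih
      rw [form_simpleRoot_right]
      refine Finset.sum_eq_zero fun i _ => ?_
      by_cases hi : i ∈ component M s
      · have hM : M i t = 2 := by
          by_contra hc
          exact ht (mem_component_of_apply_ne_two hi hc)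
        rw [(D.gram_eq_zero_iff (ne_of_mem_of_not_mem hi ht)).mpr hM, mul_zero]
      · rw [ih i hi, zero_mul]

theorem IsRoot.exists_mem_supportedOn_component {g : ι → ℝ} (hg : D.IsRoot g) :
    ∃ s, g ∈ supportedOn (component M s) := by
  obtain ⟨w, s, rfl⟩ := hg
  exact ⟨s, ρ_mem_supportedOn_component D s w
    (simpleRoot_mem_supportedOn (self_mem_component s))⟩

theorem Realizes.exists_almostPositiveOn_univ (P : Realizes G a φ)
    (h : IsometricOn D G φ Set.univ) : ∃ φ' : (ι → ℝ) →ₗ[ℝ] (ι → ℝ),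
      Realizes G a φ' ∧ IsometricOn D G φ' Set.univ ∧ AlmostPositiveOn D G φ' Set.univ 1 := by
  have hcomp : ∀ K ∈ Set.range (component M),
      ∃ ε : ℝ, (ε = 1 ∨ ε = -1) ∧ AlmostPositiveOn D G φ K ε := by
    rintro _ ⟨s, rfl⟩
    exact P.exists_almostPositiveOn (h.mono (Set.subset_univ _)) (isIrreducible_component s)
  choose! η hη hpos using hcomp
  have he (s) : η (component M s) = 1 ∨ η (component M s) = -1 := hη _ ⟨s, rfl⟩
  refine ⟨TwistRigid.rescale (fun s => η (component M s)) φ, P.rescale he,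
    fun s _ t _ => form_rescale_simpleRoot he (fun h2 => ?_) (h s trivial t trivial),
    fun x hx => ?_⟩
  · rw [component_eq_of_mem (mem_component_of_apply_ne_two (self_mem_component s) h2)]
  · refine (Set.finite_iUnion fun s => hpos _ ⟨s, rfl⟩ x hx).subset ?_
    rintro g ⟨hg, hneg⟩
    obtain ⟨s, hs⟩ := IsRoot.exists_mem_supportedOn_component hg.1.isRoot
    rw [rescale_apply_of_mem_supportedOn (fun t ht => by rw [component_eq_of_mem ht]) hs, map_smul,
      smul_eq_mul, one_mul] at hneg
    exact Set.mem_iUnion.mpr ⟨s, ⟨hg.1, hs⟩, hneg⟩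

end Components

section PositiveRealizations

variable {ι W : Type*} [Fintype ι] [DecidableEq ι] [Group W] {M : CoxeterMatrix ι}
  {cs : CoxeterSystem M W} {D G : GeomRep cs} {a : MulAut W} {φ : (ι → ℝ) →ₗ[ℝ] (ι → ℝ)}

theorem Realizes.conj (P : Realizes G a φ) (w : W) :
    Realizes G (MulAut.conj w * a) (G.ρ w ∘ₗ φ) where
  isRoot s := (P.isRoot s).ρ_apply w
  ρ_simple s := G.ρ_conj_eq_refl (P.ρ_simple s) w

theorem IsometricOn.conj {K : Set ι} (h : IsometricOn D G φ K) (w : W) :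
    IsometricOn D G (G.ρ w ∘ₗ φ) K := fun s hs t ht => by
  rw [LinearMap.comp_apply, LinearMap.comp_apply, form_ρ, h s hs t ht]

omit [Fintype ι] [DecidableEq ι] in
theorem mem_parabolic_univ (w : W) : w ∈ parabolic cs Set.univ := by
  rw [parabolic, Set.image_univ, cs.subgroup_closure_range_simple]
  trivial

theorem Realizes.exists_conj_isPosRoot (P : Realizes G a φ) (h : IsometricOn D G φ Set.univ)
    (hpos : AlmostPositiveOn D G φ Set.univ 1) :
    ∃ w : W, ∀ s, G.IsPosRoot (G.ρ w (φ (α s))) := by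
  obtain ⟨w, -, hw⟩ := exists_parabolic_forall_nonneg (G := D) (height ∘ₗ φ) Set.univ
    (by simpa using hpos height height_mem_titsInterior)
  refine ⟨a w, fun s => ((P.isRoot s).ρ_apply (a w)).pos_or_neg.resolve_right fun hneg => ?_⟩
  have hnonneg := hw s trivial
  rw [LinearMap.comp_apply, P.map_ρ h (mem_parabolic_univ w) (mem_supportedOn_univ _)] at hnonneg
  have := hneg.one_le_height
  rw [map_neg] at this
  linarith

theorem apply_nonneg_of_forall_isPosRoot (hφ : ∀ s, G.IsPosRoot (φ (α s))) {g : ι → ℝ}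
    (hg : D.IsPosRoot g) (t : ι) : 0 ≤ φ g t := by
  rw [eq_sum_smul_simpleRoot g, map_sum, Finset.sum_apply]
  refine Finset.sum_nonneg fun s _ => ?_
  rw [map_smul]
  exact mul_nonneg (hg.nonneg s) ((hφ s).nonneg t)

theorem Realizes.exists_isPosRoot_map_eq (P : Realizes G a φ) (h : IsometricOn D G φ Set.univ)
    (hφ : ∀ s, G.IsPosRoot (φ (α s))) {t : ι} (hconj : IsConj (cs.simple t) (a (cs.simple t))) :
    ∃ g, D.IsPosRoot g ∧ φ g = α t := by
  obtain ⟨p, hp⟩ := isConj_iff.mp hconj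
  obtain ⟨q, hq⟩ := a.surjective p⁻¹
  have hmap := P.map_ρ h (mem_parabolic_univ q) (mem_supportedOn_univ (α t))
  have hrefl : G.refl (φ (D.ρ q (α t))) = G.refl (α t) := by
    rw [hmap, ← G.ρ_conj_eq_refl (P.ρ_simple t), ← G.ρ_simple t, hq, ← hp]
    group
  have hroot : D.IsRoot (D.ρ q (α t)) := (D.isRoot_simpleRoot t).ρ_apply q
  obtain ⟨g, hg, hgt⟩ : ∃ g, D.IsPosRoot g ∧ (φ g = α t ∨ φ g = -α t) := by
    have heq := eq_or_eq_neg_of_refl_eq (by rw [hmap]; exact (P.isRoot t).ρ_apply _)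
      (G.isRoot_simpleRoot t) hrefl
    rcases hroot.pos_or_neg with hpos | hneg
    · exact ⟨_, hpos, heq⟩
    · exact ⟨_, hneg, by rwa [map_neg, neg_inj, neg_eq_iff_eq_neg, or_comm]⟩
  refine ⟨g, hg, hgt.resolve_right fun hneg => ?_⟩
  have := apply_nonneg_of_forall_isPosRoot hφ hg t
  rw [hneg, Pi.neg_apply, simpleRoot_self] at this
  linarith

theorem exists_map_simpleRoot_eq (hφ : ∀ s, G.IsPosRoot (φ (α s))) {g : ι → ℝ}
    (hg : D.IsPosRoot g) {t : ι} (hgt : φ g = α t) : ∃ s, φ (α s) = α t := by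
  obtain ⟨s, hs⟩ := hg.exists_one_le
  refine ⟨s, (hφ s).eq_simpleRoot fun j hj => ?_⟩
  have hsum : ∑ i, g i * φ (α i) j = 0 := by
    have := congrFun hgt j
    rw [simpleRoot_of_ne hj, eq_sum_smul_simpleRoot g, map_sum, Finset.sum_apply] at this
    simpa using this
  have hterm := (Finset.sum_eq_zero_iff_of_nonneg fun i _ =>
    mul_nonneg (hg.nonneg i) ((hφ i).nonneg j)).mp hsum s (Finset.mem_univ s)
  exact (mul_eq_zero.mp hterm).resolve_left (by linarith)

theorem Realizes.exists_map_simple_eq (P : Realizes G a φ) (h : IsometricOn D G φ Set.univ)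
    (hφ : ∀ s, G.IsPosRoot (φ (α s))) {t : ι} (hconj : IsConj (cs.simple t) (a (cs.simple t))) :
    ∃ s, a (cs.simple s) = cs.simple t := by
  obtain ⟨g, hg, hgt⟩ := P.exists_isPosRoot_map_eq h hφ hconj
  obtain ⟨s, hs⟩ := exists_map_simpleRoot_eq hφ hg hgt
  exact ⟨s, ρ_injective (G := G) (by rw [P.ρ_simple, hs, G.ρ_simple])⟩

omit [Fintype ι] [DecidableEq ι] in
theorem simple_injective [Finite ι] (G : GeomRep cs) : Function.Injective cs.simple := by
  classical
  cases nonempty_fintype ι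
  intro s t hst
  by_contra hne
  rcases eq_or_eq_neg_of_refl_eq (G.isRoot_simpleRoot s) (G.isRoot_simpleRoot t)
    (by rw [← G.ρ_simple, ← G.ρ_simple, hst]) with h | h
  · simpa [simpleRoot_of_ne hne] using congrFun h s
  · simpa [simpleRoot_of_ne hne] using congrFun h s

theorem AngleRealization.exists_conj_map_simple_eq (C : AngleRealization D G a φ)
    (hT : IsTwistRigidSystem cs) (hconj : ∀ t, IsConj (cs.simple t) (a (cs.simple t))) :
    ∃ w : W, ∀ s, ∃ t, w * a (cs.simple s) * w⁻¹ = cs.simple t := by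
  obtain ⟨D', φ', P', hI'⟩ := C.exists_isometricOn_univ hT
  obtain ⟨ψ, P, hI, hpos⟩ := P'.exists_almostPositiveOn_univ hI'
  obtain ⟨w, hw⟩ := P.exists_conj_isPosRoot hI hpos
  choose f hf using fun t => (P.conj w).exists_map_simple_eq (hI.conj w) hw (t := t)
    ((hconj t).trans (isConj_iff.mpr ⟨w, rfl⟩))
  have hinj : Function.Injective f := fun t t' h =>
    simple_injective G (by rw [← hf t, ← hf t', h])
  refine ⟨w, fun s => ?_⟩
  obtain ⟨t, rfl⟩ := Finite.surjective_of_injective hinj s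
  exact ⟨t, hf t⟩

end PositiveRealizations

/-! ### Congruences modulo a finite residue field -/

section Residue

universe u

theorem isJacobsonRing_int : IsJacobsonRing ℤ := by
  refine isJacobsonRing_iff_prime_eq.2 fun P hP => ?_
  rcases eq_or_ne P ⊥ with rfl | hP0
  · refine le_antisymm (fun x hx => ?_) Ideal.le_jacobson
    have hunit := Int.isUnit_iff.1 (Ideal.mem_jacobson_bot.1 hx x)
    rw [Ideal.mem_bot]
    rcases hunit with h | h <;> nlinarith [mul_self_nonneg x]
  · have := hP.isMaximal hP0
    exact Ideal.jacobson_eq_self_of_isMaximal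

theorem finite_of_finiteType_int (F : Type*) [Field F] [Algebra.FiniteType ℤ F] : Finite F := by
  have := isJacobsonRing_int
  have : Module.Finite ℤ F := finite_of_finite_type_of_isJacobsonRing ℤ F
  have : Algebra.IsIntegral ℤ F := Algebra.IsIntegral.of_finite ℤ F
  have hinj : ¬ Function.Injective (algebraMap ℤ F) := fun hinj =>
    Int.not_isField ((Algebra.IsIntegral.isField_iff_isField hinj).2 (Field.toIsField F))
  rw [injective_iff_map_eq_zero] at hinj
  push Not at hinj
  obtain ⟨n, hn, hn0⟩ := hinj
  refine Module.finite_of_fg_torsion F fun x => ⟨⟨n, mem_nonZeroDivisors_of_ne_zero hn0⟩, ?_⟩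
  rw [Submonoid.mk_smul, Algebra.smul_def, hn, zero_mul]

theorem finite_of_surjective_of_finiteType_int {A F : Type*} [CommRing A] [Algebra.FiniteType ℤ A]
    [Field F] {f : A →+* F} (hf : Function.Surjective f) : Finite F :=
  have : Algebra.FiniteType ℤ F := Algebra.FiniteType.of_surjective f.toIntAlgHom hf
  finite_of_finiteType_int F

/- In a domain of finite type over `ℤ` the maximal ideals intersect in `0`, and their residue fields
are finite. -/
theorem exists_ringHom_finite_field_ne_zero {A : Type u} [CommRing A] [IsDomain A]
    [Algebra.FiniteType ℤ A] {d : A} (hd : d ≠ 0) :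
    ∃ (F : Type u) (_ : Field F) (_ : Finite F) (θ : A →+* F), θ d ≠ 0 := by
  have := isJacobsonRing_int
  have : IsJacobsonRing A := isJacobsonRing_of_finiteType (A := ℤ)
  have hjac : (⊥ : Ideal A).jacobson = ⊥ := IsJacobsonRing.out' _ Ideal.isPrime_bot.isRadical
  have hmem : d ∉ (⊥ : Ideal A).jacobson := by simpa [hjac] using hd
  simp only [Ideal.jacobson, Ideal.mem_sInf, not_forall] at hmem
  obtain ⟨m, ⟨-, hm⟩, hdm⟩ := hmem
  let _ := Ideal.Quotient.field m
  exact ⟨A ⧸ m, inferInstance, finite_of_surjective_of_finiteType_int Ideal.Quotient.mk_surjective,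
    Ideal.Quotient.mk m, by rwa [Ne, Ideal.Quotient.eq_zero_iff_mem]⟩

theorem exists_ringHom_finite_field_injOn {K : Type u} [CommRing K] [IsDomain K] {X Y : Set K}
    (hX : X.Finite) (hY : Y.Finite) :
    ∃ (R : Subring K) (F : Type u) (_ : Field F) (_ : Finite F) (θ : R →+* F),
      X ⊆ R ∧ Set.InjOn θ ((↑) ⁻¹' Y) := by
  classical
  let A : Subalgebra ℤ K := Algebra.adjoin ℤ X
  have : Algebra.FiniteType ℤ A := by
    have := Subalgebra.fg_adjoin_finset (R := ℤ) hX.toFinset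
    rwa [hX.coe_toFinset, ← Subalgebra.fg_iff_finiteType] at *
  have hYA : (((↑) : A → K) ⁻¹' Y).Finite := hY.preimage Subtype.val_injective.injOn
  have hprod : ∏ p ∈ hYA.toFinset.offDiag, (p.1 - p.2) ≠ 0 :=
    Finset.prod_ne_zero_iff.2 fun p hp => sub_ne_zero.2 (Finset.mem_offDiag.1 hp).2.2
  obtain ⟨F, hF, hFin, θ, hθ⟩ := exists_ringHom_finite_field_ne_zero hprod
  refine ⟨A.toSubring, F, hF, hFin, θ, Algebra.subset_adjoin, fun x hx y hy hxy => ?_⟩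
  by_contra hne
  rw [map_prod, Finset.prod_ne_zero_iff] at hθ
  refine hθ (x, y) ?_ ((map_sub θ x y).trans (sub_eq_zero.2 hxy))
  exact Finset.mem_offDiag.2 ⟨hYA.mem_toFinset.2 hx, hYA.mem_toFinset.2 hy, hne⟩

end Residue

section Congruence

variable {ι W : Type*} [Fintype ι] [DecidableEq ι] [Group W] {M : CoxeterMatrix ι}
  {cs : CoxeterSystem M W} {D : GeomRep cs} {R : Subring ℝ} {γ : MulAut W}

open Matrix

/-- The doubled Gram matrix of `D` over a subring `R` containing its entries. The factor `2` makes
reflections in vectors over `R` preserve `R`-integrality. -/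
def doubleGram (D : GeomRep cs) (hR : ∀ s t, 2 * D.gram s t ∈ R) : Matrix ι ι R :=
  Matrix.of fun s t => ⟨2 * D.gram s t, hR s t⟩

theorem two_mul_form_coe (hR : ∀ s t, 2 * D.gram s t ∈ R) (u v : ι → R) :
    2 * D.form (R.subtype ∘ u) (R.subtype ∘ v) = R.subtype (u ⬝ᵥ doubleGram D hR *ᵥ v) := by
  simp only [form_apply, dotProduct, mulVec, doubleGram, Matrix.of_apply, map_sum, map_mul,
    Finset.mul_sum, Function.comp_apply, Subring.subtype_apply]
  exact Finset.sum_congr rfl fun s _ => Finset.sum_congr rfl fun t _ => by ring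

omit [Fintype ι] in
theorem subtype_comp_single (R : Subring ℝ) (s : ι) :
    R.subtype ∘ (Pi.single s 1 : ι → R) = α s := by
  ext t
  by_cases h : t = s <;> simp [simpleRoot, h]

omit [Fintype ι] in
theorem simpleRoot_mem (R : Subring ℝ) (s i : ι) : α s i ∈ R :=
  subtype_comp_single R s ▸ Subtype.property _

theorem ρ_apply_mem (hR : ∀ s t, 2 * D.gram s t ∈ R) {v : ι → ℝ} (hv : ∀ i, v i ∈ R) (w : W)
    (i : ι) : D.ρ w v i ∈ R := by
  induction w using cs.simple_induction_left generalizing i with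
  | one => simpa using hv i
  | mul_simple_left w s ih =>
    obtain ⟨u, hu⟩ : ∃ u : ι → R, R.subtype ∘ u = D.ρ w v := ⟨fun i => ⟨_, ih i⟩, rfl⟩
    rw [map_mul, Module.End.mul_apply, ρ_simple, refl_apply, ← hu, ← subtype_comp_single R s,
      two_mul_form_coe hR]
    exact R.sub_mem (u i).2 (R.mul_mem (Subtype.property _) (Subtype.property _))

/-- The geometric representation, with matrices over a subring `R` containing the entries of the
doubled Gram matrix. -/
noncomputable def integralRep (D : GeomRep cs) (hR : ∀ s t, 2 * D.gram s t ∈ R) :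
    W →* Matrix ι ι R where
  toFun w := Matrix.of fun i j => ⟨D.ρ w (α j) i, ρ_apply_mem hR (simpleRoot_mem R j) w i⟩
  map_one' := by
    ext i j
    simp [simpleRoot_apply, Matrix.one_apply, apply_ite ((↑) : R → ℝ)]
  map_mul' w w' := by
    ext i j
    have hexp := congrArg (D.ρ w · i) (eq_sum_smul_simpleRoot (D.ρ w' (α j)))
    simpa [Matrix.mul_apply, mul_comm] using hexp

theorem integralRep_apply_of_ρ_eq_refl (hR : ∀ s t, 2 * D.gram s t ∈ R) {w : W} {b : ι → R}
    (h : D.ρ w = D.refl (R.subtype ∘ b)) (i j : ι) :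
    integralRep D hR w i j
      = (Pi.single j 1 : ι → R) i - (doubleGram D hR *ᵥ b) j * b i := by
  apply R.subtype_injective
  have hcoeff := two_mul_form_coe hR (Pi.single j 1) b
  rw [single_one_dotProduct] at hcoeff
  rw [map_sub, map_mul, ← hcoeff]
  change D.ρ w (α j) i = _
  rw [h, refl_apply, ← subtype_comp_single R j]
  rfl

/-- The reduction of the geometric representation along `θ : R →+* F`. -/
noncomputable def residueRep {F : Type*} [Field F] (D : GeomRep cs)
    (hR : ∀ s t, 2 * D.gram s t ∈ R) (θ : R →+* F) : W →* Matrix ι ι F :=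
  (θ.mapMatrix : Matrix ι ι R →+* Matrix ι ι F).toMonoidHom.comp (integralRep D hR)

theorem eq_or_eq_neg_of_smul_eq_two_smul {F V : Type*} [Field F] [AddCommGroup V] [Module F V]
    (h2 : (2 : F) ≠ 0) (f : V →ₗ[F] F) {e g : V} (he : f e = 2) (hg : f g • g = (2 : F) • e) :
    g = e ∨ g = -e := by
  have hsq : f g * f g = 2 * 2 := by simpa [he] using congrArg f hg
  rcases mul_self_eq_mul_self_iff.1 hsq with h | h <;> rw [h] at hg
  · exact .inl (smul_right_injective V h2 hg)
  · exact .inr (smul_right_injective V h2 (by simpa [neg_smul, neg_eq_iff_eq_neg] using hg))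

theorem eq_or_eq_neg_single_of_residueRep_eq {F : Type*} [Field F] (h2 : (2 : F) ≠ 0)
    (hR : ∀ s t, 2 * D.gram s t ∈ R) {θ : R →+* F} {s : ι} {r : W} {b : ι → R}
    (hρ : D.ρ r = D.refl (R.subtype ∘ b))
    (hres : residueRep D hR θ r = residueRep D hR θ (cs.simple s)) :
    θ ∘ b = Pi.single s 1 ∨ θ ∘ b = -Pi.single s 1 := by
  have hsimple : D.ρ (cs.simple s) = D.refl (R.subtype ∘ (Pi.single s 1 : ι → R)) := by
    rw [subtype_comp_single, D.ρ_simple]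
  have hdiag : doubleGram D hR s s = 2 :=
    Subtype.ext ((congrArg (2 * ·) (D.gram_self s)).trans (mul_one 2))
  have hsingle : θ ∘ (Pi.single s 1 : ι → R) = Pi.single s 1 := by
    ext i
    by_cases h : i = s <;> simp [h]
  let f : (ι → F) →ₗ[F] F := LinearMap.proj s ∘ₗ ((doubleGram D hR).map θ).mulVecLin
  have hf : ∀ u : ι → R, f (θ ∘ u) = θ ((doubleGram D hR *ᵥ u) s) := fun u =>
    (RingHom.map_mulVec θ _ _ _).symm
  have hfs : f (θ ∘ (Pi.single s 1 : ι → R)) = 2 := by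
    rw [hf, mulVec_single_one, Matrix.col_apply, hdiag, map_ofNat]
  rw [← hsingle]
  refine eq_or_eq_neg_of_smul_eq_two_smul h2 f hfs ?_
  ext i
  have hi := congrFun (congrFun hres i) s
  change θ (integralRep D hR _ i s) = θ (integralRep D hR _ i s) at hi
  rw [integralRep_apply_of_ρ_eq_refl hR hρ, integralRep_apply_of_ρ_eq_refl hR hsimple, map_sub,
    map_sub, map_mul, map_mul, ← hf, ← hf, hfs] at hi
  exact sub_right_injective hi

theorem exists_isRoot_congr_single {F : Type*} [Field F] (h2 : (2 : F) ≠ 0)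
    (hR : ∀ s t, 2 * D.gram s t ∈ R) {θ : R →+* F} {s : ι} {r : W} (hconj : IsConj (cs.simple s) r)
    (hres : residueRep D hR θ r = residueRep D hR θ (cs.simple s)) :
    ∃ b : ι → R, D.IsRoot (R.subtype ∘ b) ∧ D.ρ r = D.refl (R.subtype ∘ b) ∧
      θ ∘ b = Pi.single s 1 := by
  obtain ⟨w, rfl⟩ := isConj_iff.1 hconj
  obtain ⟨b, hb⟩ : ∃ b : ι → R, R.subtype ∘ b = D.ρ w (α s) :=
    ⟨fun i => ⟨_, ρ_apply_mem hR (simpleRoot_mem R s) w i⟩, rfl⟩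
  have hroot : D.IsRoot (R.subtype ∘ b) := hb ▸ (D.isRoot_simpleRoot s).ρ_apply w
  have hρ : D.ρ (w * cs.simple s * w⁻¹) = D.refl (R.subtype ∘ b) :=
    hb ▸ ρ_conj_eq_refl D (D.ρ_simple s) w
  rcases eq_or_eq_neg_single_of_residueRep_eq h2 hR hρ hres with h | h
  · exact ⟨b, hroot, hρ, h⟩
  · have hneg : R.subtype ∘ (-b) = -(R.subtype ∘ b) := by ext; simp
    refine ⟨-b, hneg ▸ hroot.neg, by rw [hneg, refl_neg_root, hρ], ?_⟩
    rw [← neg_eq_iff_eq_neg.2 h]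
    ext
    simp

theorem comp_ρ_eq_of_mem_closure {x : (ι → ℝ) →ₗ[ℝ] ℝ} {X : Set W}
    (h : ∀ w ∈ X, x ∘ₗ D.ρ w = x) {w : W} (hw : w ∈ Subgroup.closure X) : x ∘ₗ D.ρ w = x := by
  refine LinearMap.ext fun v => ?_
  rw [LinearMap.comp_apply]
  induction hw using Subgroup.closure_induction generalizing v with
  | mem w hw => exact LinearMap.congr_fun (h w hw) v
  | one => rw [map_one, Module.End.one_apply]
  | mul a b _ _ ha hb => rw [map_mul, Module.End.mul_apply, ha, hb]
  | inv a _ ha => rw [← ha, ρ_apply_ρ_inv]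

theorem abs_form_simpleRoot_lt_one (D : GeomRep cs) {s t : ι} (hst : s ≠ t) (hM : M s t ≠ 0) :
    |D.form (α s) (α t)| < 1 := by
  rw [form_simpleRoot, abs_lt]
  exact ⟨D.neg_one_lt_gram hst hM, (D.gram_nonpos hst).trans_lt one_pos⟩

omit [Fintype ι] [DecidableEq ι] in
theorem finite_closure_simple_pair [Finite ι] (D : GeomRep cs) {s t : ι} (hst : s ≠ t)
    (hM : M s t ≠ 0) : Finite (Subgroup.closure {cs.simple s, cs.simple t}) := by
  classical
  cases nonempty_fintype ι
  obtain ⟨x, hx, hxs, hxt⟩ := exists_titsInterior_of_abs_form_lt_one (D.isRoot_simpleRoot s)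
    (D.isRoot_simpleRoot t) (abs_form_simpleRoot_lt_one D hst hM)
  have hfix : ∀ u, x (α u) = 0 → x ∘ₗ D.ρ (cs.simple u) = x := fun u hu =>
    LinearMap.ext fun v => by simp [ρ_simple, refl_apply, hu]
  refine (finite_stabilizer hx).subset fun w hw => comp_ρ_eq_of_mem_closure ?_ hw
  rintro w (rfl | rfl)
  exacts [hfix s hxs, hfix t hxt]

theorem form_mem_sphericalValues_of_map_simple {s t : ι} (hst : s ≠ t) (hM : M s t ≠ 0)
    {u v : ι → ℝ} (hu : D.IsRoot u) (hv : D.IsRoot v) (hsu : D.ρ (γ (cs.simple s)) = D.refl u)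
    (htv : D.ρ (γ (cs.simple t)) = D.refl v) : D.form u v ∈ D.sphericalValues := by
  let H := (Subgroup.closure {cs.simple s, cs.simple t}).map γ.toMonoidHom
  have hfin : Finite (H : Set W) := by
    have := finite_closure_simple_pair D hst hM
    rw [Subgroup.coe_map]
    exact Set.Finite.image _ (Set.toFinite _)
  have hmem : ∀ w ∈ ({cs.simple s, cs.simple t} : Set W), γ w ∈ H := fun w hw =>
    ⟨w, Subgroup.subset_closure hw, rfl⟩
  obtain ⟨x, hx, hfix⟩ := exists_titsInterior_comp_ρ_eq D H
  exact form_mem_sphericalValues hx hu hv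
    (apply_eq_zero_of_comp_refl_eq hu (hsu ▸ hfix _ (hmem _ (by simp))))
    (apply_eq_zero_of_comp_refl_eq hv (htv ▸ hfix _ (hmem _ (by simp))))

/- The forms of roots of a finite subgroup take finitely many values, so their congruence modulo a
sufficiently large residue field is an equality. -/
theorem exists_angleRealization {F : Type*} [Field F] (h2 : (2 : F) ≠ 0)
    (hR : ∀ s t, 2 * D.gram s t ∈ R) {θ : R →+* F}
    (hinj : Set.InjOn θ ((↑) ⁻¹' ((2 * ·) '' D.sphericalValues)))
    (hconj : ∀ s, IsConj (cs.simple s) (γ (cs.simple s)))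
    (hres : ∀ w, residueRep D hR θ (γ w) = residueRep D hR θ w) :
    ∃ φ, AngleRealization D D γ φ := by
  choose b hroot hρ hθ using fun s => exists_isRoot_congr_single h2 hR (hconj s) (hres _)
  have hφ : ∀ s, (Pi.basisFun ℝ ι).constr ℝ (fun s => R.subtype ∘ b s) (α s) = R.subtype ∘ b s :=
    fun s => by
    rw [simpleRoot, ← Pi.basisFun_apply, Module.Basis.constr_basis]
  refine ⟨_, ⟨fun s => hφ s ▸ hroot s, fun s => hφ s ▸ hρ s⟩, fun s t hM => ?_⟩
  rw [hφ, hφ]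
  rcases eq_or_ne s t with rfl | hst
  · rw [(hroot s).form_self, gram_self]
  · have hmem := form_mem_sphericalValues_of_map_simple hst hM (hroot s) (hroot t) (hρ s) (hρ t)
    have hmem' : D.gram s t ∈ D.sphericalValues := by
      rw [← form_simpleRoot]
      exact form_mem_sphericalValues_of_abs_lt_one (D.isRoot_simpleRoot s) (D.isRoot_simpleRoot t)
        (abs_form_simpleRoot_lt_one D hst hM)
    have hcongr : θ (b s ⬝ᵥ doubleGram D hR *ᵥ b t) = θ (doubleGram D hR s t) := by
      rw [RingHom.map_dotProduct, hθ, single_one_dotProduct, Function.comp_apply,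
        RingHom.map_mulVec, hθ, mulVec_single_one, Matrix.col_apply, Matrix.map_apply]
    have := hinj ⟨_, hmem, two_mul_form_coe hR _ _⟩ ⟨_, hmem', rfl⟩ hcongr
    have := congrArg R.subtype this
    rw [← two_mul_form_coe] at this
    exact mul_left_cancel₀ two_ne_zero this

end Congruence

section FiniteQuotient

theorem finite_quotient_of_finite_range {G X : Type*} [Group G] (N : Subgroup G) [N.Normal]
    {c : G → X} (hc : (Set.range c).Finite) {P : Set G} (hP : P.Finite)
    (h : ∀ x y, c x = c y → ∃ n ∈ N, n * (x⁻¹ * y) ∈ P) : Finite (G ⧸ N) := by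
  have := hc.to_subtype
  have := hP.to_subtype
  choose r hr using fun z : Set.range c => z.2
  refine Finite.of_surjective
    (fun p : Set.range c × P => (r p.1 : G ⧸ N) * ((p.2 : G) : G ⧸ N)) fun y => ?_
  induction y using QuotientGroup.induction_on with
  | H y =>
    obtain ⟨n, hn, hP⟩ := h (r ⟨c y, y, rfl⟩) y (hr _)
    refine ⟨(⟨c y, y, rfl⟩, ⟨_, hP⟩), ?_⟩
    simp [(QuotientGroup.eq_one_iff n).2 hn]

theorem normal_range_conj (G : Type*) [Group G] : (MulAut.conj : G →* MulAut G).range.Normal where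
  conj_mem := by
    rintro _ ⟨g, rfl⟩ a
    exact ⟨a g, MulEquiv.ext fun x => by simp⟩

end FiniteQuotient

section Out

variable {ι W : Type*} [Group W] {M : CoxeterMatrix ι} (cs : CoxeterSystem M W)

/-- The classical geometric representation, with `-1` as Gram coefficient of a pair generating an
infinite dihedral group. -/
noncomputable def standardGeomRep : GeomRep cs where
  gram s t := if M s t = 0 then -1 else -Real.cos (Real.pi / M s t)
  gram_comm s t := by rw [M.symmetric s t]
  gram_eq_neg_cos s t h := by rw [if_neg h]
  gram_le_neg_one s t h := by rw [if_pos h]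

theorem finite_setOf_map_simple_mem_range [Finite ι] :
    {p : MulAut W | ∀ s, ∃ t, p (cs.simple s) = cs.simple t}.Finite := by
  refine Set.Finite.of_injOn (f := fun p s => p (cs.simple s))
    (t := Set.univ.pi fun _ => Set.range cs.simple) (fun p hp s _ => ?_) (fun p _ q _ h => ?_)
    (Set.Finite.pi fun _ => Set.finite_range _)
  · obtain ⟨t, ht⟩ := hp s
    exact ⟨t, ht.symm⟩
  · have : p.toMonoidHom = q.toMonoidHom := cs.ext_simple (congrFun h)
    exact MulEquiv.ext fun w => DFunLike.congr_fun this w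

variable {cs}

theorem finite_conjClasses_isOfFinOrder [Finite ι] (D : GeomRep cs) :
    (ConjClasses.mk '' {g : W | IsOfFinOrder g}).Finite := by
  classical
  cases nonempty_fintype ι
  obtain ⟨n, hn⟩ := exists_conj_length_le_of_isOfFinOrder D
  refine ((finite_setOf_length_le cs n).image ConjClasses.mk).subset ?_
  rintro _ ⟨g, hg, rfl⟩
  obtain ⟨w, hw⟩ := hn g hg
  exact ⟨_, hw, ConjClasses.mk_eq_mk_iff_isConj.2 (isConj_iff.2 ⟨w, by group⟩)⟩

section AutInvariant

variable {X : Type*} [Monoid X]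

/-- For a homomorphism `q` to a finite monoid, a finite-valued invariant of automorphisms `a`:
the values of `q ∘ a⁻¹` on the simple reflections `s` and the conjugacy classes of `a s`. -/
def autInvariant (cs : CoxeterSystem M W) (q : W →* X) (a : MulAut W) :
    ι → X × ConjClasses W :=
  fun s => (q (a⁻¹ (cs.simple s)), ConjClasses.mk (a (cs.simple s)))

theorem finite_range_autInvariant [Finite ι] [Finite X] (D : GeomRep cs) (q : W →* X) :
    (Set.range (autInvariant cs q)).Finite := by
  refine (Set.Finite.pi fun _ : ι => (Set.toFinite (Set.univ : Set X)).prod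
    (finite_conjClasses_isOfFinOrder D)).subset ?_
  rintro _ ⟨a, rfl⟩ s -
  refine ⟨Set.mem_univ _, _, a.toMonoidHom.isOfFinOrder ?_, rfl⟩
  exact isOfFinOrder_iff_pow_eq_one.2 ⟨2, two_pos, cs.simple_sq s⟩

variable {q : W →* X} {a b : MulAut W}

theorem map_inv_mul_eq_of_autInvariant_eq (h : autInvariant cs q a = autInvariant cs q b) (w : W) :
    q ((a⁻¹ * b) w) = q w := by
  have hcomp : q.comp a⁻¹.toMonoidHom = q.comp b⁻¹.toMonoidHom :=
    cs.ext_simple fun s => congrArg Prod.fst (congrFun h s)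
  calc q ((a⁻¹ * b) w) = q (b⁻¹ (b w)) := DFunLike.congr_fun hcomp (b w)
    _ = q w := by rw [MulAut.inv_apply_self]

theorem isConj_inv_mul_of_autInvariant_eq (h : autInvariant cs q a = autInvariant cs q b) (s : ι) :
    IsConj (cs.simple s) ((a⁻¹ * b) (cs.simple s)) := by
  have hab := ConjClasses.mk_eq_mk_iff_isConj.1 (congrArg Prod.snd (congrFun h s))
  simpa using (a⁻¹).toMonoidHom.map_isConj hab

end AutInvariant

theorem finite_out [Finite ι] (hT : IsTwistRigidSystem cs) :
    Finite (MulAut W ⧸ (MulAut.conj : W →* MulAut W).range) := by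
  classical
  cases nonempty_fintype ι
  let D := standardGeomRep cs
  obtain ⟨R, F, _, _, θ, hR, hinj⟩ := exists_ringHom_finite_field_injOn
    (Set.finite_range fun p : ι × ι => 2 * D.gram p.1 p.2)
    (((finite_sphericalValues (G := D)).image (2 * ·)).union (Set.toFinite {0, 2}))
  replace hR : ∀ s t, 2 * D.gram s t ∈ R := fun s t => hR ⟨(s, t), rfl⟩
  have h2 : (2 : F) ≠ 0 := by
    rw [← map_ofNat θ 2, ← map_zero θ]
    exact hinj.ne (.inr (.inr rfl)) (.inr (.inl rfl)) two_ne_zero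
  have : Finite (Matrix ι ι F) := inferInstanceAs (Finite (ι → ι → F))
  have := normal_range_conj W
  refine finite_quotient_of_finite_range _ (finite_range_autInvariant D (residueRep D hR θ))
    (finite_setOf_map_simple_mem_range cs) fun a b hab => ?_
  have hconj := isConj_inv_mul_of_autInvariant_eq hab
  obtain ⟨φ, C⟩ := exists_angleRealization h2 hR (hinj.mono fun _ h => .inl h) hconj
    (map_inv_mul_eq_of_autInvariant_eq hab)
  obtain ⟨g, hg⟩ := C.exists_conj_map_simple_eq hT hconj
  exact ⟨MulAut.conj g, ⟨g, rfl⟩, hg⟩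

end Out

/-! ### Twist-rigidity -/

section TwistRigidSystem

variable {ι W : Type*} [Finite ι] [Group W] {M : CoxeterMatrix ι} {cs : CoxeterSystem M W}
  {J : Set ι}

theorem commute_simple_iff (cs : CoxeterSystem M W) {s t : ι} (hst : s ≠ t) :
    Commute (cs.simple s) (cs.simple t) ↔ M s t = 2 := by
  classical
  cases nonempty_fintype ι
  let D := standardGeomRep cs
  constructor
  · intro h
    rw [← D.gram_eq_zero_iff hst]
    have hρ := congrFun (congrArg (fun w => D.ρ w (α t)) h.eq) s
    simp only [map_mul, Module.End.mul_apply, ρ_simple, refl_apply, map_sub, map_smul,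
      form_simpleRoot, gram_self, smul_eq_mul,
      Pi.sub_apply, Pi.smul_apply, simpleRoot_self, simpleRoot_of_ne hst, D.gram_comm t s] at hρ
    linarith
  · intro h
    have hsq := cs.simple_mul_simple_pow s t
    rw [h, pow_two] at hsq
    simpa [Commute, SemiconjBy] using eq_inv_of_mul_eq_one_left hsq

theorem irreducibleSubset_image_simple (hJ : IsIrreducible M J) :
    IrreducibleSubset (cs.simple '' J) := by
  rintro ⟨K, L, ⟨k, hk⟩, ⟨l, hl⟩, hdisj, hunion, hcomm⟩
  have hJK : J ⊆ {s | s ∈ J ∧ cs.simple s ∈ K} := by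
    refine hJ.2 _ (fun s hs => hs.1) ?_ fun s hs t ht htK => ?_
    · obtain ⟨s, hs, rfl⟩ : k ∈ cs.simple '' J := hunion ▸ .inl hk
      exact ⟨s, hs, hk⟩
    · have htL : cs.simple t ∈ L :=
        (hunion.ge ⟨t, ht, rfl⟩).resolve_left fun h => htK ⟨ht, h⟩
      refine (commute_simple_iff cs ?_).1 (hcomm _ hs.2 _ htL)
      rintro rfl
      exact htK hs
  obtain ⟨s, hs, rfl⟩ : l ∈ cs.simple '' J := hunion ▸ .inr hl
  exact Set.disjoint_left.1 hdisj (hJK hs).2 hl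

theorem range_simple_diff_eq_image_outerVertices :
    Set.range cs.simple \ (cs.simple '' J ∪ perpIn (Set.range cs.simple) (cs.simple '' J))
      = cs.simple '' outerVertices M J := by
  classical
  cases nonempty_fintype ι
  have hinj := simple_injective (standardGeomRep cs)
  have hperp : ∀ s ∉ J, (∀ j ∈ cs.simple '' J, Commute (cs.simple s) j) ↔ ∀ j ∈ J, M j s = 2 :=
    fun s hs => Set.forall_mem_image.trans <| forall₂_congr fun j hj =>
      Commute.symm_iff.trans (commute_simple_iff cs (ne_of_mem_of_not_mem hj hs))
  ext w
  constructor
  · rintro ⟨⟨s, rfl⟩, hs⟩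
    have hsJ : s ∉ J := fun h => hs (.inl ⟨s, h, rfl⟩)
    refine ⟨s, ⟨hsJ, ?_⟩, rfl⟩
    by_contra! hcomm
    exact hs (.inr ⟨⟨⟨s, rfl⟩, fun h => hsJ (hinj.mem_set_image.1 h)⟩, (hperp s hsJ).2 hcomm⟩)
  · rintro ⟨s, ⟨hsJ, j, hj, hM⟩, rfl⟩
    refine ⟨⟨s, rfl⟩, ?_⟩
    rintro (h | h)
    · exact hsJ (hinj.mem_set_image.1 h)
    · exact hM ((hperp s hsJ).1 h.2 j hj)

theorem apply_ne_zero_of_adjacentElems {s t : ι}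
    (h : AdjacentElems (cs.simple s) (cs.simple t)) : M s t ≠ 0 := by
  have hst : IsSpherical cs {s, t} := by rwa [IsSpherical, parabolic, Set.image_pair]
  exact hst.twoSpherical (standardGeomRep cs) s (by simp) t (by simp)

theorem isTwistRigidSystem_of_isTwistRigid (h : IsTwistRigid (Set.range cs.simple)) :
    IsTwistRigidSystem cs := by
  intro J hJ hsph p hp q hq
  have hinj := simple_injective (standardGeomRep cs)
  have hconn := h (cs.simple '' J) (Set.image_subset_range _ _) (irreducibleSubset_image_simple hJ)
    hsph
  rw [range_simple_diff_eq_image_outerVertices] at hconn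
  have hpath := hconn _ ⟨p, hp, rfl⟩ _ ⟨q, hq, rfl⟩
  generalize hw : cs.simple q = w at hpath
  induction hpath generalizing q with
  | refl => rw [hinj hw]
  | tail _ hstep ih =>
    subst hw
    obtain ⟨⟨r, hr, rfl⟩, -, hadj⟩ := hstep
    exact (ih r hr rfl).tail ⟨hr, hq, apply_ne_zero_of_adjacentElems hadj⟩

end TwistRigidSystem

end TwistRigid

/-- A finitely generated group admitting a twist-rigid Coxeter generating
set has finite outer automorphism group. -/
theorem finite_out_of_twist_rigid
    {W : Type*} [Group W] (S : Set W)
    (hS : IsCoxeterGeneratingSet S) (hTR : IsTwistRigid S) :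
    Finite (MulAut W ⧸ (MulAut.conj : W →* MulAut W).range) := by
  obtain ⟨hfin, M, cs, hsimple⟩ := hS
  have : Finite S := hfin
  have hrange : Set.range cs.simple = S := by rw [funext hsimple, Subtype.range_coe]
  exact TwistRigid.finite_out (TwistRigid.isTwistRigidSystem_of_isTwistRigid (hrange ▸ hTR))
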